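/- arXiv:math/9812080 — 7 statements merged into one kernel-verified Lean document; each statement's English description precedes it below -/
import Mathlib

section
/- Let n≥1 and let η=(η_1,…,η_n)∈ℕ^n be a composition, and let Φη := (η_2,…,η_n,η_1+1). Then, as identities of polynomials in ℤ[q,t]: d_{Φη}(q,t) = (1 − q^{η_1+1} t^{n−l'_η(1)})·d_η(q,t) and e_{Φη}(q,t) = (1 − q^{η_1+1} t^{n−l'_η(1)})·e_η(q,t), where l'_η(1) = #{k>1 : η_k>η_1}. -/
/- STATEMENT 0: For a composition η ∈ ℕ^n and Φη := (η_2,…,η_n,η_1+1), in ℤ[q,t]: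
   d_{Φη} = (1 − q^{η_1+1} t^{n−l'_η(1)})·d_η  and  e_{Φη} = (1 − q^{η_1+1} t^{n−l'_η(1)})·e_η. -/

open Finset

namespace Stmt0

variable {R : Type*} [CommRing R]

/-- leg colength l'_η(i) -/
def legCo (n : ℕ) (η : Fin n → ℕ) (i : Fin n) : ℕ :=
  (univ.filter fun k => k < i ∧ η i ≤ η k).card +
  (univ.filter fun k => i < k ∧ η i < η k).card

/-- leg length l(s) of the node s = (i,j) -/
def leg (n : ℕ) (η : Fin n → ℕ) (i : Fin n) (j : ℕ) : ℕ :=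
  (univ.filter fun k => i < k ∧ j ≤ η k ∧ η k ≤ η i).card +
  (univ.filter fun k => k < i ∧ j ≤ η k + 1 ∧ η k + 1 ≤ η i).card

/-- d_η(q,t) = ∏_s (1 − q^{a(s)+1} t^{l(s)+1}) -/
def dP (n : ℕ) (η : Fin n → ℕ) (q t : R) : R :=
  ∏ i : Fin n, ∏ j ∈ Finset.Icc 1 (η i), (1 - q ^ (η i - j + 1) * t ^ (leg n η i j + 1))

/-- e_η(q,t) = ∏_s (1 − q^{a'(s)+1} t^{n−l'(s)}) -/
def eP (n : ℕ) (η : Fin n → ℕ) (q t : R) : R :=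
  ∏ i : Fin n, ∏ j ∈ Finset.Icc 1 (η i), (1 - q ^ ((j - 1) + 1) * t ^ (n - legCo n η i))

/-- Φη := (η_2,…,η_n,η_1+1) -/
def Phi (n : ℕ) (η : Fin n → ℕ) : Fin n → ℕ :=
  fun k => if h : (k : ℕ) + 1 < n then η ⟨(k : ℕ) + 1, h⟩ else η ⟨0, k.pos⟩ + 1

end Stmt0

open Stmt0 MvPolynomial

/-!
`Φ` moves the first row below all the others and adds a node to it. In the leg (co)length of another
row, passing from above to below is compensated by the growth of `η₁` to `η₁ + 1`. The moved row
keeps its leg colength, and its node `j + 1` has the arm and leg lengths of the former node `j`.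
So `e` gains the factor of the last node of that row, and `d` the factor of its first node, whose
leg length is the value of `leg` at the fictitious node `(1, 0)` of `η`: every row other than the
first is counted either there or in `l'_η(1)`.
-/

namespace Stmt0

theorem card_filter_univ_castSucc {m : ℕ} (p : Fin (m + 1) → Prop) [DecidablePred p] :
    #{k | p k} = #{k : Fin m | p k.castSucc} + if p (Fin.last m) then 1 else 0 := by
  simp only [card_filter, Fin.sum_univ_castSucc]

theorem prod_Icc_succ_shift {M : Type*} [CommMonoid M] {a b : ℕ} (hab : a ≤ b + 1) (f : ℕ → M) :
    ∏ j ∈ Icc a (b + 1), f j = f a * ∏ j ∈ Icc a b, f (j + 1) := by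
  simp only [← Ico_add_one_right_eq_Icc]
  rw [prod_eq_prod_Ico_succ_bot (by omega), prod_Ico_add' f a (b + 1) 1]

theorem leg_zero_add_legCo {n : ℕ} (η : Fin n → ℕ) (i : Fin n) :
    leg n η i 0 + legCo n η i + 1 = n := by
  have rows_below : #{k | i < k ∧ η k ≤ η i} + #{k | i < k ∧ η i < η k} = n - 1 - i := by
    rw [← Fin.card_Ioi, ← filter_lt_eq_Ioi,
      ← card_filter_add_card_filter_not (s := {k | i < k}) fun k ↦ η k ≤ η i]
    simp only [filter_filter, not_le]
  have rows_above : #{k | k < i ∧ η k < η i} + #{k | k < i ∧ η i ≤ η k} = i := by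
    rw [← Fin.card_Iio i, ← filter_gt_eq_Iio,
      ← card_filter_add_card_filter_not (s := {k | k < i}) fun k ↦ η k < η i]
    simp only [filter_filter, not_lt]
  simp only [leg, legCo, zero_le, true_and, Nat.succ_le_iff]
  omega

section Phi

variable {m : ℕ} (η : Fin (m + 1) → ℕ)

theorem legCo_zero : legCo (m + 1) η 0 = #{k | 0 < k ∧ η 0 < η k} := by
  simp [legCo]

theorem Phi_castSucc (i : Fin m) : Phi (m + 1) η i.castSucc = η i.succ := by
  simp [Phi, Fin.succ]

theorem Phi_last : Phi (m + 1) η (Fin.last m) = η 0 + 1 := by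
  simp [Phi]

theorem leg_Phi_castSucc (i : Fin m) (j : ℕ) :
    leg (m + 1) (Phi (m + 1) η) i.castSucc j = leg (m + 1) η i.succ j := by
  rw [leg, leg, card_filter_univ_castSucc, card_filter_univ_castSucc,
    Fin.card_filter_univ_succ', Fin.card_filter_univ_succ']
  simp only [Phi_castSucc, Phi_last, Fin.castSucc_lt_castSucc_iff, Fin.succ_lt_succ_iff,
    Fin.castSucc_lt_last, Fin.succ_pos, (Fin.le_last _).not_gt, not_lt_zero, true_and, false_and,
    if_false, add_zero, zero_add]
  ring

theorem leg_Phi_last (j : ℕ) :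
    leg (m + 1) (Phi (m + 1) η) (Fin.last m) (j + 1) = leg (m + 1) η 0 j := by
  rw [leg, leg, card_filter_univ_castSucc, card_filter_univ_castSucc,
    Fin.card_filter_univ_succ', Fin.card_filter_univ_succ']
  simp [Phi_castSucc, Phi_last, (Fin.le_last _).not_gt]

theorem legCo_Phi_castSucc (i : Fin m) :
    legCo (m + 1) (Phi (m + 1) η) i.castSucc = legCo (m + 1) η i.succ := by
  rw [legCo, legCo, card_filter_univ_castSucc, card_filter_univ_castSucc,
    Fin.card_filter_univ_succ', Fin.card_filter_univ_succ']
  simp only [Phi_castSucc, Phi_last, Fin.castSucc_lt_castSucc_iff, Fin.succ_lt_succ_iff,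
    Fin.castSucc_lt_last, Fin.succ_pos, (Fin.le_last _).not_gt, not_lt_zero, true_and, false_and,
    if_false, add_zero, zero_add, Order.lt_add_one_iff]
  ring

theorem legCo_Phi_last :
    legCo (m + 1) (Phi (m + 1) η) (Fin.last m) = legCo (m + 1) η 0 := by
  rw [legCo, legCo, card_filter_univ_castSucc, card_filter_univ_castSucc,
    Fin.card_filter_univ_succ', Fin.card_filter_univ_succ']
  simp [Phi_castSucc, Phi_last, (Fin.le_last _).not_gt]

variable {R : Type*} [CommRing R] (q t : R)

theorem dP_Phi :
    dP (m + 1) (Phi (m + 1) η) q t =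
      (1 - q ^ (η 0 + 1) * t ^ (m + 1 - legCo (m + 1) η 0)) * dP (m + 1) η q t := by
  have leg_first_node :
      leg (m + 1) (Phi (m + 1) η) (Fin.last m) 1 + 1 = m + 1 - legCo (m + 1) η 0 := by
    have leg_add_legCo := leg_zero_add_legCo η 0
    rw [← leg_Phi_last, zero_add] at leg_add_legCo
    omega
  have last_row :
      ∏ j ∈ Icc 1 (η 0 + 1),
          (1 - q ^ (η 0 + 1 - j + 1) * t ^ (leg (m + 1) (Phi (m + 1) η) (Fin.last m) j + 1)) =
        (1 - q ^ (η 0 + 1) * t ^ (m + 1 - legCo (m + 1) η 0)) *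
          ∏ j ∈ Icc 1 (η 0), (1 - q ^ (η 0 - j + 1) * t ^ (leg (m + 1) η 0 j + 1)) := by
    rw [prod_Icc_succ_shift (Nat.le_add_left 1 _), leg_first_node]
    simp only [leg_Phi_last, Nat.add_sub_add_right, Nat.add_sub_cancel]
  rw [dP, dP, Fin.prod_univ_castSucc, Fin.prod_univ_succ]
  simp only [Phi_castSucc, Phi_last, leg_Phi_castSucc, last_row]
  ring

theorem eP_Phi :
    eP (m + 1) (Phi (m + 1) η) q t =
      (1 - q ^ (η 0 + 1) * t ^ (m + 1 - legCo (m + 1) η 0)) * eP (m + 1) η q t := by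
  rw [eP, eP, Fin.prod_univ_castSucc, Fin.prod_univ_succ]
  simp only [Phi_castSucc, Phi_last, legCo_Phi_castSucc, legCo_Phi_last,
    prod_Icc_succ_top (Nat.le_add_left 1 _), Nat.add_sub_cancel]
  ring

end Phi

end Stmt0

theorem stmt_0_general {R : Type*} [CommRing R] (n : ℕ) (hn : 1 ≤ n) (η : Fin n → ℕ) (q t : R) :
    dP n (Phi n η) q t
      = (1 - q ^ (η ⟨0, hn⟩ + 1)
            * t ^ (n - (univ.filter fun k : Fin n => ⟨0, hn⟩ < k ∧ η ⟨0, hn⟩ < η k).card))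
        * dP n η q t ∧
    eP n (Phi n η) q t
      = (1 - q ^ (η ⟨0, hn⟩ + 1)
            * t ^ (n - (univ.filter fun k : Fin n => ⟨0, hn⟩ < k ∧ η ⟨0, hn⟩ < η k).card))
        * eP n η q t := by
  obtain ⟨m, rfl⟩ := Nat.exists_eq_add_of_le' hn
  rw [Fin.mk_zero, ← legCo_zero]
  exact ⟨dP_Phi η q t, eP_Phi η q t⟩

theorem stmt_0 (n : ℕ) (hn : 1 ≤ n) (η : Fin n → ℕ) :
    dP n (Phi n η) (X 0 : MvPolynomial (Fin 2) ℤ) (X 1)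
      = (1 - (X 0 : MvPolynomial (Fin 2) ℤ) ^ (η ⟨0, hn⟩ + 1)
            * (X 1) ^ (n - (univ.filter fun k : Fin n => ⟨0, hn⟩ < k ∧ η ⟨0, hn⟩ < η k).card))
        * dP n η (X 0) (X 1) ∧
    eP n (Phi n η) (X 0 : MvPolynomial (Fin 2) ℤ) (X 1)
      = (1 - (X 0 : MvPolynomial (Fin 2) ℤ) ^ (η ⟨0, hn⟩ + 1)
            * (X 1) ^ (n - (univ.filter fun k : Fin n => ⟨0, hn⟩ < k ∧ η ⟨0, hn⟩ < η k).card))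
        * eP n η (X 0) (X 1) :=
  stmt_0_general n hn η (X 0) (X 1)
end

section
/- Let n≥1 and let η=(η_1,…,η_n)∈ℕ^n be a composition, and let Φη := (η_2,…,η_n,η_1+1). Then, as identities of polynomials in ℤ[q,t]: d'_{Φη}(q,t) = (1 − q^{η_1+1} t^{n−1−l'_η(1)})·d'_η(q,t) and e'_{Φη}(q,t) = (1 − q^{η_1+1} t^{n−1−l'_η(1)})·e'_η(q,t), where l'_η(1) = #{k>1 : η_k>η_1}. -/
/- STATEMENT 1: For a composition η ∈ ℕ^n and Φη := (η_2,…,η_n,η_1+1), in ℤ[q,t]: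
   d'_{Φη} = (1 − q^{η_1+1} t^{n−1−l'_η(1)})·d'_η  and  e'_{Φη} = (1 − q^{η_1+1} t^{n−1−l'_η(1)})·e'_η. -/

open Finset

namespace Stmt1

variable {R : Type*} [CommRing R]

/-- leg colength l'_η(i) -/
def legCo (n : ℕ) (η : Fin n → ℕ) (i : Fin n) : ℕ :=
  (univ.filter fun k => k < i ∧ η i ≤ η k).card +
  (univ.filter fun k => i < k ∧ η i < η k).card

/-- leg length l(s) of the node s = (i,j) -/
def leg (n : ℕ) (η : Fin n → ℕ) (i : Fin n) (j : ℕ) : ℕ :=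
  (univ.filter fun k => i < k ∧ j ≤ η k ∧ η k ≤ η i).card +
  (univ.filter fun k => k < i ∧ j ≤ η k + 1 ∧ η k + 1 ≤ η i).card

/-- d'_η(q,t) = ∏_s (1 − q^{a(s)+1} t^{l(s)}) -/
def dP' (n : ℕ) (η : Fin n → ℕ) (q t : R) : R :=
  ∏ i : Fin n, ∏ j ∈ Finset.Icc 1 (η i), (1 - q ^ (η i - j + 1) * t ^ (leg n η i j))

/-- e'_η(q,t) = ∏_s (1 − q^{a'(s)+1} t^{n−1−l'(s)}) -/
def eP' (n : ℕ) (η : Fin n → ℕ) (q t : R) : R :=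
  ∏ i : Fin n, ∏ j ∈ Finset.Icc 1 (η i), (1 - q ^ ((j - 1) + 1) * t ^ (n - 1 - legCo n η i))

/-- Φη := (η_2,…,η_n,η_1+1) -/
def Phi (n : ℕ) (η : Fin n → ℕ) : Fin n → ℕ :=
  fun k => if h : (k : ℕ) + 1 < n then η ⟨(k : ℕ) + 1, h⟩ else η ⟨0, k.pos⟩ + 1

end Stmt1

open Stmt1 MvPolynomial

/-!
`Φ` rotates the rows of the diagram: row `i + 1` of `η` becomes row `i` of `Φη`, and row `1`, made
one node longer, becomes row `n`. The leg statistics compare rows above `i` with the shifted lengths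
`η_k + 1` and rows below `i` with the plain lengths `η_k`, so moving the lengthened first row to the
bottom leaves them unchanged, with columns shifted by one in the moved row. Both products therefore
gain a single factor. For `e'` it belongs to the last node of the new bottom row; for `d'` it
belongs to the first node of that row, whose leg length is that of the fictitious node `(1, 0)` of
`η`, namely `n - 1 - l'_η(1)`.
-/

namespace Stmt1

/-- The number of rows `k` above row `i` with `P k` plus the number of rows `k` below row `i` with
`Q k`. Both the leg length and the leg colength of a node are of this form. -/
def rowCount {n : ℕ} (i : Fin n) (P Q : Fin n → Prop) [DecidablePred P] [DecidablePred Q] : ℕ :=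
  #{k | k < i ∧ P k} + #{k | i < k ∧ Q k}

section rowCount

variable {n : ℕ} {P Q : Fin n → Prop} [DecidablePred P] [DecidablePred Q]

lemma rowCount_add_rowCount_not (i : Fin n) :
    rowCount i P Q + rowCount i (fun k => ¬ P k) (fun k => ¬ Q k) = n - 1 := by
  have above : #{k | k < i ∧ P k} + #{k | k < i ∧ ¬ P k} = (i : ℕ) := by
    simp only [← filter_filter, card_filter_add_card_filter_not, filter_gt_eq_Iio, Fin.card_Iio]
  have below : #{k | i < k ∧ Q k} + #{k | i < k ∧ ¬ Q k} = n - 1 - i := by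
    simp only [← filter_filter, card_filter_add_card_filter_not, filter_lt_eq_Ioi, Fin.card_Ioi]
  simp only [rowCount]
  omega

end rowCount

section rotation

variable {m : ℕ} {P P' Q Q' : Fin (m + 1) → Prop}
  [DecidablePred P] [DecidablePred P'] [DecidablePred Q] [DecidablePred Q']

lemma rowCount_castSucc_eq_rowCount_succ (i : Fin m)
    (hP : ∀ k : Fin m, P' k.castSucc ↔ P k.succ)
    (hQ : ∀ k : Fin m, Q' k.castSucc ↔ Q k.succ) (hQP : Q' (Fin.last m) ↔ P 0) :
    rowCount i.castSucc P' Q' = rowCount i.succ P Q := by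
  have above : #{k | k < i.castSucc ∧ P' k} = #{k : Fin m | k < i ∧ P k.succ} := by
    simp only [card_filter, Fin.sum_univ_castSucc, Fin.castSucc_lt_castSucc_iff, hP,
      (Fin.le_last _).not_gt, false_and, if_false, add_zero]
  have below : #{k | i.castSucc < k ∧ Q' k}
      = #{k : Fin m | i < k ∧ Q k.succ} + if P 0 then 1 else 0 := by
    simp only [card_filter, Fin.sum_univ_castSucc, Fin.castSucc_lt_castSucc_iff, hQ, hQP,
      Fin.castSucc_lt_last, true_and]
  simp only [rowCount, above, below, card_filter, Fin.sum_univ_succ, Fin.succ_lt_succ_iff,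
    Fin.succ_pos, Fin.not_lt_zero, true_and, false_and, if_false, zero_add]
  ring

lemma rowCount_last_eq_rowCount_zero (h : ∀ k : Fin m, P' k.castSucc ↔ Q k.succ) :
    rowCount (Fin.last m) P' Q' = rowCount 0 P Q := by
  have above : #{k | k < Fin.last m ∧ P' k} = #{k : Fin m | Q k.succ} := by
    simp only [card_filter, Fin.sum_univ_castSucc, Fin.castSucc_lt_last, h, true_and, lt_irrefl,
      false_and, if_false, add_zero]
  have below : #{k | 0 < k ∧ Q k} = #{k : Fin m | Q k.succ} := by
    simp only [card_filter, Fin.sum_univ_succ, Fin.succ_pos, true_and, lt_irrefl, false_and,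
      if_false, zero_add]
  simp only [rowCount, above, below, (Fin.le_last _).not_gt, Fin.not_lt_zero, false_and,
    filter_false, card_empty, zero_add, add_zero]

end rotation

section leg

variable {n : ℕ} (η : Fin n → ℕ) (i : Fin n)

lemma legCo_eq_rowCount : legCo n η i = rowCount i (fun k => η i ≤ η k) (fun k => η i < η k) := rfl

lemma leg_eq_rowCount (j : ℕ) :
    leg n η i j = rowCount i (fun k => j ≤ η k + 1 ∧ η k + 1 ≤ η i)
      (fun k => j ≤ η k ∧ η k ≤ η i) :=
  add_comm _ _

lemma leg_zero_right : leg n η i 0 = n - 1 - legCo n η i := by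
  rw [← rowCount_add_rowCount_not i (P := fun k => η i ≤ η k) (Q := fun k => η i < η k),
    ← legCo_eq_rowCount, Nat.add_sub_cancel_left, leg_eq_rowCount]
  simp only [Nat.zero_le, true_and, Nat.succ_le_iff, not_le, not_lt]

end leg

section Phi

variable {m : ℕ} (η : Fin (m + 1) → ℕ)

lemma legCo_zero_eq_card : legCo (m + 1) η 0 = #{k | 0 < k ∧ η 0 < η k} := by
  simp only [legCo, Fin.not_lt_zero, false_and, filter_false, card_empty, zero_add]

lemma Phi_castSucc (k : Fin m) : Phi (m + 1) η k.castSucc = η k.succ :=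
  dif_pos (Nat.succ_lt_succ k.isLt)

lemma Phi_last : Phi (m + 1) η (Fin.last m) = η 0 + 1 :=
  dif_neg (lt_irrefl (m + 1))

lemma legCo_Phi_castSucc (i : Fin m) :
    legCo (m + 1) (Phi (m + 1) η) i.castSucc = legCo (m + 1) η i.succ :=
  rowCount_castSucc_eq_rowCount_succ i (by simp only [Phi_castSucc, implies_true])
    (by simp only [Phi_castSucc, implies_true])
    (by simp only [Phi_castSucc, Phi_last, Nat.lt_succ_iff])

lemma legCo_Phi_last : legCo (m + 1) (Phi (m + 1) η) (Fin.last m) = legCo (m + 1) η 0 :=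
  rowCount_last_eq_rowCount_zero
    (by simp only [Phi_castSucc, Phi_last, Nat.succ_le_iff, implies_true])

lemma leg_Phi_castSucc (i : Fin m) (j : ℕ) :
    leg (m + 1) (Phi (m + 1) η) i.castSucc j = leg (m + 1) η i.succ j := by
  simp only [leg_eq_rowCount]
  apply rowCount_castSucc_eq_rowCount_succ <;> simp only [Phi_castSucc, Phi_last, implies_true]

lemma leg_Phi_last (j : ℕ) :
    leg (m + 1) (Phi (m + 1) η) (Fin.last m) (j + 1) = leg (m + 1) η 0 j := by
  simp only [leg_eq_rowCount]
  apply rowCount_last_eq_rowCount_zero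
  simp only [Phi_castSucc, Phi_last, Nat.add_le_add_iff_right, implies_true]

end Phi

lemma prod_Icc_one_add_one {M : Type*} [CommMonoid M] (f : ℕ → M) (N : ℕ) :
    ∏ j ∈ Icc 1 (N + 1), f j = f 1 * ∏ j ∈ Icc 1 N, f (j + 1) := by
  rw [← mul_prod_Ioc_eq_prod_Icc (Nat.le_add_left 1 N), ← Icc_add_one_left_eq_Ioc,
    ← map_add_right_Icc 1 N 1, prod_map]
  simp only [addRightEmbedding_apply]

section products

variable {R : Type*} [CommRing R] {m : ℕ} (η : Fin (m + 1) → ℕ) (q t : R)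

lemma dP'_Phi :
    dP' (m + 1) (Phi (m + 1) η) q t
      = (1 - q ^ (η 0 + 1) * t ^ (m - legCo (m + 1) η 0)) * dP' (m + 1) η q t := by
  have leg_first : leg (m + 1) (Phi (m + 1) η) (Fin.last m) 1 = m - legCo (m + 1) η 0 :=
    (leg_Phi_last η 0).trans (leg_zero_right η 0)
  rw [dP', dP', Fin.prod_univ_castSucc, Fin.prod_univ_succ]
  simp only [Phi_castSucc, Phi_last, leg_Phi_castSucc, prod_Icc_one_add_one, leg_first,
    leg_Phi_last, Nat.add_sub_add_right, Nat.add_sub_cancel]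
  ring

lemma eP'_Phi :
    eP' (m + 1) (Phi (m + 1) η) q t
      = (1 - q ^ (η 0 + 1) * t ^ (m - legCo (m + 1) η 0)) * eP' (m + 1) η q t := by
  rw [eP', eP', Fin.prod_univ_castSucc, Fin.prod_univ_succ]
  simp only [Phi_castSucc, Phi_last, legCo_Phi_castSucc, legCo_Phi_last,
    prod_Icc_succ_top (Nat.le_add_left 1 (η 0)), Nat.add_sub_cancel]
  ring

end products

end Stmt1

theorem stmt_1_general {R : Type*} [CommRing R] (n : ℕ) (hn : 1 ≤ n) (η : Fin n → ℕ) (q t : R) :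
    dP' n (Phi n η) q t
      = (1 - q ^ (η ⟨0, hn⟩ + 1)
            * t ^ (n - 1 - (univ.filter fun k : Fin n => ⟨0, hn⟩ < k ∧ η ⟨0, hn⟩ < η k).card))
        * dP' n η q t ∧
    eP' n (Phi n η) q t
      = (1 - q ^ (η ⟨0, hn⟩ + 1)
            * t ^ (n - 1 - (univ.filter fun k : Fin n => ⟨0, hn⟩ < k ∧ η ⟨0, hn⟩ < η k).card))
        * eP' n η q t := by
  obtain ⟨m, rfl⟩ := Nat.exists_eq_add_of_le' hn
  have first_row : #{k : Fin (m + 1) | ⟨0, hn⟩ < k ∧ η ⟨0, hn⟩ < η k} = legCo (m + 1) η 0 :=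
    (legCo_zero_eq_card η).symm
  rw [first_row]
  exact ⟨dP'_Phi η q t, eP'_Phi η q t⟩

theorem stmt_1 (n : ℕ) (hn : 1 ≤ n) (η : Fin n → ℕ) :
    dP' n (Phi n η) (X 0 : MvPolynomial (Fin 2) ℤ) (X 1)
      = (1 - (X 0 : MvPolynomial (Fin 2) ℤ) ^ (η ⟨0, hn⟩ + 1)
            * (X 1) ^ (n - 1 - (univ.filter fun k : Fin n => ⟨0, hn⟩ < k ∧ η ⟨0, hn⟩ < η k).card))
        * dP' n η (X 0) (X 1) ∧
    eP' n (Phi n η) (X 0 : MvPolynomial (Fin 2) ℤ) (X 1)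
      = (1 - (X 0 : MvPolynomial (Fin 2) ℤ) ^ (η ⟨0, hn⟩ + 1)
            * (X 1) ^ (n - 1 - (univ.filter fun k : Fin n => ⟨0, hn⟩ < k ∧ η ⟨0, hn⟩ < η k).card))
        * eP' n η (X 0) (X 1) :=
  stmt_1_general n hn η (X 0) (X 1)
end

section
/- Let n≥1 and let η=(η_1,…,η_n)∈ℕ^n be a composition, and let Φη := (η_2,…,η_n,η_1+1). Then l(Φη) = l(η) + #{k : 2≤k≤n, η_k≤η_1} and l'(Φη) = l'(η) + (n−1) − #{k : 2≤k≤n, η_k≤η_1}. -/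
/- STATEMENT 2: For η ∈ ℕ^n and Φη := (η_2,…,η_n,η_1+1):
   l(Φη) = l(η) + #{k : 2≤k≤n, η_k≤η_1}  and
   l'(Φη) = l'(η) + (n−1) − #{k : 2≤k≤n, η_k≤η_1}. -/

open Finset

namespace Stmt2

/-- leg colength l'_η(i) -/
def legCo (n : ℕ) (η : Fin n → ℕ) (i : Fin n) : ℕ :=
  (univ.filter fun k => k < i ∧ η i ≤ η k).card +
  (univ.filter fun k => i < k ∧ η i < η k).card

/-- leg length l(s) of the node s = (i,j) -/
def leg (n : ℕ) (η : Fin n → ℕ) (i : Fin n) (j : ℕ) : ℕ :=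
  (univ.filter fun k => i < k ∧ j ≤ η k ∧ η k ≤ η i).card +
  (univ.filter fun k => k < i ∧ j ≤ η k + 1 ∧ η k + 1 ≤ η i).card

/-- l(η) = Σ_s l(s) -/
def lTot (n : ℕ) (η : Fin n → ℕ) : ℕ :=
  ∑ i : Fin n, ∑ j ∈ Finset.Icc 1 (η i), leg n η i j

/-- l'(η) = Σ_s l'(s) -/
def lcoTot (n : ℕ) (η : Fin n → ℕ) : ℕ :=
  ∑ i : Fin n, ∑ j ∈ Finset.Icc 1 (η i), legCo n η i

/-- Φη := (η_2,…,η_n,η_1+1) -/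
def Phi (n : ℕ) (η : Fin n → ℕ) : Fin n → ℕ :=
  fun k => if h : (k : ℕ) + 1 < n then η ⟨(k : ℕ) + 1, h⟩ else η ⟨0, k.pos⟩ + 1

end Stmt2

open Stmt2

/-! Summed over all nodes, each pair of rows `i < k` contributes `min (η_i + 1) η_k` to `l(η)` and
`min η_i η_k` to `l'(η)`. Passing to `Φη` alters only the pairs involving the first row `a = η_1`,
which becomes the last row `a + 1`. Against a row `b`, the contribution to `l` changes from
`min (a + 1) b` to `min (b + 1) (a + 1)`, a gain of 1 exactly when `b ≤ a`, and the contribution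
to `l'` changes from `min a b` to `min b (a + 1)`, a gain of 1 exactly when `a < b`. -/

namespace Stmt2

section PairSum

variable {α M : Type*} [AddCommMonoid M] {n : ℕ}

/-- The sum of a weight `w` over all pairs of entries of a tuple, each pair taken in the order in
which it occurs. It expresses both `l` and `l'`, with different weights. -/
def pairSum (w : α → α → M) (x : Fin n → α) : M :=
  ∑ i, ∑ k ∈ Ioi i, w (x i) (x k)

lemma pairSum_cons (w : α → α → M) (a : α) (x : Fin n → α) :
    pairSum w (Fin.cons a x : Fin (n + 1) → α) = ∑ k, w a (x k) + pairSum w x := by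
  simp only [pairSum, Fin.sum_univ_succ, Fin.sum_Ioi_zero, Fin.sum_Ioi_succ, Fin.cons_zero,
    Fin.cons_succ]

lemma pairSum_eq_sum_Iio (w : α → α → M) (x : Fin n → α) :
    pairSum w x = ∑ k, ∑ i ∈ Iio k, w (x i) (x k) :=
  sum_comm' (by simp)

lemma pairSum_snoc (w : α → α → M) (x : Fin n → α) (b : α) :
    pairSum w (Fin.snoc x b : Fin (n + 1) → α) = pairSum w x + ∑ k, w (x k) b := by
  simp only [pairSum_eq_sum_Iio, Fin.sum_univ_castSucc, Fin.sum_Iio_castSucc, Fin.Iio_last_eq_map,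
    sum_map, Fin.coe_castSuccEmb, Fin.snoc_castSucc, Fin.snoc_last]

lemma sum_sum_Ioi_add_sum_Iio (f g : α → α → M) (x : Fin n → α) :
    ∑ i, (∑ k ∈ Ioi i, f (x i) (x k) + ∑ k ∈ Iio i, g (x i) (x k)) =
      pairSum (fun a b => f a b + g b a) x := by
  rw [sum_add_distrib, ← pairSum_eq_sum_Iio (fun a b => g b a)]
  simp only [pairSum, sum_add_distrib]

end PairSum

lemma card_filter_Icc_one_le_and_le (a b : ℕ) :
    #{j ∈ Icc 1 a | j ≤ b ∧ b ≤ a} = if b ≤ a then b else 0 := by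
  split_ifs with hba
  · have filter_eq : {j ∈ Icc 1 a | j ≤ b ∧ b ≤ a} = Icc 1 b := by
      ext j
      simp only [mem_filter, mem_Icc]
      omega
    rw [filter_eq, Nat.card_Icc, Nat.add_sub_cancel]
  · simp [hba]

lemma sum_card_filter_le_and_le {ι : Type*} (s : Finset ι) (x : ι → ℕ) (a : ℕ) :
    ∑ j ∈ Icc 1 a, #{k ∈ s | j ≤ x k ∧ x k ≤ a} = ∑ k ∈ s, if x k ≤ a then x k else 0 := by
  simp only [← card_filter_Icc_one_le_and_le]
  exact sum_card_bipartiteAbove_eq_sum_card_bipartiteBelow _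

lemma leg_eq_card_Ioi_add_card_Iio (n : ℕ) (η : Fin n → ℕ) (i : Fin n) (j : ℕ) :
    leg n η i j = #{k ∈ Ioi i | j ≤ η k ∧ η k ≤ η i} +
      #{k ∈ Iio i | j ≤ η k + 1 ∧ η k + 1 ≤ η i} := by
  simp only [leg, ← filter_filter, filter_lt_eq_Ioi, filter_gt_eq_Iio]

lemma legCo_eq_card_Ioi_add_card_Iio (n : ℕ) (η : Fin n → ℕ) (i : Fin n) :
    legCo n η i = #{k ∈ Ioi i | η i < η k} + #{k ∈ Iio i | η i ≤ η k} := by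
  simp only [legCo, ← filter_filter, filter_lt_eq_Ioi, filter_gt_eq_Iio, add_comm]

theorem lTot_eq_pairSum (n : ℕ) (η : Fin n → ℕ) :
    lTot n η = pairSum (fun a b => min (a + 1) b) η := by
  have weight (a b : ℕ) :
      (if b ≤ a then b else 0) + (if a + 1 ≤ b then a + 1 else 0) = min (a + 1) b := by
    split_ifs <;> omega
  simp only [lTot, leg_eq_card_Ioi_add_card_Iio, sum_add_distrib (s := Icc _ _),
    sum_card_filter_le_and_le, ← weight]
  exact sum_sum_Ioi_add_sum_Iio (fun a b => if b ≤ a then b else 0)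
    (fun a b => if b + 1 ≤ a then b + 1 else 0) η

theorem lcoTot_eq_pairSum (n : ℕ) (η : Fin n → ℕ) : lcoTot n η = pairSum min η := by
  have weight : (min : ℕ → ℕ → ℕ) =
      fun a b => (if a < b then a else 0) + (if b ≤ a then b else 0) := by
    ext a b
    split_ifs <;> omega
  simp only [lcoTot, legCo_eq_card_Ioi_add_card_Iio, sum_const, Nat.card_Icc,
    Nat.add_sub_cancel, smul_eq_mul, card_filter, mul_add, mul_sum, mul_ite, mul_one, mul_zero,
    weight]
  exact sum_sum_Ioi_add_sum_Iio (fun a b => if a < b then a else 0)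
    (fun a b => if a ≤ b then a else 0) η

section Phi

variable {m : ℕ} (a : ℕ) (θ : Fin m → ℕ)

lemma Phi_cons : Phi (m + 1) (Fin.cons a θ) = Fin.snoc θ (a + 1) := by
  ext k
  cases k using Fin.lastCases with
  | last => simp [Phi]
  | cast k => simp [Phi, ← Fin.succ_mk]

theorem lTot_Phi_cons :
    lTot (m + 1) (Phi (m + 1) (Fin.cons a θ)) =
      lTot (m + 1) (Fin.cons a θ) + #{k | θ k ≤ a} := by
  have gain (b : ℕ) : min (b + 1) (a + 1) = min (a + 1) b + if b ≤ a then 1 else 0 := by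
    split_ifs <;> omega
  simp only [lTot_eq_pairSum, Phi_cons, pairSum_snoc, pairSum_cons, gain, sum_add_distrib,
    card_filter]
  ring

theorem lcoTot_Phi_cons :
    lcoTot (m + 1) (Phi (m + 1) (Fin.cons a θ)) =
      lcoTot (m + 1) (Fin.cons a θ) + #{k | a < θ k} := by
  have gain (b : ℕ) : min b (a + 1) = min a b + if a < b then 1 else 0 := by
    split_ifs <;> omega
  simp only [lcoTot_eq_pairSum, Phi_cons, pairSum_snoc, pairSum_cons, gain, sum_add_distrib,
    card_filter]
  ring

end Phi

end Stmt2

theorem stmt_2 (n : ℕ) (hn : 1 ≤ n) (η : Fin n → ℕ) :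
    lTot n (Phi n η) = lTot n η
        + (univ.filter fun k : Fin n => ⟨0, hn⟩ < k ∧ η k ≤ η ⟨0, hn⟩).card ∧
    lcoTot n (Phi n η) = lcoTot n η
        + (n - 1 - (univ.filter fun k : Fin n => ⟨0, hn⟩ < k ∧ η k ≤ η ⟨0, hn⟩).card) := by
  obtain ⟨m, rfl⟩ := Nat.exists_eq_add_of_le' hn
  cases η using Fin.consCases with | _ a θ
  have card_le : #{k | ⟨0, hn⟩ < k ∧ (Fin.cons a θ : Fin (m + 1) → ℕ) k ≤
      (Fin.cons a θ : Fin (m + 1) → ℕ) ⟨0, hn⟩} = #{k | θ k ≤ a} := by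
    simp [Fin.card_filter_univ_succ]
  have card_le_add_card_lt : #{k | θ k ≤ a} + #{k | a < θ k} = m := by
    simpa only [not_le, card_univ, Fintype.card_fin] using
      card_filter_add_card_filter_not (s := univ) (fun k => θ k ≤ a)
  rw [card_le]
  refine ⟨lTot_Phi_cons a θ, ?_⟩
  rw [lcoTot_Phi_cons]
  omega
end

section
/- Let n≥1, 1≤i≤n−1, and let η∈ℕ^n be a composition with η_i>η_{i+1}. Let s_iη be the composition obtained from η by exchanging entries i and i+1, and set δ := q^{η_i−η_{i+1}}·t^{l'_η(i+1)−l'_η(i)} ∈ ℚ(q,t). Then d_{s_iη}(q,t)·(1−δ) = d_η(q,t)·(1−t·δ) and d'_{s_iη}(q,t)·(1−t^{−1}·δ) = d'_η(q,t)·(1−δ), as identities in the field ℚ(q,t). -/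
/- STATEMENT 3: For η ∈ ℕ^n with η_i > η_{i+1}, s_iη the swap of entries i, i+1, and
   δ := q^{η_i−η_{i+1}}·t^{l'_η(i+1)−l'_η(i)} ∈ ℚ(q,t):
   d_{s_iη}·(1−δ) = d_η·(1−t·δ)  and  d'_{s_iη}·(1−t⁻¹·δ) = d'_η·(1−δ). -/

open Finset

namespace Stmt3

variable {R : Type*} [CommRing R]

/-- leg colength l'_η(i) -/
def legCo (n : ℕ) (η : Fin n → ℕ) (i : Fin n) : ℕ :=
  (univ.filter fun k => k < i ∧ η i ≤ η k).card +
  (univ.filter fun k => i < k ∧ η i < η k).card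

/-- leg length l(s) of the node s = (i,j) -/
def leg (n : ℕ) (η : Fin n → ℕ) (i : Fin n) (j : ℕ) : ℕ :=
  (univ.filter fun k => i < k ∧ j ≤ η k ∧ η k ≤ η i).card +
  (univ.filter fun k => k < i ∧ j ≤ η k + 1 ∧ η k + 1 ≤ η i).card

/-- d_η(q,t) = ∏_s (1 − q^{a(s)+1} t^{l(s)+1}) -/
def dP (n : ℕ) (η : Fin n → ℕ) (q t : R) : R :=
  ∏ i : Fin n, ∏ j ∈ Finset.Icc 1 (η i), (1 - q ^ (η i - j + 1) * t ^ (leg n η i j + 1))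

/-- d'_η(q,t) = ∏_s (1 − q^{a(s)+1} t^{l(s)}) -/
def dP' (n : ℕ) (η : Fin n → ℕ) (q t : R) : R :=
  ∏ i : Fin n, ∏ j ∈ Finset.Icc 1 (η i), (1 - q ^ (η i - j + 1) * t ^ (leg n η i j))

/-- The field K = ℚ(q,t). -/
abbrev K : Type := FractionRing (MvPolynomial (Fin 2) ℚ)

noncomputable def q : K := algebraMap (MvPolynomial (Fin 2) ℚ) K (MvPolynomial.X 0)
noncomputable def t : K := algebraMap (MvPolynomial (Fin 2) ℚ) K (MvPolynomial.X 1)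

end Stmt3

open Stmt3

/-! Exchanging rows `i` and `i + 1`, where `η_i > η_{i+1}`, carries the nodes of `η` bijectively to
those of `s_i η` and preserves arm lengths. The leg length counts rows one by one, and whether a row
counts depends on its position only through which of the two rows comes first; hence only the two
exchanged rows can see each other differently. They do so at the single node `(i, η_{i+1} + 1)`,
whose leg length goes up by one. Its arm length is `η_i - η_{i+1} - 1`, and its leg length before
the exchange is `l'_η(i+1) - l'_η(i) - 1`, so `d` loses a factor `1 - δ` and gains `1 - t δ`, and
`d'` loses `1 - t⁻¹ δ` and gains `1 - δ`. -/

namespace Stmt3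

lemma swap_apply_lt_swap_apply_iff {α : Type*} [LinearOrder α] {x y a b : α} (hxy : x ⋖ y)
    (hab : s(a, b) ≠ s(x, y)) : Equiv.swap x y a < Equiv.swap x y b ↔ a < b := by
  simp only [Equiv.swap_apply_def]
  grind [hxy.lt_iff_le_left, hxy.lt_iff_le_right]

variable {n : ℕ} {η : Fin n → ℕ} {x y : Fin n}

/-- The rows `k` counted by the leg length of the node `(i, j)` of `η`. -/
def legRows (η : Fin n → ℕ) (i : Fin n) (j : ℕ) : Finset (Fin n) :=
  {k | (i < k ∧ j ≤ η k ∧ η k ≤ η i) ∨ (k < i ∧ j ≤ η k + 1 ∧ η k + 1 ≤ η i)}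

lemma card_legRows (η : Fin n → ℕ) (i : Fin n) (j : ℕ) : #(legRows η i j) = leg n η i j := by
  rw [legRows, filter_or, card_union_of_disjoint, leg]
  exact disjoint_filter.2 fun k _ h h' => lt_asymm h.1 h'.1

/-- The rows `k` counted by the leg colength of row `i` of `η`. -/
def legCoRows (η : Fin n → ℕ) (i : Fin n) : Finset (Fin n) :=
  {k | (k < i ∧ η i ≤ η k) ∨ (i < k ∧ η i < η k)}

lemma card_legCoRows (η : Fin n → ℕ) (i : Fin n) : #(legCoRows η i) = legCo n η i := by
  rw [legCoRows, filter_or, card_union_of_disjoint, legCo]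
  exact disjoint_filter.2 fun k _ h h' => lt_asymm h.1 h'.1

lemma legCoRows_eq_insert_union (hxy : x ⋖ y) (hlt : η y < η x) :
    legCoRows η y = insert x (legCoRows η x ∪ legRows η x (η y + 1)) := by
  ext k
  simp only [legCoRows, legRows, mem_filter_univ, mem_insert, mem_union]
  grind [hxy.lt_iff_le_left, hxy.lt_iff_le_right]

lemma legCo_eq_legCo_add_leg (hxy : x ⋖ y) (hlt : η y < η x) :
    legCo n η y = legCo n η x + (leg n η x (η y + 1) + 1) := by
  have hx : x ∉ legCoRows η x ∪ legRows η x (η y + 1) := by simp [legCoRows, legRows]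
  have hdisj : Disjoint (legCoRows η x) (legRows η x (η y + 1)) := by
    simp only [disjoint_left, legCoRows, legRows, mem_filter_univ]
    grind
  rw [← card_legCoRows, legCoRows_eq_insert_union hxy hlt, card_insert_of_notMem hx,
    card_union_of_disjoint hdisj, card_legCoRows, card_legRows, add_assoc]

lemma swap_mem_legRows_iff (hxy : x ⋖ y) (hlt : η y < η x) {i k : Fin n} {j : ℕ} :
    Equiv.swap x y k ∈ legRows (η ∘ Equiv.swap x y) (Equiv.swap x y i) j ↔
      k ∈ legRows η i j ∨ (i = x ∧ k = y ∧ j = η y + 1) := by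
  have hxy_lt := hxy.lt
  by_cases hik : s(i, k) = s(x, y)
  · obtain ⟨rfl, rfl⟩ | ⟨rfl, rfl⟩ := Sym2.eq_iff.1 hik <;>
      simp only [legRows, mem_filter_univ, Function.comp_apply, Equiv.swap_apply_left,
        Equiv.swap_apply_right, hxy_lt, hxy_lt.not_gt, hxy_lt.ne, hxy_lt.ne'] <;>
      grind
  · have hki : s(k, i) ≠ s(x, y) := by rwa [Sym2.eq_swap]
    have hnot : ¬(i = x ∧ k = y ∧ j = η y + 1) := fun h => hik (by rw [h.1, h.2.1])
    simp only [legRows, mem_filter_univ, Function.comp_apply, Equiv.swap_apply_self,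
      swap_apply_lt_swap_apply_iff hxy hik, swap_apply_lt_swap_apply_iff hxy hki, hnot, or_false]

lemma leg_comp_swap_of_ne (hxy : x ⋖ y) (hlt : η y < η x) {i : Fin n} {j : ℕ}
    (hij : ¬(i = x ∧ j = η y + 1)) :
    leg n (η ∘ Equiv.swap x y) (Equiv.swap x y i) j = leg n η i j := by
  rw [← card_legRows, ← card_legRows]
  refine (card_equiv (Equiv.swap x y) fun k => ?_).symm
  rw [swap_mem_legRows_iff hxy hlt]
  tauto

lemma leg_comp_swap_self (hxy : x ⋖ y) (hlt : η y < η x) :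
    leg n (η ∘ Equiv.swap x y) (Equiv.swap x y x) (η y + 1) = leg n η x (η y + 1) + 1 := by
  have hy : y ∉ legRows η x (η y + 1) := by simp [legRows, hxy.lt.not_gt]
  rw [← card_legRows, ← card_legRows, ← card_insert_of_notMem hy]
  refine (card_equiv (Equiv.swap x y) fun k => ?_).symm
  rw [swap_mem_legRows_iff hxy hlt, mem_insert]
  tauto

/-- The diagram of `η`: the node `⟨i, j⟩` is the box in row `i` and column `j`, columns being
numbered from `1`. -/
def diagram (η : Fin n → ℕ) : Finset (Σ _ : Fin n, ℕ) :=
  univ.sigma fun i => Icc 1 (η i)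

/-- The product over the nodes `s` of `η` of `f a(s) l(s)`. -/
def nodeProd {M : Type*} [CommMonoid M] (η : Fin n → ℕ) (f : ℕ → ℕ → M) : M :=
  ∏ s ∈ diagram η, f (η s.1 - s.2) (leg n η s.1 s.2)

lemma dP_eq_nodeProd {R : Type*} [CommRing R] (η : Fin n → ℕ) (q t : R) :
    dP n η q t = nodeProd η fun a l => 1 - q ^ (a + 1) * t ^ (l + 1) := by
  simp only [dP, nodeProd, diagram, prod_sigma]

lemma dP'_eq_nodeProd {R : Type*} [CommRing R] (η : Fin n → ℕ) (q t : R) :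
    dP' n η q t = nodeProd η fun a l => 1 - q ^ (a + 1) * t ^ l := by
  simp only [dP', nodeProd, diagram, prod_sigma]

lemma nodeProd_comp_swap {M : Type*} [CommMonoid M] (η : Fin n → ℕ) (x y : Fin n)
    (f : ℕ → ℕ → M) :
    nodeProd (η ∘ Equiv.swap x y) f = ∏ s ∈ diagram η,
      f (η s.1 - s.2) (leg n (η ∘ Equiv.swap x y) (Equiv.swap x y s.1) s.2) := by
  simp only [nodeProd, diagram, prod_sigma]
  rw [← Equiv.prod_comp (Equiv.swap x y)]
  simp only [Function.comp_apply, Equiv.swap_apply_self]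

lemma nodeProd_comp_swap_mul {M : Type*} [CommMonoid M] (hxy : x ⋖ y) (hlt : η y < η x)
    (f : ℕ → ℕ → M) :
    nodeProd (η ∘ Equiv.swap x y) f * f (η x - (η y + 1)) (leg n η x (η y + 1)) =
      nodeProd η f * f (η x - (η y + 1)) (leg n η x (η y + 1) + 1) := by
  have hmem : ⟨x, η y + 1⟩ ∈ diagram η := by simp [diagram, hlt]
  have hrest : ∀ s ∈ (diagram η).erase ⟨x, η y + 1⟩,
      leg n (η ∘ Equiv.swap x y) (Equiv.swap x y s.1) s.2 = leg n η s.1 s.2 := by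
    intro s hs
    exact leg_comp_swap_of_ne hxy hlt fun h => ne_of_mem_erase hs (Sigma.ext h.1 (heq_of_eq h.2))
  rw [nodeProd_comp_swap, nodeProd, ← prod_erase_mul _ _ hmem, ← prod_erase_mul _ _ hmem,
    leg_comp_swap_self hxy hlt, prod_congr rfl fun s hs => by rw [hrest s hs], mul_right_comm]

lemma t_ne_zero : t ≠ 0 :=
  (map_ne_zero_iff _ (IsFractionRing.injective _ K)).2 (MvPolynomial.X_ne_zero 1)

end Stmt3

theorem stmt_3_general {R : Type*} [CommRing R] (q : R) (t : Rˣ) {n : ℕ} {η : Fin n → ℕ}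
    {x y : Fin n} (hxy : x ⋖ y) (hlt : η y < η x) {δ : R}
    (hδ : δ = q ^ (η x - η y) * ↑(t ^ ((legCo n η y : ℤ) - (legCo n η x : ℤ)))) :
    dP n (η ∘ Equiv.swap x y) q t * (1 - δ) = dP n η q t * (1 - t * δ) ∧
      dP' n (η ∘ Equiv.swap x y) q t * (1 - ↑t⁻¹ * δ) = dP' n η q t * (1 - δ) := by
  set a := η x - (η y + 1)
  set l := leg n η x (η y + 1)
  have hδ_pow : δ = q ^ (a + 1) * (t : R) ^ (l + 1) := by
    have harm : η x - η y = a + 1 := by lia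
    have hleg : (legCo n η y : ℤ) - legCo n η x = ↑(l + 1) := by
      rw [legCo_eq_legCo_add_leg hxy hlt]
      lia
    rw [hδ, harm, hleg, zpow_natCast, Units.val_pow_eq_pow_val]
  have htδ : t * δ = q ^ (a + 1) * (t : R) ^ (l + 1 + 1) := by rw [hδ_pow]; ring
  have htδ_inv : ↑t⁻¹ * δ = q ^ (a + 1) * (t : R) ^ l := by
    rw [hδ_pow, Units.inv_mul_eq_iff_eq_mul]; ring
  rw [htδ, htδ_inv, hδ_pow]
  simp only [dP_eq_nodeProd, dP'_eq_nodeProd]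
  exact ⟨nodeProd_comp_swap_mul hxy hlt _, nodeProd_comp_swap_mul hxy hlt _⟩

theorem stmt_3 (n : ℕ) (i : ℕ) (η : Fin n → ℕ)
    (hii : i + 1 < n)
    (hlt : η ⟨i + 1, hii⟩ < η ⟨i, Nat.lt_of_succ_lt hii⟩)
    (siη : Fin n → ℕ)
    (hsi : siη = η ∘ Equiv.swap (⟨i, Nat.lt_of_succ_lt hii⟩ : Fin n) ⟨i + 1, hii⟩)
    (δ : K)
    (hδ : δ = q ^ (η ⟨i, Nat.lt_of_succ_lt hii⟩ - η ⟨i + 1, hii⟩)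
      * t ^ ((legCo n η ⟨i + 1, hii⟩ : ℤ) - (legCo n η ⟨i, Nat.lt_of_succ_lt hii⟩ : ℤ))) :
    dP n siη q t * (1 - δ) = dP n η q t * (1 - t * δ) ∧
    dP' n siη q t * (1 - t⁻¹ * δ) = dP' n η q t * (1 - δ) := by
  subst hsi
  have hcov : (⟨i, Nat.lt_of_succ_lt hii⟩ : Fin n) ⋖ ⟨i + 1, hii⟩ := by simp [Fin.covBy_iff]
  simpa using stmt_3_general q (Units.mk0 t t_ne_zero) hcov hlt (by simpa using hδ)
end

section
/- Let n≥1, 1≤i≤n−1, and let η∈ℕ^n be a composition with η_i>η_{i+1}; let s_iη be the composition obtained from η by exchanging entries i and i+1. Then e_{s_iη}(q,t)=e_η(q,t), e'_{s_iη}(q,t)=e'_η(q,t), l(s_iη)=l(η)+1, and l'(s_iη)=l'(η). -/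
/- STATEMENT 4: For η ∈ ℕ^n with η_i > η_{i+1} and s_iη the swap of entries i, i+1:
   e_{s_iη} = e_η,  e'_{s_iη} = e'_η,  l(s_iη) = l(η)+1,  l'(s_iη) = l'(η). -/

open Finset

namespace Stmt4

variable {R : Type*} [CommRing R]

/-- leg colength l'_η(i) -/
def legCo (n : ℕ) (η : Fin n → ℕ) (i : Fin n) : ℕ :=
  (univ.filter fun k => k < i ∧ η i ≤ η k).card +
  (univ.filter fun k => i < k ∧ η i < η k).card

/-- leg length l(s) of the node s = (i,j) -/
def leg (n : ℕ) (η : Fin n → ℕ) (i : Fin n) (j : ℕ) : ℕ :=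
  (univ.filter fun k => i < k ∧ j ≤ η k ∧ η k ≤ η i).card +
  (univ.filter fun k => k < i ∧ j ≤ η k + 1 ∧ η k + 1 ≤ η i).card

/-- e_η(q,t) = ∏_s (1 − q^{a'(s)+1} t^{n−l'(s)}) -/
def eP (n : ℕ) (η : Fin n → ℕ) (q t : R) : R :=
  ∏ i : Fin n, ∏ j ∈ Finset.Icc 1 (η i), (1 - q ^ ((j - 1) + 1) * t ^ (n - legCo n η i))

/-- e'_η(q,t) = ∏_s (1 − q^{a'(s)+1} t^{n−1−l'(s)}) -/
def eP' (n : ℕ) (η : Fin n → ℕ) (q t : R) : R :=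
  ∏ i : Fin n, ∏ j ∈ Finset.Icc 1 (η i), (1 - q ^ ((j - 1) + 1) * t ^ (n - 1 - legCo n η i))

/-- l(η) = Σ_s l(s) -/
def lTot (n : ℕ) (η : Fin n → ℕ) : ℕ :=
  ∑ i : Fin n, ∑ j ∈ Finset.Icc 1 (η i), leg n η i j

/-- l'(η) = Σ_s l'(s) -/
def lcoTot (n : ℕ) (η : Fin n → ℕ) : ℕ :=
  ∑ i : Fin n, ∑ j ∈ Finset.Icc 1 (η i), legCo n η i

end Stmt4

open Stmt4

/-!
When the rows are listed by decreasing length, ties broken from top to bottom, exactly `l'_η(k)`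
rows come before row `k`. Exchanging two adjacent rows of different lengths does not change this
list, so `e`, `e'` and `l'`, which depend only on the lengths and positions, are unchanged.

For the legs, each pair of rows `k < m` contributes `min η_k η_m` to `l(η)`, plus one when
`η_k < η_m`. The exchange reverses the order of the single pair `(i, i + 1)`, whose contribution
goes from `min η_i η_{i+1}` to `min η_i η_{i+1} + 1`.
-/

namespace Stmt4

section AdjacentSwap

variable {α : Type*} [LinearOrder α] {a b k m : α}

theorem swap_lt_swap_of_covBy (hab : a ⋖ b) (hne : ¬(k = a ∧ m = b)) (hkm : k < m) :
    Equiv.swap a b k < Equiv.swap a b m := by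
  have hlt := hab.lt
  have hk : a < k → b ≤ k := hab.ge_of_gt
  have hm : m < b → m ≤ a := hab.le_of_lt
  grind

theorem swap_lt_swap_iff_of_covBy (hab : a ⋖ b) (hne : ¬(k = a ∧ m = b))
    (hne' : ¬(k = b ∧ m = a)) :
    Equiv.swap a b k < Equiv.swap a b m ↔ k < m := by
  refine ⟨fun h => ?_, swap_lt_swap_of_covBy hab hne⟩
  have hswap : ¬(Equiv.swap a b k = a ∧ Equiv.swap a b m = b) := by
    simpa only [Equiv.swap_apply_eq_iff, Equiv.swap_apply_left, Equiv.swap_apply_right] using hne'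
  simpa only [Equiv.swap_apply_self] using swap_lt_swap_of_covBy hab hswap h

theorem sum_lt_comp_swap_of_covBy {M : Type*} [AddCommMonoid M] [Fintype α] (hab : a ⋖ b)
    (f : α → α → M) :
    ∑ p : α × α with p.1 < p.2, f (Equiv.swap a b p.1) (Equiv.swap a b p.2) + f a b =
      ∑ p : α × α with p.1 < p.2, f p.1 p.2 + f b a := by
  set pairs : Finset (α × α) := {p | p.1 < p.2} with hpairs
  have hmem : (a, b) ∈ pairs := by simpa [hpairs] using hab.lt
  have hrest : ∑ p ∈ pairs.erase (a, b), f (Equiv.swap a b p.1) (Equiv.swap a b p.2) =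
      ∑ p ∈ pairs.erase (a, b), f p.1 p.2 := by
    refine sum_equiv ((Equiv.swap a b).prodCongr (Equiv.swap a b)) ?_ fun _ _ => rfl
    rintro ⟨k, m⟩
    have hswap := swap_lt_swap_iff_of_covBy (k := k) (m := m) hab
    simp only [hpairs, mem_erase, mem_filter_univ, Equiv.prodCongr_apply, Prod.map_apply]
    grind
  rw [← add_sum_erase _ _ hmem, ← add_sum_erase _ _ hmem, hrest, Equiv.swap_apply_left,
    Equiv.swap_apply_right]
  abel

end AdjacentSwap

variable {n : ℕ} {a b : Fin n} {η : Fin n → ℕ}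

/-- Row `m` is listed before row `k` when the rows of `η` are sorted by decreasing length, rows of
equal length keeping their order. The leg colength of a row is the number of rows before it. -/
def Precedes (η : Fin n → ℕ) (m k : Fin n) : Prop :=
  η k < η m ∨ η k = η m ∧ m < k

instance (η : Fin n → ℕ) (m k : Fin n) : Decidable (Precedes η m k) :=
  inferInstanceAs (Decidable (_ ∨ _))

theorem legCo_eq_card_precedes (η : Fin n → ℕ) (k : Fin n) :
    legCo n η k = #{m | Precedes η m k} := by
  rw [legCo, ← card_union_of_disjoint (disjoint_filter.2 fun m _ h h' => h.1.asymm h'.1),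
    ← filter_or]
  congr! 2 with m
  grind [Precedes]

theorem precedes_comp_swap_iff (hab : a ⋖ b) (hne : η a ≠ η b) (m k : Fin n) :
    Precedes (η ∘ Equiv.swap a b) (Equiv.swap a b m) (Equiv.swap a b k) ↔ Precedes η m k := by
  simp only [Precedes, Function.comp_apply, Equiv.swap_apply_self]
  refine or_congr_right (and_congr_right fun heq => swap_lt_swap_iff_of_covBy hab ?_ ?_) <;>
    grind

theorem legCo_comp_swap (hab : a ⋖ b) (hne : η a ≠ η b) (k : Fin n) :
    legCo n (η ∘ Equiv.swap a b) (Equiv.swap a b k) = legCo n η k := by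
  simp only [legCo_eq_card_precedes]
  refine (card_equiv (Equiv.swap a b) fun m => ?_).symm
  simp only [mem_filter_univ, precedes_comp_swap_iff hab hne]

@[to_additive]
theorem prod_legCo_comp_swap {M : Type*} [CommMonoid M] (hab : a ⋖ b) (η : Fin n → ℕ)
    (f : ℕ → ℕ → M) :
    ∏ k, f ((η ∘ Equiv.swap a b) k) (legCo n (η ∘ Equiv.swap a b) k) =
      ∏ k, f (η k) (legCo n η k) := by
  obtain heq | hne := eq_or_ne (η a) (η b)
  · have hη : η ∘ Equiv.swap a b = η := by
      rw [Equiv.comp_swap_eq_update, heq, Function.update_eq_self, ← heq, Function.update_eq_self]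
    rw [hη]
  · rw [← Equiv.prod_comp (Equiv.swap a b)]
    simp only [legCo_comp_swap hab hne, Function.comp_apply, Equiv.swap_apply_self]

theorem eP_comp_swap {R : Type*} [CommRing R] (hab : a ⋖ b) (η : Fin n → ℕ) (q t : R) :
    eP n (η ∘ Equiv.swap a b) q t = eP n η q t :=
  prod_legCo_comp_swap hab η fun r c => ∏ j ∈ Icc 1 r, (1 - q ^ ((j - 1) + 1) * t ^ (n - c))

theorem eP'_comp_swap {R : Type*} [CommRing R] (hab : a ⋖ b) (η : Fin n → ℕ) (q t : R) :
    eP' n (η ∘ Equiv.swap a b) q t = eP' n η q t :=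
  prod_legCo_comp_swap hab η fun r c => ∏ j ∈ Icc 1 r, (1 - q ^ ((j - 1) + 1) * t ^ (n - 1 - c))

theorem lcoTot_comp_swap (hab : a ⋖ b) (η : Fin n → ℕ) :
    lcoTot n (η ∘ Equiv.swap a b) = lcoTot n η :=
  sum_legCo_comp_swap hab η fun r c => ∑ _j ∈ Icc 1 r, c

theorem sum_Icc_card_filter_le {ι : Type*} (s : Finset ι) (g : ι → ℕ) (r : ℕ) :
    ∑ j ∈ Icc 1 r, #{m ∈ s | j ≤ g m ∧ g m ≤ r} = ∑ m ∈ s, if g m ≤ r then g m else 0 := by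
  simp only [card_filter]
  rw [sum_comm]
  refine sum_congr rfl fun m _ => ?_
  rw [← card_filter]
  split_ifs with hm
  · have hIcc : {j ∈ Icc 1 r | j ≤ g m ∧ g m ≤ r} = Icc 1 (g m) := by grind
    rw [hIcc, Nat.card_Icc, Nat.add_sub_cancel]
  · simp only [hm, and_false, filter_false, card_empty]

theorem sum_Icc_leg (η : Fin n → ℕ) (k : Fin n) :
    ∑ j ∈ Icc 1 (η k), leg n η k j =
      ∑ m with k < m, (if η m ≤ η k then η m else 0) +
        ∑ m with m < k, (if η m < η k then η m + 1 else 0) := by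
  have hleg (j : ℕ) : leg n η k j =
      #{m ∈ {m | k < m} | j ≤ η m ∧ η m ≤ η k} +
        #{m ∈ {m | m < k} | j ≤ η m + 1 ∧ η m + 1 ≤ η k} := by
    simp only [leg, filter_filter]
  simp only [hleg, sum_add_distrib, sum_Icc_card_filter_le]
  simp only [Nat.succ_le_iff]

theorem lTot_eq_sum_min_add_ite (η : Fin n → ℕ) :
    lTot n η = ∑ p : Fin n × Fin n with p.1 < p.2,
      (min (η p.1) (η p.2) + if η p.1 < η p.2 then 1 else 0) := by
  have hpair (r s : ℕ) : min r s + (if r < s then 1 else 0) =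
      (if s ≤ r then s else 0) + if r < s then r + 1 else 0 := by grind
  simp only [lTot, sum_Icc_leg, hpair, sum_add_distrib, sum_filter, Fintype.sum_prod_type]
  rw [sum_comm (f := fun k m => if m < k then if η m < η k then η m + 1 else 0 else 0)]

theorem lTot_comp_swap (hab : a ⋖ b) (hlt : η b < η a) :
    lTot n (η ∘ Equiv.swap a b) = lTot n η + 1 := by
  have hsum := sum_lt_comp_swap_of_covBy hab fun k m =>
    min (η k) (η m) + if η k < η m then 1 else 0
  simp only [lTot_eq_sum_min_add_ite, Function.comp_apply]
  rw [if_neg hlt.not_gt, if_pos hlt, min_comm (η b)] at hsum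
  omega

end Stmt4

theorem stmt_4_general {R : Type*} [CommRing R] {n : ℕ} {a b : Fin n} (hab : a ⋖ b)
    {η : Fin n → ℕ} (hlt : η b < η a) (q t : R) :
    eP n (η ∘ Equiv.swap a b) q t = eP n η q t ∧
    eP' n (η ∘ Equiv.swap a b) q t = eP' n η q t ∧
    lTot n (η ∘ Equiv.swap a b) = lTot n η + 1 ∧
    lcoTot n (η ∘ Equiv.swap a b) = lcoTot n η :=
  ⟨eP_comp_swap hab η q t, eP'_comp_swap hab η q t, lTot_comp_swap hab hlt, lcoTot_comp_swap hab η⟩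

theorem stmt_4 (n : ℕ) (i : ℕ) (η : Fin n → ℕ)
    (hii : i + 1 < n)
    (hlt : η ⟨i + 1, hii⟩ < η ⟨i, Nat.lt_of_succ_lt hii⟩)
    (siη : Fin n → ℕ)
    (hsi : siη = η ∘ Equiv.swap (⟨i, Nat.lt_of_succ_lt hii⟩ : Fin n) ⟨i + 1, hii⟩) :
    eP n siη (MvPolynomial.X 0 : MvPolynomial (Fin 2) ℤ) (MvPolynomial.X 1)
        = eP n η (MvPolynomial.X 0) (MvPolynomial.X 1) ∧
    eP' n siη (MvPolynomial.X 0 : MvPolynomial (Fin 2) ℤ) (MvPolynomial.X 1)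
        = eP' n η (MvPolynomial.X 0) (MvPolynomial.X 1) ∧
    lTot n siη = lTot n η + 1 ∧
    lcoTot n siη = lcoTot n η := by
  subst hsi
  exact stmt_4_general (Fin.covBy_iff.2 (Order.covBy_add_one i)) hlt _ _
end

section
/- Let η∈ℕ^n and let E_η be the non-symmetric Macdonald polynomial. Let ι be the ℚ-algebra involution of K[x_1,…,x_n] determined by ι(q)=q^{−1}, ι(t)=t^{−1}, and ι(x_i)=x_{n+1−i}, and set Ê_η := ι(E_η). Let w_0∈S_n be the longest permutation (w_0(i)=n+1−i). Then T_{w_0} Ê_η = t^{#{(i,j) : 1≤i<j≤n, η_i≥η_j}}·E_η. -/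
/- STATEMENT 5: T_{w₀} Ê_η = t^{#{(i,j) : i<j, η_i≥η_j}}·E_η, where Ê_η = ι(E_η) and ι is
the ℚ-algebra involution with ι(q)=q⁻¹, ι(t)=t⁻¹, ι(x_i)=x_{n+1−i}, and w₀ is the longest
permutation. -/

open Finset MvPolynomial

namespace Stmt5

/-- leg colength l'_η(i) -/
def legCo (n : ℕ) (η : Fin n → ℕ) (i : Fin n) : ℕ :=
  (univ.filter fun k => k < i ∧ η i ≤ η k).card +
  (univ.filter fun k => i < k ∧ η i < η k).card

/-- leg length l(s) of the node s = (i,j) -/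
def leg (n : ℕ) (η : Fin n → ℕ) (i : Fin n) (j : ℕ) : ℕ :=
  (univ.filter fun k => i < k ∧ j ≤ η k ∧ η k ≤ η i).card +
  (univ.filter fun k => k < i ∧ j ≤ η k + 1 ∧ η k + 1 ≤ η i).card

/-- The field K = ℚ(q,t). -/
abbrev K : Type := FractionRing (MvPolynomial (Fin 2) ℚ)

noncomputable def q : K := algebraMap (MvPolynomial (Fin 2) ℚ) K (X 0)
noncomputable def t : K := algebraMap (MvPolynomial (Fin 2) ℚ) K (X 1)

/-- The polynomial ring K[x_1,…,x_n]. -/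
abbrev P (n : ℕ) : Type := MvPolynomial (Fin n) K

/-- the automorphism s_k exchanging x_k and x_{k+1} (0-indexed; identity out of range) -/
noncomputable def sOp (n : ℕ) (k : ℕ) : P n →ₗ[K] P n :=
  if h : k + 1 < n then
    (rename (Equiv.swap (⟨k, Nat.lt_of_succ_lt h⟩ : Fin n) ⟨k + 1, h⟩)).toLinearMap
  else LinearMap.id

/-- τ_1 : x_1 ↦ qv·x_1 (the first variable is 0-indexed) -/
noncomputable def tauOp (n : ℕ) (qv : K) : P n →ₗ[K] P n :=
  (aeval (fun j : Fin n => if (j : ℕ) = 0 then C qv * X j else X j)).toLinearMap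

/-- ω := s_{n−1}⋯s_2 s_1 τ_1 -/
noncomputable def omegaOp (n : ℕ) (qv : K) : P n →ₗ[K] P n :=
  (List.range (n - 1)).foldl (fun acc k => sOp n k ∘ₗ acc) (tauOp n qv)

/-- The defining property of the Demazure–Lustig operators T_k (0-indexed), for the
parameter value tv: (x_k − x_{k+1})·(T_k f) = (x_k − x_{k+1})·tv·f
+ (tv·x_k − x_{k+1})·(s_k f − f), i.e. T_k f is the polynomial quotient from the usual
definition. -/
def IsDL (n : ℕ) (tv : K) (T : ℕ → P n →ₗ[K] P n) : Prop :=
  ∀ k, ∀ hk : k + 1 < n, ∀ f : P n,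
    (X (⟨k, Nat.lt_of_succ_lt hk⟩ : Fin n) - X ⟨k + 1, hk⟩) * T k f =
      (X (⟨k, Nat.lt_of_succ_lt hk⟩ : Fin n) - X ⟨k + 1, hk⟩) * (C tv * f) +
      (C tv * X (⟨k, Nat.lt_of_succ_lt hk⟩ : Fin n) - X ⟨k + 1, hk⟩) * (sOp n k f - f)

/-- T_k⁻¹ = tv⁻¹ − 1 + tv⁻¹ T_k -/
noncomputable def Tinv (n : ℕ) (tv : K) (T : ℕ → P n →ₗ[K] P n) (k : ℕ) : P n →ₗ[K] P n :=
  tv⁻¹ • LinearMap.id - LinearMap.id + tv⁻¹ • T k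

/-- The Cherednik operator Y_i (0-indexed i):
Y_i = tv^{i+1−n}·T_i⋯T_{n−2}·ω·T_0⁻¹⋯T_{i−1}⁻¹. -/
noncomputable def Yop (n : ℕ) (qv tv : K) (T : ℕ → P n →ₗ[K] P n) (i : Fin n) :
    P n →ₗ[K] P n :=
  (tv ^ (n - 1 - (i : ℕ)))⁻¹ •
    (((List.range' (i : ℕ) (n - 1 - (i : ℕ))).foldr (fun k acc => T k ∘ₗ acc) LinearMap.id) ∘ₗ
      omegaOp n qv ∘ₗ
      ((List.range (i : ℕ)).foldr (fun k acc => Tinv n tv T k ∘ₗ acc) LinearMap.id))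

/-- the decreasing rearrangement η⁺ of η -/
noncomputable def sortDesc (n : ℕ) (η : Fin n → ℕ) : Fin n → ℕ :=
  fun i => η (Tuple.sort η i.rev)

/-- dominance order on n-tuples (of equal sum) -/
def domLE (n : ℕ) (ν μ : Fin n → ℕ) : Prop :=
  (∑ i, ν i = ∑ i, μ i) ∧
  ∀ p : Fin n, ∑ i ∈ univ.filter (· ≤ p), ν i ≤ ∑ i ∈ univ.filter (· ≤ p), μ i

def domLT (n : ℕ) (ν μ : Fin n → ℕ) : Prop := domLE n ν μ ∧ ν ≠ μ

/-- the order ≺ : ν ≺ η iff ν⁺ < η⁺, or ν⁺ = η⁺ and ν < η (dominance order) -/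
noncomputable def prec (n : ℕ) (ν η : Fin n → ℕ) : Prop :=
  domLT n (sortDesc n ν) (sortDesc n η) ∨ (sortDesc n ν = sortDesc n η ∧ domLT n ν η)

/-- E is the non-symmetric Macdonald polynomial for the composition η (with parameters
qv, tv and Demazure–Lustig operators T): it has the triangular form
E = x^η + Σ_{ν≺η} b_{ην} x^ν and satisfies Y_i E = qv^{η_i}·tv^{−l'_η(i)}·E for all i. -/
noncomputable def IsNSMac (n : ℕ) (qv tv : K) (T : ℕ → P n →ₗ[K] P n)
    (η : Fin n → ℕ) (E : P n) : Prop :=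
  coeff (Finsupp.equivFunOnFinite.symm η) E = 1 ∧
  (∀ ν : Fin n →₀ ℕ, coeff ν E ≠ 0 → (ν : Fin n → ℕ) = η ∨ prec n (ν : Fin n → ℕ) η) ∧
  ∀ i : Fin n, Yop n qv tv T i E = (qv ^ η i / tv ^ legCo n η i) • E

/-- the adjacent transposition s_k as a permutation (identity out of range, 0-indexed) -/
def sPerm (n : ℕ) (k : ℕ) : Equiv.Perm (Fin n) :=
  if h : k + 1 < n then Equiv.swap ⟨k, Nat.lt_of_succ_lt h⟩ ⟨k + 1, h⟩ else 1

/-- the length l(σ) of a permutation, i.e. its number of inversions -/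
def inversions {n : ℕ} (σ : Equiv.Perm (Fin n)) : ℕ :=
  (univ.filter fun p : Fin n × Fin n => p.1 < p.2 ∧ σ p.2 < σ p.1).card

/-- The defining property of σ ↦ T_σ: T_1 = id and T_{σ·s_k} = T_σ ∘ T_k whenever
l(σ·s_k) = l(σ)+1; by the braid relations this determines T_σ = T_{i_1}⋯T_{i_p} for any
reduced word σ = s_{i_1}⋯s_{i_p}. -/
def IsTsigma (n : ℕ) (T : ℕ → P n →ₗ[K] P n)
    (Tw : Equiv.Perm (Fin n) → P n →ₗ[K] P n) : Prop :=
  Tw 1 = LinearMap.id ∧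
  ∀ σ : Equiv.Perm (Fin n), ∀ k, k + 1 < n →
    inversions (σ * sPerm n k) = inversions σ + 1 →
    Tw (σ * sPerm n k) = Tw σ ∘ₗ T k

/-- U⁺ := Σ_σ T_σ -/
noncomputable def Uplus (n : ℕ) (Tw : Equiv.Perm (Fin n) → P n →ₗ[K] P n) :
    P n →ₗ[K] P n := ∑ σ : Equiv.Perm (Fin n), Tw σ

/-- U⁻ := Σ_σ (−tv)^{−l(σ)} T_σ -/
noncomputable def Uminus (n : ℕ) (tv : K) (Tw : Equiv.Perm (Fin n) → P n →ₗ[K] P n) :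
    P n →ₗ[K] P n := ∑ σ : Equiv.Perm (Fin n), ((-tv) ^ inversions σ)⁻¹ • Tw σ

/-- the monomial x^η -/
noncomputable def xmon (n : ℕ) (η : Fin n → ℕ) : P n :=
  monomial (Finsupp.equivFunOnFinite.symm η) 1

end Stmt5

open Stmt5

/-!
Put `G = T_{w₀} ∘ ι`. Then `G T_k = T_k⁻¹ G`, which together with `ω ι ω = ι` and the factorizations
of `T_{w₀}` through the rotation `s_1 ⋯ s_{n-1}` and its inverse gives `Y_i G Y_i = G`. Since `ι`
inverts the eigenvalues of `E_η`, the polynomial `G E_η` is a joint eigenvector of the `Y_i` with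
the same eigenvalues as `E_η`.

On monomials each `Y_i` is triangular for a rank function refining `≺`, with diagonal entries
`q^{μ_i} t^z`. Such entries determine `μ`, so a joint eigenvector with the eigenvalues of `E_η` is
determined by its coefficient of `x^η`. For `G E_η` this coefficient is read off from the
triangularity of `T_{w₀}`, which moves exponents by `w₀` and picks up a factor `t` from each pair
`i < j` with `η_i ≥ η_j`.
-/

namespace Stmt5

section DemazureLustig

theorem X_sub_X_ne_zero {ι R : Type*} [CommRing R] [Nontrivial R] {u v : ι} (h : u ≠ v) :
    (X u - X v : MvPolynomial ι R) ≠ 0 :=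
  fun h' ↦ h (X_injective (sub_eq_zero.mp h'))

theorem C_inv_mul_C {ι F : Type*} [Field F] {a : F} (ha : a ≠ 0) :
    (C a⁻¹ * C a : MvPolynomial ι F) = 1 := by
  rw [← map_mul, inv_mul_cancel₀ ha, map_one]

variable {ι R : Type*} [DecidableEq ι] [CommRing R] {a : R} {u v : ι}
  {A : MvPolynomial ι R →ₗ[R] MvPolynomial ι R}

/-- `A` is the Demazure–Lustig operator with parameter `a` attached to the ordered pair of
variables `x_u`, `x_v`; as in `IsDL`, the division by `x_u - x_v` is cleared. -/
structure IsDemazureLustig (a : R) (u v : ι)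
    (A : MvPolynomial ι R →ₗ[R] MvPolynomial ι R) : Prop where
  ne : u ≠ v
  sub_mul_apply (f : MvPolynomial ι R) : (X u - X v) * A f =
    (X u - X v) * (C a * f) + (C a * X u - X v) * (rename (Equiv.swap u v) f - f)

theorem rename_swap_rename_swap (u v : ι) (f : MvPolynomial ι R) :
    rename (Equiv.swap u v) (rename (Equiv.swap u v) f) = f := by
  rw [rename_rename, ← Equiv.coe_trans, Equiv.swap_swap, Equiv.coe_refl, rename_id_apply]

namespace IsDemazureLustig

section Domain

variable [IsDomain R]

theorem apply_eq (hA : IsDemazureLustig a u v A) {f g : MvPolynomial ι R}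
    (h : (X u - X v) * g =
      (X u - X v) * (C a * f) + (C a * X u - X v) * (rename (Equiv.swap u v) f - f)) :
    A f = g :=
  mul_left_cancel₀ (X_sub_X_ne_zero hA.ne) ((hA.sub_mul_apply f).trans h.symm)

theorem apply_apply (hA : IsDemazureLustig a u v A) (f : MvPolynomial ι R) :
    A (A f) = (C a - 1) * A f + C a * f := by
  have h := hA.sub_mul_apply f
  have hswap := congrArg (rename (Equiv.swap u v)) h
  simp only [map_mul, map_sub, map_add, rename_X, rename_C, Equiv.swap_apply_left,
    Equiv.swap_apply_right, rename_swap_rename_swap] at hswap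
  apply hA.apply_eq
  apply mul_left_cancel₀ (X_sub_X_ne_zero (R := R) hA.ne)
  linear_combination (C a - 1) * X u * h + (C a * X u - X v) * hswap

theorem apply_mul_of_rename_eq (hA : IsDemazureLustig a u v A) {g : MvPolynomial ι R}
    (hg : rename (Equiv.swap u v) g = g) (f : MvPolynomial ι R) : A (g * f) = g * A f := by
  apply hA.apply_eq
  rw [map_mul, hg]
  linear_combination g * hA.sub_mul_apply f

theorem apply_X_left_pow (hA : IsDemazureLustig a u v A) (e : ℕ) :
    A (X u ^ (e + 1)) = X v ^ (e + 1) +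
      (1 - C a) * (X u * X v * ∑ i ∈ range e, X u ^ i * X v ^ (e - 1 - i)) := by
  apply hA.apply_eq
  rw [map_pow, rename_X, Equiv.swap_apply_left]
  linear_combination
    (1 - C a) * X u * X v * (Commute.all (X u : MvPolynomial ι R) (X v)).geom_sum₂_mul e

theorem apply_X_right_pow (hA : IsDemazureLustig a u v A) (e : ℕ) :
    A (X v ^ (e + 1)) = C a * X u ^ (e + 1) + (C a - 1) * X v ^ (e + 1) +
      (C a - 1) * (X u * X v * ∑ i ∈ range e, X u ^ i * X v ^ (e - 1 - i)) := by
  apply hA.apply_eq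
  rw [map_pow, rename_X, Equiv.swap_apply_right]
  linear_combination
    (C a - 1) * X u * X v * (Commute.all (X u : MvPolynomial ι R) (X v)).geom_sum₂_mul e

end Domain

theorem semiconj {κ S : Type*} [DecidableEq κ] [CommRing S] [IsDomain S] {b : S} {u' v' : κ}
    {B : MvPolynomial κ S →ₗ[S] MvPolynomial κ S} {φ : MvPolynomial ι R →+* MvPolynomial κ S}
    (hA : IsDemazureLustig a u v A) (hB : IsDemazureLustig b u' v' B)
    (hC : φ (C a) = C b) (hu : φ (X u) = X u') (hv : φ (X v) = X v')
    (hswap : ∀ f, φ (rename (Equiv.swap u v) f) = rename (Equiv.swap u' v') (φ f)) :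
    Function.Semiconj φ A B := by
  intro f
  refine (hB.apply_eq ?_).symm
  simpa only [map_mul, map_add, map_sub, hC, hu, hv, hswap] using
    congrArg φ (hA.sub_mul_apply f)

section Field

variable {F : Type*} [Field F] {a : F} {A : MvPolynomial ι F →ₗ[F] MvPolynomial ι F}

theorem inv (hA : IsDemazureLustig a u v A) (ha : a ≠ 0) :
    IsDemazureLustig a⁻¹ v u (a⁻¹ • LinearMap.id - LinearMap.id + a⁻¹ • A) where
  ne := hA.ne.symm
  sub_mul_apply f := by
    simp only [LinearMap.add_apply, LinearMap.sub_apply, LinearMap.smul_apply, LinearMap.id_apply,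
      smul_eq_C_mul, Equiv.swap_comm v u]
    linear_combination (-C a⁻¹) * hA.sub_mul_apply f -
      (X u * rename (Equiv.swap u v) f - X v * f) * C_inv_mul_C (ι := ι) ha

theorem inv_mul_cancel (hA : IsDemazureLustig a u v A) (ha : a ≠ 0) :
    (a⁻¹ • LinearMap.id - LinearMap.id + a⁻¹ • A) * A = 1 := by
  refine LinearMap.ext fun f ↦ ?_
  simp only [Module.End.mul_apply, Module.End.one_apply, LinearMap.add_apply, LinearMap.sub_apply,
    LinearMap.smul_apply, LinearMap.id_apply, smul_eq_C_mul, hA.apply_apply]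
  linear_combination (A f + f) * C_inv_mul_C (ι := ι) ha

theorem mul_inv_cancel (hA : IsDemazureLustig a u v A) (ha : a ≠ 0) :
    A * (a⁻¹ • LinearMap.id - LinearMap.id + a⁻¹ • A) = 1 := by
  rw [← hA.inv_mul_cancel ha]
  simp only [mul_add, add_mul, mul_sub, sub_mul, ← Module.End.one_eq_id, mul_smul_comm,
    smul_mul_assoc, one_mul, mul_one]

end Field

end IsDemazureLustig

end DemazureLustig

section ExponentVectors

variable {ι : Type*} {μ ρ : ι →₀ ℕ} {u v : ι}

theorem mapDomain_swap_of_eq [DecidableEq ι] (h : μ u = μ v) :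
    μ.mapDomain (Equiv.swap u v) = μ := by
  ext i
  rw [Finsupp.mapDomain_equiv_apply, Equiv.symm_swap]
  rcases eq_or_ne i u with rfl | hu
  · rw [Equiv.swap_apply_left, h]
  rcases eq_or_ne i v with rfl | hv
  · rw [Equiv.swap_apply_right, h]
  · rw [Equiv.swap_apply_of_ne_of_ne hu hv]

theorem mapDomain_swap_add_single [DecidableEq ι] (h : ρ u = ρ v) (c : ℕ) :
    (ρ + Finsupp.single u c).mapDomain (Equiv.swap u v) = ρ + Finsupp.single v c := by
  rw [Finsupp.mapDomain_add, mapDomain_swap_of_eq h, Finsupp.mapDomain_single,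
    Equiv.swap_apply_left]

theorem exists_eq_add_single (h : μ u < μ v) :
    ∃ (ρ : ι →₀ ℕ) (e : ℕ), ρ u = ρ v ∧ μ = ρ + Finsupp.single v (e + 1) := by
  classical
  have huv : v ≠ u := by rintro rfl; exact h.false
  refine ⟨μ - Finsupp.single v (μ v - μ u), μ v - μ u - 1, ?_, ?_⟩
  · simp only [Finsupp.tsub_apply, Finsupp.single_eq_same, Finsupp.single_apply, huv]
    lia
  · rw [Nat.sub_add_cancel (by lia), tsub_add_cancel_of_le]
    exact Finsupp.single_le_iff.mpr (Nat.sub_le ..)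

theorem IsDemazureLustig.apply_monomial_mul {R : Type*} [DecidableEq ι] [CommRing R] [IsDomain R]
    {a : R} {A : MvPolynomial ι R →ₗ[R] MvPolynomial ι R} (hA : IsDemazureLustig a u v A)
    (hρ : ρ u = ρ v) (f : MvPolynomial ι R) : A (monomial ρ 1 * f) = monomial ρ 1 * A f :=
  hA.apply_mul_of_rename_eq (by rw [rename_monomial, mapDomain_swap_of_eq hρ]) f

end ExponentVectors

section SqNorm

variable {ι : Type*} [Fintype ι]

/-- The squared Euclidean norm `∑ μ_i²` of an exponent vector: a permutation-invariant numerical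
function, strictly monotone for the dominance order on partitions. -/
def sqNorm (μ : ι →₀ ℕ) : ℤ := ∑ i, (μ i : ℤ) ^ 2

theorem sqNorm_add_single (ρ : ι →₀ ℕ) (u : ι) (c : ℕ) :
    sqNorm (ρ + Finsupp.single u c) = sqNorm ρ + 2 * ρ u * c + c ^ 2 := by
  classical
  have key (i : ι) : ((ρ + Finsupp.single u c) i : ℤ) ^ 2 =
      (ρ i : ℤ) ^ 2 + if u = i then 2 * (ρ i : ℤ) * c + c ^ 2 else 0 := by
    rw [Finsupp.add_apply, Finsupp.single_apply]
    split_ifs <;> push_cast <;> ring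
  simp only [sqNorm, key, sum_add_distrib, sum_ite_eq, mem_univ, if_true]
  ring

theorem sqNorm_mapDomain (σ : Equiv.Perm ι) (μ : ι →₀ ℕ) :
    sqNorm (μ.mapDomain σ) = sqNorm μ := by
  simp only [sqNorm, Finsupp.mapDomain_equiv_apply]
  exact Equiv.sum_comp σ.symm fun i ↦ (μ i : ℤ) ^ 2

theorem sqNorm_add_single_add_single_lt {ρ : ι →₀ ℕ} {u v : ι} (huv : u ≠ v) (hρ : ρ u = ρ v)
    {i j : ℕ} (hi : 0 < i) (hj : 0 < j) :
    sqNorm (ρ + Finsupp.single u i + Finsupp.single v j) <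
      sqNorm (ρ + Finsupp.single u (i + j)) := by
  have hv : (ρ + Finsupp.single u i) v = ρ v := by simp [huv]
  rw [sqNorm_add_single, sqNorm_add_single, sqNorm_add_single, hv, hρ]
  have : (0 : ℤ) < i * j := by positivity
  push_cast
  linarith

theorem monomial_mul_sum_mem_restrictSupport {R : Type*} [CommRing R] {ρ : ι →₀ ℕ} {u v : ι}
    (huv : u ≠ v) (hρ : ρ u = ρ v) (e : ℕ) :
    monomial ρ 1 * (X u * X v * ∑ i ∈ range e, X u ^ i * X v ^ (e - 1 - i)) ∈
      restrictSupport R {l | sqNorm l < sqNorm (ρ + Finsupp.single u (e + 1))} := by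
  rw [mul_sum, mul_sum]
  refine Submodule.sum_mem _ fun i hi ↦ ?_
  obtain ⟨j, rfl⟩ := Nat.exists_eq_add_of_lt (mem_range.mp hi)
  have hmon : monomial ρ (1 : R) * (X u * X v * (X u ^ i * X v ^ (i + j + 1 - 1 - i))) =
      monomial (ρ + Finsupp.single u (i + 1) + Finsupp.single v (j + 1)) 1 := by
    rw [show i + j + 1 - 1 - i = j by lia, monomial_add_single, monomial_add_single]
    ring
  rw [hmon, monomial_mem_restrictSupport]
  left
  have hlt := sqNorm_add_single_add_single_lt huv hρ i.succ_pos j.succ_pos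
  rwa [show i + 1 + (j + 1) = i + j + 1 + 1 by lia] at hlt

namespace IsDemazureLustig

variable {R : Type*} [DecidableEq ι] [CommRing R] [IsDomain R] {a : R} {u v : ι}
  {A : MvPolynomial ι R →ₗ[R] MvPolynomial ι R}

theorem apply_monomial_sub_mem (hA : IsDemazureLustig a u v A) (μ : ι →₀ ℕ) :
    A (monomial μ 1) -
        (if μ u ≤ μ v then a else 1) • monomial (μ.mapDomain (Equiv.swap u v)) 1 -
        (if μ u < μ v then a - 1 else 0) • monomial μ 1 ∈
      restrictSupport R {l | sqNorm l < sqNorm μ} := by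
  rcases lt_trichotomy (μ u) (μ v) with h | h | h
  · obtain ⟨ρ, e, hρ, rfl⟩ := exists_eq_add_single h
    have hmem := Submodule.smul_mem _ (a - 1)
      (monomial_mul_sum_mem_restrictSupport (R := R) hA.ne hρ e)
    rw [← mapDomain_swap_add_single hρ.symm, sqNorm_mapDomain] at hmem
    convert hmem using 1
    rw [if_pos h.le, if_pos h, Equiv.swap_comm, mapDomain_swap_add_single hρ.symm,
      monomial_add_single, monomial_add_single, hA.apply_monomial_mul hρ, hA.apply_X_right_pow]
    simp only [smul_eq_C_mul, C_sub, C_1]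
    ring
  · have hμ : A (monomial μ 1) = C a * monomial μ 1 := by
      apply hA.apply_eq
      rw [rename_monomial, mapDomain_swap_of_eq h]
      ring
    simp [hμ, h, mapDomain_swap_of_eq h, smul_eq_C_mul]
  · obtain ⟨ρ, e, hρ, rfl⟩ := exists_eq_add_single h
    have hmem := Submodule.smul_mem _ (1 - a)
      (monomial_mul_sum_mem_restrictSupport (R := R) hA.ne hρ.symm e)
    convert hmem using 1
    rw [if_neg h.not_ge, if_neg h.not_gt, mapDomain_swap_add_single hρ.symm,
      monomial_add_single, monomial_add_single, hA.apply_monomial_mul hρ.symm,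
      hA.apply_X_left_pow]
    simp only [smul_eq_C_mul, C_sub, C_1, C_0]
    ring

end IsDemazureLustig

end SqNorm

section Triangular

variable {n : ℕ} {σ τ : Equiv.Perm (Fin n)} {μ ν : Fin n →₀ ℕ}

/-- The first moment `∑ i μ_i` of an exponent vector: it decreases strictly when the vector
increases in the dominance order. -/
def moment (μ : Fin n →₀ ℕ) : ℤ := ∑ i : Fin n, (i : ℤ) * μ i

/-- A rank function for the order `prec` on exponent vectors. Comparing heights gives a total
preorder, which is coarser than `prec` and easier to follow through products of operators. -/
def height (μ : Fin n →₀ ℕ) : ℤ ×ₗ ℤ := toLex (sqNorm μ, -moment μ)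

theorem height_lt_height_iff : height ν < height μ ↔
    sqNorm ν < sqNorm μ ∨ sqNorm ν = sqNorm μ ∧ moment μ < moment ν := by
  simp only [height, Prod.Lex.toLex_lt_toLex, neg_lt_neg_iff]

theorem height_mapDomain_lt_of_sqNorm_lt (h : sqNorm ν < sqNorm μ) :
    height (ν.mapDomain σ) < height (μ.mapDomain τ) :=
  height_lt_height_iff.mpr <| .inl <| by rwa [sqNorm_mapDomain, sqNorm_mapDomain]

theorem moment_mapDomain (σ : Equiv.Perm (Fin n)) (μ : Fin n →₀ ℕ) :
    moment (μ.mapDomain σ) = ∑ i, (σ i : ℤ) * μ i := by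
  simp only [moment, Finsupp.mapDomain_equiv_apply]
  simpa using Equiv.sum_comp σ.symm fun i ↦ (σ i : ℤ) * μ i

theorem moment_mapDomain_sub_moment_mapDomain_mul_swap (σ : Equiv.Perm (Fin n)) {u v : Fin n}
    (huv : u ≠ v) (μ : Fin n →₀ ℕ) :
    moment (μ.mapDomain σ) - moment (μ.mapDomain (σ * Equiv.swap u v)) =
      ((σ u : ℤ) - σ v) * ((μ u : ℤ) - μ v) := by
  rw [moment_mapDomain, moment_mapDomain, ← sum_sub_distrib, Fintype.sum_eq_add u v huv]
  · simp only [Equiv.Perm.mul_apply, Equiv.swap_apply_left, Equiv.swap_apply_right]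
    ring
  · rintro i ⟨hu, hv⟩
    rw [Equiv.Perm.mul_apply, Equiv.swap_apply_of_ne_of_ne hu hv, sub_self]

theorem height_mapDomain_lt_height_mapDomain_mul_swap {u v : Fin n} (hσ : σ u < σ v)
    (hμ : μ u < μ v) : height (μ.mapDomain σ) < height (μ.mapDomain (σ * Equiv.swap u v)) := by
  have hdiff := moment_mapDomain_sub_moment_mapDomain_mul_swap σ (ne_of_apply_ne σ hσ.ne) μ
  have hpos : 0 < ((σ u : ℤ) - σ v) * ((μ u : ℤ) - μ v) :=
    mul_pos_of_neg_of_neg (sub_neg.mpr (mod_cast hσ)) (sub_neg.mpr (mod_cast hμ))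
  rw [height_lt_height_iff, sqNorm_mapDomain, sqNorm_mapDomain]
  right
  lia

variable {R : Type*} [CommRing R]

/-- `A` maps each monomial `x^μ` to `c μ • x^{σμ}` plus monomials of smaller height, where
`σμ = μ.mapDomain σ` is the exponent vector `μ` with its entries moved by `σ`. -/
def IsTriangular (A : MvPolynomial (Fin n) R →ₗ[R] MvPolynomial (Fin n) R)
    (σ : Equiv.Perm (Fin n)) (c : (Fin n →₀ ℕ) → R) : Prop :=
  ∀ μ : Fin n →₀ ℕ, A (monomial μ 1) - c μ • monomial (μ.mapDomain σ) 1 ∈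
    restrictSupport R {ν | height ν < height (μ.mapDomain σ)}

namespace IsTriangular

variable {A B : MvPolynomial (Fin n) R →ₗ[R] MvPolynomial (Fin n) R} {c d : (Fin n →₀ ℕ) → R}

theorem one : IsTriangular (1 : MvPolynomial (Fin n) R →ₗ[R] MvPolynomial (Fin n) R) 1 1 := by
  intro μ
  simp [Finsupp.mapDomain_id]

theorem apply_mem_restrictSupport (hA : IsTriangular A σ c) {h : ℤ ×ₗ ℤ}
    {p : MvPolynomial (Fin n) R}
    (hp : p ∈ restrictSupport R {l | height (l.mapDomain σ) < h}) :
    A p ∈ restrictSupport R {ν | height ν < h} := by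
  have hle : restrictSupport R {l | height (l.mapDomain σ) < h} ≤
      (restrictSupport R {ν | height ν < h}).comap A := by
    rw [restrictSupport_eq_span, Submodule.span_le]
    rintro _ ⟨l, (hl : height (l.mapDomain σ) < h), rfl⟩
    have hlow := restrictSupport_mono R (t := {ν | height ν < h})
      (fun ν (hν : height ν < height (l.mapDomain σ)) ↦ hν.trans hl) (hA l)
    have hlead := Submodule.smul_mem _ (c l) <|
      (monomial_mem_restrictSupport R (s := {ν | height ν < h}) (r := 1)).mpr (.inl hl)
    simpa only [sub_add_cancel, SetLike.mem_coe, Submodule.mem_comap] using add_mem hlow hlead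
  exact hle hp

theorem mul (hA : IsTriangular A σ c)
    (hB : ∀ μ, B (monomial μ 1) - d μ • monomial (μ.mapDomain τ) 1 ∈
      restrictSupport R {l | height (l.mapDomain σ) < height (μ.mapDomain (σ * τ))}) :
    IsTriangular (A * B) (σ * τ) fun μ ↦ c (μ.mapDomain τ) * d μ := by
  intro μ
  have hμ : μ.mapDomain (σ * τ) = (μ.mapDomain τ).mapDomain σ := by
    rw [Equiv.Perm.coe_mul, Finsupp.mapDomain_comp]
  have hlow := hA.apply_mem_restrictSupport (hB μ)
  have hlead := Submodule.smul_mem _ (d μ) (hA (μ.mapDomain τ))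
  rw [← hμ] at hlead
  convert add_mem hlow hlead using 1
  rw [map_sub, map_smul, smul_sub, smul_smul, mul_comm (d μ), Module.End.mul_apply]
  abel

theorem mul_demazureLustig [IsDomain R] (hA : IsTriangular A σ c) {a : R} {u v : Fin n}
    (hB : IsDemazureLustig a u v B) (hσ : σ u < σ v) :
    IsTriangular (A * B) (σ * Equiv.swap u v)
      fun μ ↦ c (μ.mapDomain (Equiv.swap u v)) * if μ u ≤ μ v then a else 1 := by
  refine hA.mul fun μ ↦ ?_
  have hlow := restrictSupport_mono R
    (t := {l | height (l.mapDomain σ) < height (μ.mapDomain (σ * Equiv.swap u v))})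
    (fun _ hν ↦ height_mapDomain_lt_of_sqNorm_lt hν) (hB.apply_monomial_sub_mem μ)
  have hself : (if μ u < μ v then a - 1 else 0) • monomial μ (1 : R) ∈
      restrictSupport R {l | height (l.mapDomain σ) <
        height (μ.mapDomain (σ * Equiv.swap u v))} := by
    split_ifs with hμ
    · exact Submodule.smul_mem _ _ ((monomial_mem_restrictSupport _).mpr
        (.inl (height_mapDomain_lt_height_mapDomain_mul_swap hσ hμ)))
    · rw [zero_smul]
      exact zero_mem _
  simpa only [sub_add_cancel] using add_mem hlow hself

theorem coeff_apply_monomial (hA : IsTriangular A σ c)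
    (h : height (μ.mapDomain σ) ≤ height (ν.mapDomain σ)) :
    coeff (ν.mapDomain σ) (A (monomial μ 1)) = if μ = ν then c ν else 0 := by
  have hlow : coeff (ν.mapDomain σ) (A (monomial μ 1) - c μ • monomial (μ.mapDomain σ) 1) = 0 := by
    by_contra hne
    exact ((mem_restrictSupport_iff _).mp (hA μ) (mem_support_iff.mpr hne)).not_ge h
  rw [coeff_sub, coeff_smul, coeff_monomial, sub_eq_zero] at hlow
  simp only [hlow, (Finsupp.mapDomain_injective σ.injective).eq_iff, smul_eq_mul, mul_ite, mul_one,
    mul_zero]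
  exact ite_congr rfl (congrArg c) fun _ ↦ rfl

theorem coeff_apply (hA : IsTriangular A σ c) {p : MvPolynomial (Fin n) R}
    (hp : ∀ l ∈ p.support, height (l.mapDomain σ) ≤ height (ν.mapDomain σ)) :
    coeff (ν.mapDomain σ) (A p) = c ν * coeff ν p := by
  have key (l) (hl : l ∈ p.support) :
      coeff (ν.mapDomain σ) (A (monomial l (coeff l p))) =
        if l = ν then c ν * coeff l p else 0 := by
    rw [← mul_one (coeff l p), ← smul_eq_mul, ← smul_monomial, map_smul, coeff_smul,
      hA.coeff_apply_monomial (hp l hl)]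
    simp [mul_comm]
  conv_lhs => rw [← support_sum_monomial_coeff p, map_sum, coeff_sum, sum_congr rfl key]
  aesop

end IsTriangular

end Triangular

section Dominance

theorem eq_of_sum_Iic_eq {ι M : Type*} [PartialOrder ι] [LocallyFiniteOrderBot ι]
    [WellFoundedLT ι] [AddCancelCommMonoid M] {f g : ι → M}
    (h : ∀ p, ∑ i ∈ Iic p, f i = ∑ i ∈ Iic p, g i) : f = g := by
  classical
  funext p
  induction p using WellFoundedLT.induction with
  | ind p ih =>
    have hp := h p
    rw [← Iio_insert, sum_insert notMem_Iio_self, sum_insert notMem_Iio_self,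
      sum_congr rfl fun i hi ↦ ih i (mem_Iio.mp hi)] at hp
    exact add_right_cancel hp

theorem sum_mul_nonneg_of_antitone {R : Type*} [CommRing R] [LinearOrder R] [IsStrictOrderedRing R]
    {n : ℕ} {w a : Fin n → R} (hw : Antitone w) (hw₀ : ∀ i, 0 ≤ w i)
    (ha : ∀ p, 0 ≤ ∑ i ∈ Iic p, a i) : 0 ≤ ∑ i, w i * a i := by
  induction n with
  | zero => simp
  | succ n ih =>
    have hinit : 0 ≤ ∑ i : Fin n, (w i.castSucc - w (Fin.last n)) * a i.castSucc := by
      refine ih (fun i j hij ↦ sub_le_sub_right (hw (Fin.castSucc_le_castSucc_iff.mpr hij)) _)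
        (fun i ↦ sub_nonneg.mpr (hw (Fin.le_last _))) fun p ↦ ?_
      simpa only [Fin.sum_Iic_castSucc] using ha p.castSucc
    have htotal : 0 ≤ ∑ i, a i := by simpa only [← Fin.top_eq_last, Iic_top] using ha (Fin.last n)
    calc 0 ≤ ∑ i : Fin n, (w i.castSucc - w (Fin.last n)) * a i.castSucc
          + w (Fin.last n) * ∑ i, a i := add_nonneg hinit (mul_nonneg (hw₀ _) htotal)
      _ = ∑ i, w i * a i := by
        simp only [Fin.sum_univ_castSucc, sub_mul, sum_sub_distrib, mul_add, mul_sum]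
        ring

theorem sum_sum_Iic {n : ℕ} (f : Fin n → ℤ) :
    ∑ p, ∑ i ∈ Iic p, f i = n * ∑ i, f i - ∑ i : Fin n, (i : ℤ) * f i := by
  rw [sum_comm' (s' := fun i ↦ Ici i) (t' := univ) (by simp), mul_sum, ← sum_sub_distrib]
  refine sum_congr rfl fun i _ ↦ ?_
  rw [sum_const, Fin.card_Ici, nsmul_eq_mul, Nat.cast_sub i.is_le', sub_mul]

variable {n : ℕ}

theorem domLE.sum_Iic_le {ν μ : Fin n → ℕ} (h : domLE n ν μ) (p : Fin n) :
    ∑ i ∈ Iic p, ν i ≤ ∑ i ∈ Iic p, μ i := by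
  simpa only [filter_ge_eq_Iic] using h.2 p

theorem domLT.sum_sq_lt {ν μ : Fin n → ℕ} (h : domLT n ν μ) (hν : Antitone ν) :
    ∑ i, (ν i : ℤ) ^ 2 < ∑ i, (μ i : ℤ) ^ 2 := by
  have hcross : 0 ≤ ∑ i, (ν i : ℤ) * ((μ i : ℤ) - ν i) := by
    refine sum_mul_nonneg_of_antitone (fun i j hij ↦ Nat.cast_le.mpr (hν hij))
      (fun i ↦ Nat.cast_nonneg _) fun p ↦ ?_
    rw [sum_sub_distrib, sub_nonneg]
    exact_mod_cast h.1.sum_Iic_le p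
  have hsq : 0 < ∑ i, ((μ i : ℤ) - ν i) ^ 2 := by
    obtain ⟨i, hi⟩ := Function.ne_iff.mp h.2
    exact sum_pos' (fun _ _ ↦ sq_nonneg _)
      ⟨i, mem_univ i, sq_pos_of_ne_zero (sub_ne_zero.mpr (mod_cast hi.symm))⟩
  calc ∑ i, (ν i : ℤ) ^ 2
      < ∑ i, (ν i : ℤ) ^ 2 +
          (2 * ∑ i, (ν i : ℤ) * ((μ i : ℤ) - ν i) + ∑ i, ((μ i : ℤ) - ν i) ^ 2) := by linarith
    _ = ∑ i, (μ i : ℤ) ^ 2 := by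
      rw [mul_sum, ← sum_add_distrib, ← sum_add_distrib]
      exact sum_congr rfl fun i _ ↦ by ring

theorem domLT.moment_lt {ν μ : Fin n →₀ ℕ} (h : domLT n ν μ) : moment μ < moment ν := by
  have hpartial : ∑ p, ∑ i ∈ Iic p, (ν i : ℤ) < ∑ p, ∑ i ∈ Iic p, (μ i : ℤ) := by
    have hne : ∃ p, ∑ i ∈ Iic p, ν i ≠ ∑ i ∈ Iic p, μ i := by
      by_contra! heq
      exact h.2 (eq_of_sum_Iic_eq heq)
    obtain ⟨p, hp⟩ := hne
    exact_mod_cast sum_lt_sum (fun p _ ↦ h.1.sum_Iic_le p)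
      ⟨p, mem_univ p, (h.1.sum_Iic_le p).lt_of_ne hp⟩
  have htotal : ∑ i, (ν i : ℤ) = ∑ i, (μ i : ℤ) := mod_cast h.1.1
  rw [sum_sum_Iic, sum_sum_Iic, htotal] at hpartial
  exact (sub_lt_sub_iff_left _).mp hpartial

theorem sum_sq_sortDesc (ν : Fin n → ℕ) :
    ∑ i, (sortDesc n ν i : ℤ) ^ 2 = ∑ i, (ν i : ℤ) ^ 2 :=
  Equiv.sum_comp (Fin.revPerm.trans (Tuple.sort ν)) fun i ↦ (ν i : ℤ) ^ 2

theorem antitone_sortDesc (ν : Fin n → ℕ) : Antitone (sortDesc n ν) :=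
  fun _ _ hij ↦ Tuple.monotone_sort ν (Fin.rev_le_rev.mpr hij)

theorem prec.height_lt {ν μ : Fin n →₀ ℕ} (h : prec n ν μ) : height ν < height μ := by
  rw [height_lt_height_iff, sqNorm, sqNorm, ← sum_sq_sortDesc ν, ← sum_sq_sortDesc μ]
  rcases h with h | ⟨hsort, h⟩
  · exact .inl (h.sum_sq_lt (antitone_sortDesc ν))
  · exact .inr ⟨by rw [hsort], h.moment_lt⟩

end Dominance

section Inversions

variable {α : Type*} [LinearOrder α] {u v : α}

theorem swap_lt_swap_of_covBy (huv : u ⋖ v) {a b : α} (hab : a < b) (hne : (a, b) ≠ (u, v)) :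
    Equiv.swap u v a < Equiv.swap u v b := by
  have hlt := huv.lt
  have habove (c : α) (hc : u < c) : v ≤ c := huv.ge_of_gt hc
  have hbelow (c : α) (hc : c < v) : c ≤ u := huv.le_of_lt hc
  grind

section Fintype

variable [Fintype α]

/-- The inversions of a permutation, as the set of pairs counted by `inversions`. -/
def inversionSet (σ : Equiv.Perm α) : Finset (α × α) :=
  univ.filter fun p ↦ p.1 < p.2 ∧ σ p.2 < σ p.1

theorem mem_inversionSet {σ : Equiv.Perm α} {p : α × α} :
    p ∈ inversionSet σ ↔ p.1 < p.2 ∧ σ p.2 < σ p.1 := by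
  simp [inversionSet]

theorem inversionSet_one : inversionSet (1 : Equiv.Perm α) = ∅ := by
  ext p
  simpa [mem_inversionSet] using le_of_lt

theorem inversionSet_mul_swap (huv : u ⋖ v) {σ : Equiv.Perm α} (hσ : σ u < σ v) :
    inversionSet (σ * Equiv.swap u v) = insert (u, v) ((inversionSet σ).map
      ((Equiv.swap u v).prodCongr (Equiv.swap u v)).toEmbedding) := by
  ext ⟨a, b⟩
  simp only [mem_insert, mem_map_equiv, mem_inversionSet, Equiv.prodCongr_symm, Equiv.symm_swap,
    Equiv.prodCongr_apply, Prod.map, Equiv.Perm.mul_apply]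
  constructor
  · rintro ⟨hab, hinv⟩
    by_cases hne : (a, b) = (u, v)
    · exact .inl hne
    · exact .inr ⟨swap_lt_swap_of_covBy huv hab hne, hinv⟩
  · rintro (heq | ⟨hab, hinv⟩)
    · obtain ⟨rfl, rfl⟩ := Prod.mk.inj heq
      simpa using ⟨huv.lt, hσ⟩
    · refine ⟨?_, hinv⟩
      have hne : (Equiv.swap u v a, Equiv.swap u v b) ≠ (u, v) := by
        intro heq
        obtain ⟨ha, hb⟩ := Prod.mk.inj heq
        rw [ha, hb] at hinv
        exact hinv.not_gt hσ
      simpa using swap_lt_swap_of_covBy huv hab hne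

theorem card_filter_inversionSet_mul_swap (huv : u ⋖ v) {σ : Equiv.Perm α} (hσ : σ u < σ v)
    (r : α × α → Prop) [DecidablePred r] :
    #{p ∈ inversionSet (σ * Equiv.swap u v) | r p} =
      #{p ∈ inversionSet σ | r (Equiv.swap u v p.1, Equiv.swap u v p.2)} +
        if r (u, v) then 1 else 0 := by
  have hnotMem : (u, v) ∉ (inversionSet σ).map
      ((Equiv.swap u v).prodCongr (Equiv.swap u v)).toEmbedding := by
    simp [mem_map_equiv, mem_inversionSet, huv.lt.le]
  rw [inversionSet_mul_swap huv hσ, filter_insert, filter_map]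
  split_ifs
  · rw [card_insert_of_notMem fun h ↦ hnotMem (map_subset_map.mpr (filter_subset _ _) h), card_map]
    rfl
  · rw [card_map]
    rfl

theorem card_inversionSet_mul_swap (huv : u ⋖ v) {σ : Equiv.Perm α} (hσ : σ u < σ v) :
    #(inversionSet (σ * Equiv.swap u v)) = #(inversionSet σ) + 1 := by
  simpa using card_filter_inversionSet_mul_swap huv hσ fun _ ↦ True

theorem card_inversionSet_inv (σ : Equiv.Perm α) : #(inversionSet σ⁻¹) = #(inversionSet σ) :=
  card_nbij' (fun p ↦ (σ⁻¹ p.2, σ⁻¹ p.1)) (fun p ↦ (σ p.2, σ p.1))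
    (fun p ↦ by simp +contextual [mem_inversionSet])
    (fun p ↦ by simp +contextual [mem_inversionSet])
    (fun p ↦ by simp) (fun p ↦ by simp)

theorem card_inversionSet_mul_le (σ τ : Equiv.Perm α) :
    #(inversionSet (σ * τ)) ≤ #(inversionSet σ) + #(inversionSet τ) := by
  have hsub : inversionSet (σ * τ) ⊆
      (inversionSet σ).map (τ.symm.prodCongr τ.symm).toEmbedding ∪ inversionSet τ := by
    intro p hp
    rw [mem_inversionSet] at hp
    simp only [mem_union, mem_map_equiv, mem_inversionSet, Equiv.prodCongr_symm, Equiv.symm_symm,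
      Equiv.prodCongr_apply, Prod.map]
    rcases lt_or_gt_of_ne (τ.injective.ne hp.1.ne) with h | h
    · exact .inl ⟨h, hp.2⟩
    · exact .inr ⟨hp.1, h⟩
  simpa using (card_le_card hsub).trans (card_union_le _ _)

end Fintype

variable [Finite α]

theorem exists_covBy_apply_lt {σ : Equiv.Perm α} (hσ : σ ≠ 1) : ∃ u v, u ⋖ v ∧ σ v < σ u := by
  by_contra! hasc
  have := Fintype.ofFinite α
  let := Fintype.toLocallyFiniteOrder (α := α)
  have hmono : StrictMono σ := (strictMono_iff_forall_covBy _).mpr fun u v huv ↦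
    (hasc u v huv).lt_of_ne (σ.injective.ne huv.ne)
  have hrefl := Subsingleton.elim (hmono.orderIsoOfSurjective σ σ.surjective) (OrderIso.refl α)
  exact hσ (Equiv.ext fun i ↦ congrArg (fun e : α ≃o α ↦ e i) hrefl)

@[elab_as_elim]
theorem ascent_induction {motive : Equiv.Perm α → Prop} (one : motive 1)
    (mul_swap : ∀ (σ : Equiv.Perm α) (u v : α), u ⋖ v → σ u < σ v → motive σ →
      motive (σ * Equiv.swap u v)) (σ : Equiv.Perm α) : motive σ := by
  have := Fintype.ofFinite α
  induction hN : #(inversionSet σ) using Nat.strong_induction_on generalizing σ with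
  | _ N ih =>
    rcases eq_or_ne σ 1 with rfl | hσ
    · exact one
    obtain ⟨u, v, huv, hdesc⟩ := exists_covBy_apply_lt hσ
    have hasc : (σ * Equiv.swap u v) u < (σ * Equiv.swap u v) v := by simpa using hdesc
    have hcard := card_inversionSet_mul_swap huv hasc
    rw [Equiv.mul_swap_mul_self] at hcard
    simpa using mul_swap _ u v huv hasc (ih _ (by lia) _ rfl)

end Inversions

section ReducedWords

variable {n k : ℕ} {u v : Fin n} {σ τ : Equiv.Perm (Fin n)}

theorem mk_covBy_mk (hk : k + 1 < n) : (⟨k, Nat.lt_of_succ_lt hk⟩ : Fin n) ⋖ ⟨k + 1, hk⟩ :=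
  Fin.covBy_iff.mpr (Nat.covBy_iff_add_one_eq.mpr rfl)

theorem exists_eq_mk_of_covBy (huv : u ⋖ v) :
    ∃ (k : ℕ) (hk : k + 1 < n), u = ⟨k, Nat.lt_of_succ_lt hk⟩ ∧ v = ⟨k + 1, hk⟩ := by
  have hval : (u : ℕ) + 1 = v := Nat.covBy_iff_add_one_eq.mp (Fin.covBy_iff.mp huv)
  exact ⟨u, hval ▸ v.isLt, rfl, Fin.ext hval.symm⟩

theorem sPerm_of_lt (hk : k + 1 < n) :
    sPerm n k = Equiv.swap ⟨k, Nat.lt_of_succ_lt hk⟩ ⟨k + 1, hk⟩ :=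
  dif_pos hk

theorem inversions_one : inversions (1 : Equiv.Perm (Fin n)) = 0 :=
  card_eq_zero.mpr inversionSet_one

theorem inversions_mul_sPerm (hk : k + 1 < n)
    (hσ : σ ⟨k, Nat.lt_of_succ_lt hk⟩ < σ ⟨k + 1, hk⟩) :
    inversions (σ * sPerm n k) = inversions σ + 1 := by
  rw [sPerm_of_lt hk]
  exact card_inversionSet_mul_swap (mk_covBy_mk hk) hσ

theorem inversions_sPerm (hk : k + 1 < n) : inversions (sPerm n k) = 1 := by
  simpa [inversions_one] using inversions_mul_sPerm (σ := 1) hk (mk_covBy_mk hk).lt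

theorem inversions_mul_le (σ τ : Equiv.Perm (Fin n)) :
    inversions (σ * τ) ≤ inversions σ + inversions τ :=
  card_inversionSet_mul_le σ τ

theorem inversions_inv (σ : Equiv.Perm (Fin n)) : inversions σ⁻¹ = inversions σ :=
  card_inversionSet_inv σ

theorem inversions_add_inversions_revPerm_mul (σ : Equiv.Perm (Fin n)) :
    inversions σ + inversions (Fin.revPerm * σ) = inversions (Fin.revPerm (n := n)) := by
  have hrev : inversions (Fin.revPerm (n := n)) =
      #{p : Fin n × Fin n | p.1 < p.2} := by
    simp [inversions]
  have hmul : inversions (Fin.revPerm * σ) =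
      #{p : Fin n × Fin n | p.1 < p.2 ∧ ¬ σ p.2 < σ p.1} := by
    refine congrArg card (filter_congr fun p _ ↦ and_congr_right fun hp ↦ ?_)
    simp [(σ.injective.ne hp.ne).le_iff_lt]
  rw [hrev, hmul, inversions, ← filter_filter, ← filter_filter]
  exact card_filter_add_card_filter_not _

theorem inversions_add_inversions_mul_revPerm (σ : Equiv.Perm (Fin n)) :
    inversions σ + inversions (σ * Fin.revPerm) = inversions (Fin.revPerm (n := n)) := by
  rw [← inversions_inv σ, ← inversions_inv (σ * Fin.revPerm), mul_inv_rev]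
  exact inversions_add_inversions_revPerm_mul σ⁻¹

/-- `l` is a reduced word for `σ` in the adjacent transpositions `s_k`. -/
structure IsReducedWord (l : List ℕ) (σ : Equiv.Perm (Fin n)) : Prop where
  add_one_lt : ∀ k ∈ l, k + 1 < n
  prod_eq : (l.map (sPerm n)).prod = σ
  length_eq : l.length = inversions σ

theorem inversions_prod_map_sPerm_le {l : List ℕ} (hl : ∀ k ∈ l, k + 1 < n) :
    inversions (l.map (sPerm n)).prod ≤ l.length := by
  induction l with
  | nil => simp [inversions_one]
  | cons k l ih =>
    rw [List.forall_mem_cons] at hl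
    rw [List.map_cons, List.prod_cons, List.length_cons, add_comm, ← inversions_sPerm hl.1]
    exact (inversions_mul_le _ _).trans (add_le_add_right (ih hl.2) _)

theorem prod_map_sPerm_reverse (l : List ℕ) :
    (l.reverse.map (sPerm n)).prod = (l.map (sPerm n)).prod⁻¹ := by
  have hinv : (sPerm n)⁻¹ = sPerm n := by
    funext k
    simp only [Pi.inv_apply, sPerm]
    split_ifs <;> simp
  rw [List.prod_inv_reverse, List.map_reverse, List.map_map]
  exact congrArg (fun f ↦ (l.map f).reverse.prod) hinv.symm

theorem IsReducedWord.reverse {l : List ℕ} (hl : IsReducedWord l σ) :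
    IsReducedWord l.reverse σ⁻¹ where
  add_one_lt k hk := hl.add_one_lt k (List.mem_reverse.mp hk)
  prod_eq := by rw [prod_map_sPerm_reverse, hl.prod_eq]
  length_eq := by rw [List.length_reverse, hl.length_eq, inversions_inv]

theorem IsReducedWord.append {l l' : List ℕ} (hl : IsReducedWord l σ) (hl' : IsReducedWord l' τ)
    (h : inversions (σ * τ) = inversions σ + inversions τ) : IsReducedWord (l ++ l') (σ * τ) where
  add_one_lt k hk := (List.mem_append.mp hk).elim (hl.add_one_lt k) (hl'.add_one_lt k)
  prod_eq := by rw [List.map_append, List.prod_append, hl.prod_eq, hl'.prod_eq]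
  length_eq := by rw [List.length_append, hl.length_eq, hl'.length_eq, h]

theorem isReducedWord_singleton (hk : k + 1 < n) : IsReducedWord [k] (sPerm n k) where
  add_one_lt := by simpa using hk
  prod_eq := by simp
  length_eq := (inversions_sPerm hk).symm

theorem exists_isReducedWord {m : ℕ} (σ : Equiv.Perm (Fin n)) (hσ : ∀ i : Fin n, m ≤ i → σ i = i) :
    ∃ l, IsReducedWord l σ ∧ ∀ k ∈ l, k + 1 < m := by
  induction σ using ascent_induction with
  | one => exact ⟨[], ⟨by simp, rfl, inversions_one.symm⟩, by simp⟩
  | mul_swap σ u v huv hasc ih =>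
    have hvm : (v : ℕ) < m := by
      by_contra! hmv
      have hu : σ u = v := by simpa using hσ v hmv
      have hlt : v < σ v := hu ▸ hasc
      have hfix : σ (σ v) = σ v := by
        simpa [Equiv.swap_apply_of_ne_of_ne (huv.lt.trans hlt).ne' hlt.ne'] using
          hσ (σ v) (hmv.trans hlt.le)
      exact hlt.ne' (σ.injective hfix)
    obtain ⟨l, hl, hlm⟩ := ih fun i hi ↦ by
      have hvi : v < i := Fin.lt_def.mpr (hvm.trans_le hi)
      simpa [Equiv.swap_apply_of_ne_of_ne (huv.lt.trans hvi).ne' hvi.ne'] using hσ i hi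
    obtain ⟨k, hk, rfl, rfl⟩ := exists_eq_mk_of_covBy huv
    refine ⟨l ++ [k], ?_, ?_⟩
    · rw [← sPerm_of_lt hk]
      refine hl.append (isReducedWord_singleton hk) ?_
      rw [inversions_mul_sPerm hk hasc, inversions_sPerm hk]
    · simpa [or_imp, forall_and] using ⟨hlm, hvm⟩

end ReducedWords

section Cycle

variable {n k : ℕ}

/-- The cycle `s_i s_{i+1} ⋯ s_{i+m-1}`, which sends `i + m` to `i` and increments the
points of `[i, i + m)`. -/
def cycle (n i m : ℕ) : Equiv.Perm (Fin n) := ((List.range' i m).map (sPerm n)).prod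

theorem cycle_succ (n i m : ℕ) : cycle n i (m + 1) = cycle n i m * sPerm n (i + m) := by
  simp [cycle, List.range'_concat]

theorem cycle_mul_cycle (n i m m' : ℕ) : cycle n i m * cycle n (i + m) m' = cycle n i (m + m') := by
  rw [cycle, cycle, cycle, ← List.prod_append, ← List.map_append, List.range'_append_1]

theorem cycle_apply {i m : ℕ} (hm : i + m < n) (a : Fin n) : (cycle n i m a : ℕ) =
    if (a : ℕ) = i + m then i else if i ≤ a ∧ a < i + m then a + 1 else a := by
  induction m generalizing a with
  | zero => grind [cycle, Equiv.Perm.one_apply]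
  | succ m ih =>
    rw [cycle_succ, Equiv.Perm.mul_apply, ih (by lia), sPerm_of_lt (k := i + m) hm]
    grind

theorem cycle_apply_lt {i m : ℕ} (hm : i + m + 1 < n) :
    cycle n i m ⟨i + m, Nat.lt_of_succ_lt hm⟩ < cycle n i m ⟨i + m + 1, hm⟩ := by
  have hm' : i + m < n := Nat.lt_of_succ_lt hm
  rw [Fin.lt_def, cycle_apply hm', cycle_apply hm']
  grind

theorem isReducedWord_range' {i m : ℕ} (hm : i + m < n) :
    IsReducedWord (List.range' i m) (cycle n i m) := by
  refine ⟨fun k hk ↦ by grind, rfl, ?_⟩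
  rw [List.length_range']
  induction m with
  | zero => exact inversions_one.symm
  | succ m ih =>
    rw [cycle_succ, inversions_mul_sPerm (k := i + m) hm (cycle_apply_lt hm),
      ← ih (Nat.lt_of_succ_lt hm)]

theorem cycle_mul_sPerm (hk : k + 2 < n) :
    cycle n 0 (n - 1) * sPerm n k = sPerm n (k + 1) * cycle n 0 (n - 1) := by
  have hn : 0 + (n - 1) < n := by lia
  rw [sPerm_of_lt (Nat.lt_of_succ_lt hk), sPerm_of_lt hk, Equiv.mul_swap_eq_swap_mul]
  congr 2 <;> ext <;> grind [cycle_apply hn]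

theorem cycle_mul_revPerm_mul_cycle :
    cycle n 0 (n - 1) * Fin.revPerm * cycle n 0 (n - 1) = Fin.revPerm := by
  ext a
  have hn : 0 + (n - 1) < n := by simpa using a.pos
  simp only [Equiv.Perm.mul_apply, cycle_apply hn, Fin.revPerm_apply, Fin.val_rev]
  grind

end Cycle

theorem prod_map_reverse_mul_prod_map {ι M : Type*} [Monoid M] {f g : ι → M} {l : List ι}
    (h : ∀ k ∈ l, g k * f k = 1) : (l.reverse.map g).prod * (l.map f).prod = 1 := by
  induction l with
  | nil => simp
  | cons k l ih =>
    rw [List.forall_mem_cons] at h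
    rw [List.reverse_cons, List.map_append, List.prod_append, List.map_singleton,
      List.prod_singleton, List.map_cons, List.prod_cons, mul_assoc, ← mul_assoc (g k), h.1,
      one_mul, ih h.2]

section Tsigma

variable {n k : ℕ} {tv : K} {σ τ : Equiv.Perm (Fin n)} {T : ℕ → P n →ₗ[K] P n}
  {Tw : Equiv.Perm (Fin n) → P n →ₗ[K] P n}

theorem sOp_eq_rename (n k : ℕ) : sOp n k = (rename (sPerm n k)).toLinearMap := by
  unfold sOp sPerm
  split_ifs
  · rfl
  · exact LinearMap.ext fun f ↦ (rename_id_apply f).symm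

namespace IsDL

theorem isDemazureLustig (hT : IsDL n tv T) (hk : k + 1 < n) :
    IsDemazureLustig tv (⟨k, Nat.lt_of_succ_lt hk⟩ : Fin n) ⟨k + 1, hk⟩ (T k) where
  ne := (mk_covBy_mk hk).ne
  sub_mul_apply f := by
    rw [hT k hk f, sOp_eq_rename, sPerm_of_lt hk]
    rfl

theorem isDemazureLustig_Tinv (hT : IsDL n tv T) (htv : tv ≠ 0) (hk : k + 1 < n) :
    IsDemazureLustig tv⁻¹ (⟨k + 1, hk⟩ : Fin n) ⟨k, Nat.lt_of_succ_lt hk⟩ (Tinv n tv T k) :=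
  (hT.isDemazureLustig hk).inv htv

theorem Tinv_mul_T (hT : IsDL n tv T) (htv : tv ≠ 0) (hk : k + 1 < n) :
    Tinv n tv T k * T k = 1 :=
  (hT.isDemazureLustig hk).inv_mul_cancel htv

theorem T_mul_Tinv (hT : IsDL n tv T) (htv : tv ≠ 0) (hk : k + 1 < n) :
    T k * Tinv n tv T k = 1 :=
  (hT.isDemazureLustig hk).mul_inv_cancel htv

end IsDL

namespace IsTsigma

theorem eq_prod (hTw : IsTsigma n T Tw) {l : List ℕ} (hl : IsReducedWord l σ) :
    Tw σ = (l.map T).prod := by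
  induction l using List.reverseRecOn generalizing σ with
  | nil => exact hl.prod_eq ▸ hTw.1
  | append_singleton l k ih =>
    have hk : k + 1 < n := hl.add_one_lt k (by simp)
    have hmem : ∀ k' ∈ l, k' + 1 < n := fun k' hk' ↦ hl.add_one_lt k' (by simp [hk'])
    have hσ : σ = (l.map (sPerm n)).prod * sPerm n k := by simp [← hl.prod_eq]
    have hlen : inversions σ = l.length + 1 := by simp [← hl.length_eq]
    have hinv : inversions (l.map (sPerm n)).prod = l.length := by
      refine (inversions_prod_map_sPerm_le hmem).antisymm (Nat.le_of_add_le_add_right (b := 1) ?_)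
      rw [← hlen, hσ, ← inversions_sPerm hk]
      exact inversions_mul_le _ _
    rw [hσ, hTw.2 _ k hk (by rw [← hσ, hlen, hinv]), ih ⟨hmem, rfl, hinv.symm⟩]
    simp [Module.End.mul_eq_comp]

theorem mul (hTw : IsTsigma n T Tw) (h : inversions (σ * τ) = inversions σ + inversions τ) :
    Tw (σ * τ) = Tw σ * Tw τ := by
  obtain ⟨l, hl, -⟩ := exists_isReducedWord (m := n) σ fun i hi ↦ absurd i.isLt hi.not_gt
  obtain ⟨l', hl', -⟩ := exists_isReducedWord (m := n) τ fun i hi ↦ absurd i.isLt hi.not_gt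
  rw [hTw.eq_prod (hl.append hl' h), List.map_append, List.prod_append, hTw.eq_prod hl,
    hTw.eq_prod hl']

theorem apply_sPerm (hTw : IsTsigma n T Tw) (hk : k + 1 < n) : Tw (sPerm n k) = T k := by
  simpa using hTw.eq_prod (isReducedWord_singleton hk)

theorem mul_inv_mul_revPerm (hTw : IsTsigma n T Tw) (σ : Equiv.Perm (Fin n)) :
    Tw σ * Tw (σ⁻¹ * Fin.revPerm) = Tw Fin.revPerm := by
  rw [← hTw.mul, mul_inv_cancel_left]
  rw [mul_inv_cancel_left, ← inversions_add_inversions_mul_revPerm σ⁻¹, inversions_inv]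

theorem revPerm_mul_inv_mul (hTw : IsTsigma n T Tw) (σ : Equiv.Perm (Fin n)) :
    Tw (Fin.revPerm * σ⁻¹) * Tw σ = Tw Fin.revPerm := by
  rw [← hTw.mul, inv_mul_cancel_right]
  rw [inv_mul_cancel_right, ← inversions_add_inversions_revPerm_mul σ⁻¹, inversions_inv, add_comm]

theorem revPerm_mul_T (hTw : IsTsigma n T Tw) (hk : k + 1 < n) :
    Tw Fin.revPerm * T k = T (n - 2 - k) * Tw Fin.revPerm := by
  have hk' : n - 2 - k + 1 < n := by lia
  have hconj : Fin.revPerm * (sPerm n k)⁻¹ =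
      (sPerm n (n - 2 - k))⁻¹ * Fin.revPerm := by
    rw [sPerm_of_lt hk, sPerm_of_lt hk', Equiv.swap_inv, Equiv.swap_inv,
      Equiv.mul_swap_eq_swap_mul, Equiv.swap_comm]
    congr 2 <;> ext <;> simp only [Fin.revPerm_apply, Fin.val_rev] <;> lia
  calc Tw Fin.revPerm * T k
      = T (n - 2 - k) * Tw ((sPerm n (n - 2 - k))⁻¹ * Fin.revPerm) * T k := by
        rw [← hTw.apply_sPerm hk', hTw.mul_inv_mul_revPerm]
    _ = T (n - 2 - k) * Tw Fin.revPerm := by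
        rw [← hconj, mul_assoc, ← hTw.apply_sPerm hk, hTw.revPerm_mul_inv_mul]

theorem isTriangular (hTw : IsTsigma n T Tw) (hT : IsDL n tv T) (σ : Equiv.Perm (Fin n)) :
    IsTriangular (Tw σ) σ fun μ ↦ tv ^ #{p ∈ inversionSet σ | μ p.1 ≤ μ p.2} := by
  induction σ using ascent_induction with
  | one =>
    simp only [inversionSet_one, filter_empty, card_empty, pow_zero, hTw.1]
    exact .one
  | mul_swap σ u v huv hasc ih =>
    obtain ⟨k, hk, rfl, rfl⟩ := exists_eq_mk_of_covBy huv
    have hmul := ih.mul_demazureLustig (hT.isDemazureLustig hk) hasc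
    rw [← sPerm_of_lt hk, hTw.2 σ k hk (inversions_mul_sPerm hk hasc), sPerm_of_lt hk]
    change IsTriangular (Tw σ * T k) _ _
    convert hmul using 3
    rw [card_filter_inversionSet_mul_swap huv hasc, pow_add, pow_ite, pow_one, pow_zero]
    simp only [Finsupp.mapDomain_equiv_apply, Equiv.symm_swap]

end IsTsigma

end Tsigma

section Omega

variable {n k : ℕ} {qv tv : K} {T : ℕ → P n →ₗ[K] P n}

/-- The operator `ω` as an algebra homomorphism; the inverse cycle is `s_{n-1} ⋯ s_2 s_1`. -/
noncomputable def omegaHom (n : ℕ) (qv : K) : P n →ₐ[K] P n :=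
  (rename ⇑(cycle n 0 (n - 1))⁻¹).comp
    (aeval fun j : Fin n ↦ if (j : ℕ) = 0 then C qv * X j else X j)

theorem omegaOp_eq_omegaHom (n : ℕ) (qv : K) : omegaOp n qv = (omegaHom n qv).toLinearMap := by
  have hfold (m : ℕ) : (List.range m).foldl (fun acc k ↦ sOp n k ∘ₗ acc) (tauOp n qv) =
      (rename ⇑(cycle n 0 m)⁻¹).toLinearMap ∘ₗ tauOp n qv := by
    induction m with
    | zero => exact LinearMap.ext fun f ↦ (rename_id_apply _).symm
    | succ m ih =>
      rw [List.range_succ, List.foldl_append, ih, cycle_succ, mul_inv_rev, zero_add]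
      refine LinearMap.ext fun f ↦ ?_
      have hinv : (sPerm n m)⁻¹ = sPerm n m := by
        unfold sPerm
        split_ifs <;> simp
      simp [sOp_eq_rename, rename_rename, hinv]
  exact hfold (n - 1)

theorem omegaHom_C (c : K) : omegaHom n qv (C c) = C c :=
  (omegaHom n qv).commutes c

theorem omegaHom_X (j : Fin n) : omegaHom n qv (X j) =
    C (if (j : ℕ) = 0 then qv else 1) * X ((cycle n 0 (n - 1))⁻¹ j) := by
  rw [omegaHom, AlgHom.comp_apply, aeval_X]
  split_ifs <;> simp

theorem omegaHom_monomial (hn : 0 < n) (μ : Fin n →₀ ℕ) : omegaHom n qv (monomial μ 1) =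
    qv ^ μ ⟨0, hn⟩ • monomial (μ.mapDomain ⇑(cycle n 0 (n - 1))⁻¹) 1 := by
  have hX (j : Fin n) : (if (j : ℕ) = 0 then C qv * X j else X j : P n) ^ μ j =
      (if j = ⟨0, hn⟩ then C qv ^ μ j else 1) * X j ^ μ j := by
    simp only [Fin.ext_iff]
    split_ifs <;> simp [mul_pow]
  have htau : aeval (fun j : Fin n ↦ if (j : ℕ) = 0 then C qv * X j else X j) (monomial μ (1 : K)) =
      qv ^ μ ⟨0, hn⟩ • (monomial μ 1 : P n) := by
    rw [aeval_monomial, Finsupp.prod_fintype _ _ (by simp), monomial_eq,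
      Finsupp.prod_fintype _ _ (by simp)]
    simp only [hX, prod_mul_distrib, prod_ite_eq', mem_univ, if_true, map_one, one_mul,
      smul_eq_C_mul, map_pow]
  rw [omegaHom, AlgHom.comp_apply, htau, map_smul, rename_monomial]

theorem cycle_inv_mk_add_one (hk : k + 1 < n) :
    (cycle n 0 (n - 1))⁻¹ ⟨k + 1, hk⟩ = ⟨k, Nat.lt_of_succ_lt hk⟩ := by
  rw [Equiv.Perm.inv_eq_iff_eq, Fin.ext_iff, cycle_apply (by lia)]
  grind

theorem val_rev_cycle_inv_eq_zero_iff (j : Fin n) :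
    (((cycle n 0 (n - 1))⁻¹ j).rev : ℕ) = 0 ↔ (j : ℕ) = 0 := by
  obtain ⟨i, rfl⟩ := (cycle n 0 (n - 1)).surjective j
  rw [Equiv.Perm.inv_def, Equiv.symm_apply_apply, Fin.val_rev, cycle_apply (by simpa using i.pos)]
  grind

theorem omegaHom_rename_sPerm (hk : k + 2 < n) (f : P n) :
    omegaHom n qv (rename (sPerm n (k + 1)) f) = rename (sPerm n k) (omegaHom n qv f) := by
  have hcomm : (cycle n 0 (n - 1))⁻¹ * sPerm n (k + 1) = sPerm n k * (cycle n 0 (n - 1))⁻¹ := by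
    rw [inv_mul_eq_iff_eq_mul, ← mul_assoc, cycle_mul_sPerm hk, mul_inv_cancel_right]
  have hzero (j : Fin n) : (sPerm n (k + 1) j : ℕ) = 0 ↔ (j : ℕ) = 0 := by
    rw [sPerm_of_lt hk]
    grind
  suffices h : (omegaHom n qv).comp (rename (sPerm n (k + 1))) =
      (rename (sPerm n k)).comp (omegaHom n qv) from DFunLike.congr_fun h f
  refine algHom_ext fun j ↦ ?_
  simp only [AlgHom.comp_apply, rename_X, omegaHom_X, map_mul, rename_C, hzero,
    ← Equiv.Perm.mul_apply, hcomm]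

theorem IsDL.semiconj_omegaHom (hT : IsDL n tv T) (hk : k + 2 < n) :
    Function.Semiconj (omegaHom n qv) (T (k + 1)) (T k) := by
  have hk' : k + 1 < n := Nat.lt_of_succ_lt hk
  refine (hT.isDemazureLustig hk).semiconj (φ := (omegaHom n qv).toRingHom)
    (hT.isDemazureLustig hk') ?_ ?_ ?_ ?_
  · exact omegaHom_C tv
  · simpa [cycle_inv_mk_add_one hk'] using omegaHom_X (qv := qv) (⟨k + 1, hk'⟩ : Fin n)
  · simpa [cycle_inv_mk_add_one hk] using omegaHom_X (qv := qv) (⟨k + 2, hk⟩ : Fin n)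
  · rw [← sPerm_of_lt hk, ← sPerm_of_lt hk']
    exact omegaHom_rename_sPerm hk

end Omega

section Iota

variable {n k : ℕ} {qv tv : K} {autK : K →+* K} {T : ℕ → P n →ₗ[K] P n}

/-- The ring endomorphism `ι`, acting by `autK` on scalars and reversing the variables. -/
noncomputable def iota (n : ℕ) (autK : K →+* K) : P n →+* P n :=
  (rename Fin.rev).toRingHom.comp (map autK)

theorem iota_C (c : K) : iota n autK (C c) = C (autK c) := by
  simp [iota]

theorem iota_X (j : Fin n) : iota n autK (X j) = X j.rev := by
  simp [iota]

theorem iota_rename_swap (u v : Fin n) (f : P n) : iota n autK (rename (Equiv.swap u v) f) =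
    rename (Equiv.swap u.rev v.rev) (iota n autK f) := by
  have hrev : Fin.rev ∘ Equiv.swap u v = Equiv.swap u.rev v.rev ∘ Fin.rev :=
    (Fin.rev_injective.swap_comp u v).symm
  simp [iota, map_rename, rename_rename, hrev]

theorem IsDL.semiconj_iota (hT : IsDL n tv T) (htv : tv ≠ 0) (hat : autK tv = tv⁻¹)
    (hk : k + 1 < n) : Function.Semiconj (iota n autK) (T k) (Tinv n tv T (n - 2 - k)) := by
  have hk' : n - 2 - k + 1 < n := by lia
  have hrev : (⟨k, Nat.lt_of_succ_lt hk⟩ : Fin n).rev = ⟨n - 2 - k + 1, hk'⟩ := by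
    ext; simp only [Fin.val_rev]; lia
  have hrev' : (⟨k + 1, hk⟩ : Fin n).rev = ⟨n - 2 - k, Nat.lt_of_succ_lt hk'⟩ := by
    ext; simp only [Fin.val_rev]; lia
  refine (hT.isDemazureLustig hk).semiconj (hT.isDemazureLustig_Tinv htv hk')
    ?_ (hrev ▸ iota_X _) (hrev' ▸ iota_X _) (hrev ▸ hrev' ▸ iota_rename_swap _ _)
  rw [iota_C, hat]

theorem omegaHom_iota_omegaHom (hqv : qv ≠ 0) (haq : autK qv = qv⁻¹) (f : P n) :
    omegaHom n qv (iota n autK (omegaHom n qv f)) = iota n autK f := by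
  have hmul : (cycle n 0 (n - 1))⁻¹ * Fin.revPerm * (cycle n 0 (n - 1))⁻¹ = Fin.revPerm := by
    rw [mul_inv_eq_iff_eq_mul, inv_mul_eq_iff_eq_mul, ← mul_assoc, cycle_mul_revPerm_mul_cycle]
  induction f using induction_on with
  | C a => rw [omegaHom_C, iota_C, omegaHom_C]
  | add p r hp hr => simp only [map_add, hp, hr]
  | mul_X p j hp =>
    have hrot : (cycle n 0 (n - 1))⁻¹ ((cycle n 0 (n - 1))⁻¹ j).rev = j.rev :=
      DFunLike.congr_fun hmul j
    have hC : (C (autK (if (j : ℕ) = 0 then qv else 1)) * C (if (j : ℕ) = 0 then qv else 1) : P n) =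
        1 := by
      split_ifs
      · rw [haq, C_inv_mul_C hqv]
      · simp
    simp only [map_mul, hp, omegaHom_X, omegaHom_C, iota_C, iota_X, val_rev_cycle_inv_eq_zero_iff,
      hrot]
    rw [← mul_assoc (C _), hC, one_mul]

end Iota

section Symmetry

variable {n : ℕ} {qv tv : K} {T : ℕ → P n →ₗ[K] P n} {Tw : Equiv.Perm (Fin n) → P n →ₗ[K] P n}
  {autK : K →+* K}

theorem Yop_eq (i : Fin n) : Yop n qv tv T i = (tv ^ (n - 1 - (i : ℕ)))⁻¹ •
    (((List.range' i (n - 1 - i)).map T).prod * omegaOp n qv *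
      ((List.range i).map (Tinv n tv T)).prod) := by
  simp only [Yop, List.prod_eq_foldr, List.foldr_map]
  rfl

theorem semiconj_list_prod {ι M R : Type*} [Semiring R] [AddCommMonoid M] [Module R M] {φ : M → M}
    {A B : ι → M →ₗ[R] M} {l : List ι} (h : ∀ k ∈ l, Function.Semiconj φ (A k) (B k)) :
    Function.Semiconj φ (l.map A).prod (l.map B).prod := by
  induction l with
  | nil => exact fun _ ↦ rfl
  | cons k l ih =>
    rw [List.forall_mem_cons] at h
    simpa only [List.map_cons, List.prod_cons, Module.End.coe_mul] using h.1.comp_right (ih h.2)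

/-- The semilinear operator `T_{w₀} ∘ ι` of the theorem. -/
noncomputable def starOp (Tw : Equiv.Perm (Fin n) → P n →ₗ[K] P n) (autK : K →+* K) (f : P n) :
    P n :=
  Tw Fin.revPerm (iota n autK f)

theorem starOp_smul (c : K) (f : P n) : starOp Tw autK (c • f) = autK c • starOp Tw autK f := by
  rw [starOp, starOp, smul_eq_C_mul, map_mul, iota_C, ← smul_eq_C_mul, map_smul]

theorem IsTsigma.revPerm_mul_Tinv (hTw : IsTsigma n T Tw) {k : ℕ} (hk : k + 1 < n) :
    Tw Fin.revPerm * Tinv n tv T k = Tinv n tv T (n - 2 - k) * Tw Fin.revPerm := by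
  refine LinearMap.ext fun f ↦ ?_
  have hf : Tw Fin.revPerm (T k f) = T (n - 2 - k) (Tw Fin.revPerm f) :=
    LinearMap.congr_fun (hTw.revPerm_mul_T hk) f
  simp only [Tinv, Module.End.mul_apply, LinearMap.add_apply, LinearMap.sub_apply,
    LinearMap.smul_apply, LinearMap.id_apply, map_add, map_sub, map_smul, hf]

theorem semiconj_starOp_T (hTw : IsTsigma n T Tw) (hT : IsDL n tv T) (htv : tv ≠ 0)
    (hat : autK tv = tv⁻¹) {k : ℕ} (hk : k + 1 < n) :
    Function.Semiconj (starOp Tw autK) (T k) (Tinv n tv T k) := by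
  intro f
  have hrev := LinearMap.congr_fun (hTw.revPerm_mul_Tinv (tv := tv) (k := n - 2 - k) (by lia))
    (iota n autK f)
  rw [show n - 2 - (n - 2 - k) = k by lia] at hrev
  rwa [starOp, hT.semiconj_iota htv hat hk f]

theorem semiconj_starOp_Tinv (hTw : IsTsigma n T Tw) (hT : IsDL n tv T) (htv : tv ≠ 0)
    (hat : autK tv = tv⁻¹) {k : ℕ} (hk : k + 1 < n) :
    Function.Semiconj (starOp Tw autK) (Tinv n tv T k) (T k) :=
  (semiconj_starOp_T hTw hT htv hat hk).inverses_right
    (LinearMap.congr_fun (hT.T_mul_Tinv htv hk)) (LinearMap.congr_fun (hT.T_mul_Tinv htv hk))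

theorem isReducedWord_range (hn : 0 < n) :
    IsReducedWord (List.range (n - 1)) (cycle n 0 (n - 1)) := by
  rw [List.range_eq_range']
  exact isReducedWord_range' (by lia)

theorem prod_Tinv_mul_revPerm (hTw : IsTsigma n T Tw) (hT : IsDL n tv T) (htv : tv ≠ 0)
    (hn : 0 < n) : ((List.range (n - 1)).map (Tinv n tv T)).prod * Tw Fin.revPerm =
      Tw (cycle n 0 (n - 1) * Fin.revPerm) := by
  have hl := (isReducedWord_range hn).reverse
  have hinv := prod_map_reverse_mul_prod_map fun k hk ↦ hT.Tinv_mul_T htv (hl.add_one_lt k hk)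
  rw [List.reverse_reverse] at hinv
  rw [← hTw.mul_inv_mul_revPerm (cycle n 0 (n - 1))⁻¹, hTw.eq_prod hl, ← mul_assoc, hinv, one_mul,
    inv_inv]

theorem cycle_inv_mul_revPerm_apply {i : Fin n} (hi : n - 1 ≤ i) :
    ((cycle n 0 (n - 1))⁻¹ * Fin.revPerm : Equiv.Perm (Fin n)) i = i := by
  rw [Equiv.Perm.mul_apply, Equiv.Perm.inv_eq_iff_eq, Fin.ext_iff, cycle_apply (by lia)]
  grind [Fin.revPerm_apply]

theorem IsReducedWord.map_add_one {l : List ℕ}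
    (hl : IsReducedWord l ((cycle n 0 (n - 1))⁻¹ * Fin.revPerm)) (hlt : ∀ k ∈ l, k + 2 < n) :
    IsReducedWord (l.map (· + 1)) (cycle n 0 (n - 1) * Fin.revPerm) where
  add_one_lt := by simpa using hlt
  prod_eq := by
    have hconj : ∀ k ∈ l, sPerm n (k + 1) = MulAut.conj (cycle n 0 (n - 1)) (sPerm n k) :=
      fun k hk ↦ by rw [MulAut.conj_apply, cycle_mul_sPerm (hlt k hk), mul_inv_cancel_right]
    calc ((l.map (· + 1)).map (sPerm n)).prod
        = MulAut.conj (cycle n 0 (n - 1)) (l.map (sPerm n)).prod := by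
          rw [map_list_prod, List.map_map, List.map_map]
          exact congrArg List.prod (List.map_congr_left hconj)
      _ = cycle n 0 (n - 1) * Fin.revPerm := by
          rw [hl.prod_eq, MulAut.conj_apply, mul_inv_cancel_left, mul_inv_eq_iff_eq_mul,
            cycle_mul_revPerm_mul_cycle]
  length_eq := by
    have hrot := inversions_add_inversions_mul_revPerm (cycle n 0 (n - 1))
    have hinv := inversions_add_inversions_mul_revPerm (cycle n 0 (n - 1))⁻¹
    rw [inversions_inv] at hinv
    rw [List.length_map, hl.length_eq]
    lia

theorem omegaHom_Tw (hTw : IsTsigma n T Tw) (hT : IsDL n tv T) (f : P n) :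
    omegaHom n qv (Tw (cycle n 0 (n - 1) * Fin.revPerm) f) =
      Tw ((cycle n 0 (n - 1))⁻¹ * Fin.revPerm) (omegaHom n qv f) := by
  obtain ⟨l, hl, hlt⟩ := exists_isReducedWord (m := n - 1)
    ((cycle n 0 (n - 1))⁻¹ * Fin.revPerm) fun _ ↦ cycle_inv_mul_revPerm_apply
  have hlt' (k : ℕ) (hk : k ∈ l) : k + 2 < n := by have := hlt k hk; lia
  rw [hTw.eq_prod hl, hTw.eq_prod (hl.map_add_one hlt'), List.map_map]
  exact semiconj_list_prod (fun k hk ↦ hT.semiconj_omegaHom (hlt' k hk)) f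

theorem omegaOp_prod_Tinv_starOp_omegaOp (hTw : IsTsigma n T Tw) (hT : IsDL n tv T)
    (hqv : qv ≠ 0) (htv : tv ≠ 0) (haq : autK qv = qv⁻¹) (hn : 0 < n) (f : P n) :
    omegaOp n qv (((List.range (n - 1)).map (Tinv n tv T)).prod
      (starOp Tw autK (omegaOp n qv f))) =
      Tw ((cycle n 0 (n - 1))⁻¹ * Fin.revPerm) (iota n autK f) := by
  have hprod (g : P n) : ((List.range (n - 1)).map (Tinv n tv T)).prod (Tw Fin.revPerm g) =
      Tw (cycle n 0 (n - 1) * Fin.revPerm) g :=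
    LinearMap.congr_fun (prod_Tinv_mul_revPerm hTw hT htv hn) g
  simp only [starOp, hprod, omegaOp_eq_omegaHom, AlgHom.toLinearMap_apply, omegaHom_Tw hTw hT,
    omegaHom_iota_omegaHom hqv haq]

theorem range_append_range' (i : Fin n) :
    List.range i ++ List.range' i (n - 1 - i) = List.range (n - 1) := by
  have hi : (i : ℕ) + (n - 1 - i) = n - 1 := by lia
  simpa only [List.range_eq_range', zero_add, hi] using
    List.range'_append_1 (s := 0) (m := i) (n := n - 1 - i)

theorem prod_T_prod_T_Tw (hTw : IsTsigma n T Tw) (i : Fin n) (f : P n) :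
    ((List.range i).map T).prod (((List.range' i (n - 1 - i)).map T).prod
      (Tw ((cycle n 0 (n - 1))⁻¹ * Fin.revPerm) f)) = Tw Fin.revPerm f := by
  rw [← hTw.mul_inv_mul_revPerm (cycle n 0 (n - 1)), hTw.eq_prod (isReducedWord_range i.pos),
    ← range_append_range' i, List.map_append, List.prod_append]
  rfl

theorem prod_T_injective (hT : IsDL n tv T) (htv : tv ≠ 0) {l : List ℕ}
    (hl : ∀ k ∈ l, k + 1 < n) : Function.Injective (l.map T).prod :=
  Function.LeftInverse.injective (LinearMap.congr_fun
    (prod_map_reverse_mul_prod_map fun k hk ↦ hT.Tinv_mul_T htv (hl k hk)))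

theorem starOp_Yop (hTw : IsTsigma n T Tw) (hT : IsDL n tv T) (htv : tv ≠ 0)
    (hat : autK tv = tv⁻¹) (i : Fin n) (f : P n) : starOp Tw autK (Yop n qv tv T i f) =
      tv ^ (n - 1 - (i : ℕ)) • ((List.range' i (n - 1 - i)).map (Tinv n tv T)).prod
        (starOp Tw autK (omegaOp n qv (((List.range i).map (Tinv n tv T)).prod f))) := by
  have hlt : ∀ k ∈ List.range' i (n - 1 - i), k + 1 < n := fun k hk ↦ by
    have := List.mem_range'_1.1 hk; lia
  have hG := semiconj_list_prod fun k hk ↦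
    semiconj_starOp_T hTw hT htv hat (autK := autK) (hlt k hk)
  rw [Yop_eq, LinearMap.smul_apply, starOp_smul, map_inv₀, map_pow, hat, inv_pow, inv_inv, ← hG.eq]
  rfl

theorem Yop_starOp_Yop (hTw : IsTsigma n T Tw) (hT : IsDL n tv T) (hqv : qv ≠ 0) (htv : tv ≠ 0)
    (haq : autK qv = qv⁻¹) (hat : autK tv = tv⁻¹) (i : Fin n) (f : P n) :
    Yop n qv tv T i (starOp Tw autK (Yop n qv tv T i f)) = starOp Tw autK f := by
  have hlt : ∀ k ∈ List.range i, k + 1 < n := fun k hk ↦ by have := List.mem_range.1 hk; lia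
  have hG := semiconj_list_prod fun k hk ↦
    semiconj_starOp_Tinv hTw hT htv hat (autK := autK) (hlt k hk)
  have hΩ := omegaOp_prod_Tinv_starOp_omegaOp hTw hT hqv htv haq i.pos
    (((List.range i).map (Tinv n tv T)).prod f)
  rw [← range_append_range' i, List.map_append, List.prod_append, Module.End.mul_apply] at hΩ
  refine prod_T_injective hT htv hlt ?_
  rw [starOp_Yop hTw hT htv hat, map_smul, Yop_eq, LinearMap.smul_apply,
    smul_inv_smul₀ (pow_ne_zero _ htv), Module.End.mul_apply, Module.End.mul_apply, hΩ,
    prod_T_prod_T_Tw hTw]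
  exact hG f

theorem Yop_starOp_of_eigenvector (hTw : IsTsigma n T Tw) (hT : IsDL n tv T) (hqv : qv ≠ 0)
    (htv : tv ≠ 0) (haq : autK qv = qv⁻¹) (hat : autK tv = tv⁻¹) {i : Fin n} {f : P n} {e : K}
    (he : e ≠ 0) (hae : autK e = e⁻¹) (hf : Yop n qv tv T i f = e • f) :
    Yop n qv tv T i (starOp Tw autK f) = e • starOp Tw autK f := by
  have h := Yop_starOp_Yop hTw hT hqv htv haq hat i f
  rwa [hf, starOp_smul, hae, map_smul, inv_smul_eq_iff₀ he] at h

end Symmetry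

section Cherednik

variable {n : ℕ} {σ : Equiv.Perm (Fin n)} {qv tv : K} {T : ℕ → P n →ₗ[K] P n}

theorem IsTriangular.smul {R : Type*} [CommRing R]
    {A : MvPolynomial (Fin n) R →ₗ[R] MvPolynomial (Fin n) R} {c : (Fin n →₀ ℕ) → R}
    (hA : IsTriangular A σ c) (a : R) : IsTriangular (a • A) σ (a • c) := by
  intro μ
  simpa only [LinearMap.smul_apply, Pi.smul_apply, smul_sub, smul_smul, smul_eq_mul] using
    Submodule.smul_mem _ a (hA μ)

theorem IsTriangular.exists_mul_demazureLustig {F : Type*} [Field F]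
    {A B : MvPolynomial (Fin n) F →ₗ[F] MvPolynomial (Fin n) F} {e : (Fin n →₀ ℕ) → F}
    {a b : F} {z : (Fin n →₀ ℕ) → ℤ} {δ : ℤ} {u v : Fin n} (ha : a ≠ 0)
    (hb : b = a ^ δ) (hA : IsTriangular A σ fun μ ↦ e (μ.mapDomain σ) * a ^ z μ)
    (hB : IsDemazureLustig b u v B) (hσ : σ u < σ v) :
    ∃ z' : (Fin n →₀ ℕ) → ℤ, IsTriangular (A * B) (σ * Equiv.swap u v)
      fun μ ↦ e (μ.mapDomain (σ * Equiv.swap u v)) * a ^ z' μ := by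
  refine ⟨fun μ ↦ z (μ.mapDomain (Equiv.swap u v)) + if μ u ≤ μ v then δ else 0, ?_⟩
  convert hA.mul_demazureLustig hB hσ using 2 with μ
  rw [zpow_add₀ ha, ← mul_assoc, Equiv.Perm.coe_mul, Finsupp.mapDomain_comp]
  split_ifs <;> simp [hb]

theorem IsDL.exists_isTriangular_prod_range' (hT : IsDL n tv T) (htv : tv ≠ 0) {i m : ℕ}
    (hm : i + m < n) : ∃ z : (Fin n →₀ ℕ) → ℤ,
      IsTriangular ((List.range' i m).map T).prod (cycle n i m) fun μ ↦ tv ^ z μ := by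
  induction m with
  | zero => exact ⟨0, by simpa [cycle] using! IsTriangular.one⟩
  | succ m ih =>
    obtain ⟨z, hz⟩ := ih (by lia)
    have hA : IsTriangular ((List.range' i m).map T).prod (cycle n i m)
        fun μ ↦ (1 : (Fin n →₀ ℕ) → K) (μ.mapDomain (cycle n i m)) * tv ^ z μ := by
      simpa only [Pi.one_apply, one_mul] using hz
    obtain ⟨z', hz'⟩ := hA.exists_mul_demazureLustig htv (zpow_one tv).symm
      (hT.isDemazureLustig (k := i + m) hm) (cycle_apply_lt hm)
    refine ⟨z', ?_⟩
    rw [cycle_succ, sPerm_of_lt (k := i + m) hm, List.range'_concat, List.map_append,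
      List.prod_append]
    simpa using hz'

theorem IsTriangular.mul_omegaOp {A : P n →ₗ[K] P n} {c : (Fin n →₀ ℕ) → K}
    (hA : IsTriangular A σ c) (hn : 0 < n) :
    IsTriangular (A * omegaOp n qv) (σ * (cycle n 0 (n - 1))⁻¹)
      fun μ ↦ c (μ.mapDomain ⇑(cycle n 0 (n - 1))⁻¹) * qv ^ μ ⟨0, hn⟩ := by
  refine hA.mul fun μ ↦ ?_
  rw [omegaOp_eq_omegaHom, AlgHom.toLinearMap_apply, omegaHom_monomial hn, sub_self]
  exact zero_mem _

theorem IsDL.exists_isTriangular_prod_mul_omegaOp (hT : IsDL n tv T) (htv : tv ≠ 0) (i : Fin n) :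
    ∃ z : (Fin n →₀ ℕ) → ℤ,
      IsTriangular (((List.range' i (n - 1 - i)).map T).prod * omegaOp n qv) (cycle n 0 i)⁻¹
        fun μ ↦ qv ^ μ.mapDomain ⇑(cycle n 0 i)⁻¹ i * tv ^ z μ := by
  obtain ⟨z, hz⟩ := hT.exists_isTriangular_prod_range' htv (i := i) (m := n - 1 - i) (by lia)
  have hcycle : cycle n i (n - 1 - i) * (cycle n 0 (n - 1))⁻¹ = (cycle n 0 i)⁻¹ := by
    have hi : (i : ℕ) + (n - 1 - i) = n - 1 := by lia
    have h := cycle_mul_cycle n 0 i (n - 1 - i)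
    rw [zero_add, hi] at h
    rw [← h, mul_inv_rev, mul_inv_cancel_left]
  have hzero : cycle n 0 i i = ⟨0, i.pos⟩ := by
    ext
    rw [cycle_apply (by simp)]
    simp
  refine ⟨fun μ ↦ z (μ.mapDomain ⇑(cycle n 0 (n - 1))⁻¹), ?_⟩
  convert hz.mul_omegaOp i.pos using 2 with μ
  · exact hcycle.symm
  · rw [Finsupp.mapDomain_equiv_apply, ← Equiv.Perm.inv_def, inv_inv, hzero, mul_comm]

theorem cycle_inv_mul_cycle_apply_lt {i j : ℕ} (hi : i < n) (hj : j < i) :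
    ((cycle n 0 i)⁻¹ * cycle n 0 j) ⟨j + 1, by lia⟩ <
      ((cycle n 0 i)⁻¹ * cycle n 0 j) ⟨j, by lia⟩ := by
  have hsucc : ((cycle n 0 i)⁻¹ * cycle n 0 j) ⟨j + 1, by lia⟩ = ⟨j, by lia⟩ := by
    rw [Equiv.Perm.mul_apply, Equiv.Perm.inv_eq_iff_eq, Fin.ext_iff, cycle_apply (by lia),
      cycle_apply (by lia)]
    grind
  have hself : ((cycle n 0 i)⁻¹ * cycle n 0 j) ⟨j, by lia⟩ = ⟨i, hi⟩ := by
    rw [Equiv.Perm.mul_apply, Equiv.Perm.inv_eq_iff_eq, Fin.ext_iff, cycle_apply (by lia),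
      cycle_apply (by lia)]
    grind
  rwa [hsucc, hself, Fin.mk_lt_mk]

theorem IsDL.exists_isTriangular_prod_mul_omegaOp_mul_prod (hT : IsDL n tv T) (htv : tv ≠ 0)
    (i : Fin n) {j : ℕ} (hj : j ≤ i) : ∃ z : (Fin n →₀ ℕ) → ℤ,
      IsTriangular (((List.range' i (n - 1 - i)).map T).prod * omegaOp n qv *
        ((List.range j).map (Tinv n tv T)).prod) ((cycle n 0 i)⁻¹ * cycle n 0 j)
        fun μ ↦ qv ^ μ.mapDomain ⇑((cycle n 0 i)⁻¹ * cycle n 0 j) i * tv ^ z μ := by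
  induction j with
  | zero => simpa [cycle] using hT.exists_isTriangular_prod_mul_omegaOp htv i
  | succ j ih =>
    obtain ⟨z, hz⟩ := ih (by lia)
    have hjn : j + 1 < n := by lia
    obtain ⟨z', hz'⟩ := IsTriangular.exists_mul_demazureLustig (e := fun μ ↦ qv ^ μ i) htv
      (zpow_neg_one tv).symm hz (hT.isDemazureLustig_Tinv htv hjn)
      (cycle_inv_mul_cycle_apply_lt i.isLt hj)
    refine ⟨z', ?_⟩
    rw [cycle_succ, zero_add, sPerm_of_lt hjn, Equiv.swap_comm, List.range_succ, List.map_append,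
      List.prod_append, List.map_singleton, List.prod_singleton, ← mul_assoc, ← mul_assoc]
    exact hz'

theorem IsDL.exists_isTriangular_Yop (hT : IsDL n tv T) (htv : tv ≠ 0) (i : Fin n) :
    ∃ z : (Fin n →₀ ℕ) → ℤ, IsTriangular (Yop n qv tv T i) 1 fun μ ↦ qv ^ μ i * tv ^ z μ := by
  obtain ⟨z, hz⟩ := hT.exists_isTriangular_prod_mul_omegaOp_mul_prod (qv := qv) htv i le_rfl
  refine ⟨fun μ ↦ z μ - (n - 1 - i : ℕ), ?_⟩
  rw [inv_mul_cancel] at hz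
  rw [Yop_eq]
  convert hz.smul (tv ^ (n - 1 - (i : ℕ)))⁻¹ using 2 with μ
  rw [Pi.smul_apply, zpow_sub₀ htv, zpow_natCast, smul_eq_mul, Equiv.Perm.coe_one,
    Finsupp.mapDomain_id]
  ring

theorem IsTriangular.eq_zero_of_eigenvector {ι R : Type*} [CommRing R] [IsDomain R]
    {Y : ι → MvPolynomial (Fin n) R →ₗ[R] MvPolynomial (Fin n) R} {c : ι → (Fin n →₀ ℕ) → R}
    (hY : ∀ i, IsTriangular (Y i) 1 (c i)) {e : ι → R} {g : MvPolynomial (Fin n) R}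
    (hg : ∀ i, Y i g = e i • g) (hsep : ∀ ν, (∀ i, c i ν = e i) → coeff ν g = 0) : g = 0 := by
  by_contra hne
  obtain ⟨ν, hν, hmax⟩ := g.support.exists_max_image height (support_nonempty.mpr hne)
  rw [mem_support_iff] at hν
  refine hν (hsep ν fun i ↦ mul_right_cancel₀ hν ?_)
  have h := (hY i).coeff_apply (p := g) (ν := ν) (by simpa [Finsupp.mapDomain_id] using hmax)
  rw [hg i, coeff_smul, Equiv.Perm.coe_one, Finsupp.mapDomain_id, smul_eq_mul] at h
  exact h.symm

end Cherednik

section LeadingCoefficient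

variable {n : ℕ} {tv : K} {T : ℕ → P n →ₗ[K] P n} {Tw : Equiv.Perm (Fin n) → P n →ₗ[K] P n}
  {autK : K →+* K}

theorem mapDomain_revPerm_mapDomain_rev (μ : Fin n →₀ ℕ) :
    (μ.mapDomain Fin.rev).mapDomain Fin.revPerm = μ := by
  have hrev : ⇑Fin.revPerm ∘ Fin.rev = (id : Fin n → Fin n) := Fin.rev_involutive.comp_self
  rw [← Finsupp.mapDomain_comp, hrev, Finsupp.mapDomain_id]

theorem coeff_iota (μ : Fin n →₀ ℕ) (f : P n) :
    coeff (μ.mapDomain Fin.rev) (iota n autK f) = autK (coeff μ f) := by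
  rw [iota, RingHom.comp_apply, AlgHom.toRingHom_eq_coe, RingHom.coe_coe,
    coeff_rename_mapDomain _ Fin.rev_injective, coeff_map]

theorem card_filter_inversionSet_revPerm (μ : Fin n →₀ ℕ) :
    #{p ∈ inversionSet (Fin.revPerm (n := n)) | μ.mapDomain Fin.rev p.1 ≤ μ.mapDomain Fin.rev p.2} =
      #{p : Fin n × Fin n | p.1 < p.2 ∧ μ p.2 ≤ μ p.1} := by
  have hμ (a : Fin n) : μ.mapDomain Fin.rev a = μ a.rev := by
    conv_lhs => rw [← a.rev_rev, Finsupp.mapDomain_apply Fin.rev_injective]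
  refine card_equiv ((Equiv.prodComm _ _).trans (Fin.revPerm.prodCongr Fin.revPerm)) fun p ↦ ?_
  simp [mem_inversionSet, hμ]

theorem coeff_starOp (hTw : IsTsigma n T Tw) (hT : IsDL n tv T) {μ : Fin n →₀ ℕ} {f : P n}
    (hf : ∀ ν ∈ f.support, height ν ≤ height μ) : coeff μ (starOp Tw autK f) =
      tv ^ #{p : Fin n × Fin n | p.1 < p.2 ∧ μ p.2 ≤ μ p.1} * autK (coeff μ f) := by
  have hsupp : ∀ l ∈ (iota n autK f).support, height (l.mapDomain Fin.revPerm) ≤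
      height ((μ.mapDomain Fin.rev).mapDomain Fin.revPerm) := by
    intro l hl
    obtain ⟨ν, rfl⟩ : ∃ ν : Fin n →₀ ℕ, ν.mapDomain Fin.rev = l :=
      ⟨_, mapDomain_revPerm_mapDomain_rev l⟩
    rw [mem_support_iff, coeff_iota] at hl
    rw [mapDomain_revPerm_mapDomain_rev, mapDomain_revPerm_mapDomain_rev]
    exact hf ν (mem_support_iff.mpr (ne_zero_of_map hl))
  have h := (hTw.isTriangular hT Fin.revPerm).coeff_apply hsupp
  rwa [mapDomain_revPerm_mapDomain_rev, coeff_iota, card_filter_inversionSet_revPerm] at h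

end LeadingCoefficient

section Macdonald

variable {n : ℕ} {qv tv : K} {T : ℕ → P n →ₗ[K] P n} {η : Fin n → ℕ} {E : P n}

theorem IsNSMac.height_le (hE : IsNSMac n qv tv T η E) {ν : Fin n →₀ ℕ} (hν : ν ∈ E.support) :
    height ν ≤ height (Finsupp.equivFunOnFinite.symm η) := by
  rcases hE.2.1 ν (mem_support_iff.mp hν) with rfl | h
  · exact (congrArg height (Finsupp.equivFunOnFinite.symm_apply_apply ν)).ge
  · exact h.height_lt.le

theorem eq_zero_of_eigenvector (hT : IsDL n tv T) (htv : tv ≠ 0)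
    (hsep : ∀ (a b : ℕ) (m : ℤ), qv ^ a = qv ^ b * tv ^ m → a = b) {g : P n}
    (hg : ∀ i, Yop n qv tv T i g = (qv ^ η i / tv ^ legCo n η i) • g)
    (hη : coeff (Finsupp.equivFunOnFinite.symm η) g = 0) : g = 0 := by
  choose z hz using fun i ↦ hT.exists_isTriangular_Yop (qv := qv) htv i
  refine IsTriangular.eq_zero_of_eigenvector hz hg fun ν hν ↦ ?_
  suffices h : ν = Finsupp.equivFunOnFinite.symm η by rw [h, hη]
  ext i
  refine hsep _ _ (-legCo n η i - z i ν) ?_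
  rw [zpow_sub₀ htv, ← mul_div_assoc, eq_div_iff (zpow_ne_zero _ htv), hν i, zpow_neg, zpow_natCast,
    div_eq_mul_inv]
  rfl

end Macdonald

section Parameters

theorem t_ne_zero : t ≠ 0 :=
  (map_ne_zero_iff _ (IsFractionRing.injective _ K)).mpr (X_ne_zero 1)

theorem eq_of_q_pow_mul_t_pow_eq {a b m l : ℕ} (h : q ^ a * t ^ m = q ^ b * t ^ l) : a = b := by
  have hpoly : (X 0 ^ a * X 1 ^ m : MvPolynomial (Fin 2) ℚ) = X 0 ^ b * X 1 ^ l :=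
    IsFractionRing.injective _ K (by simpa [q, t] using h)
  simpa using congrArg (fun p ↦ (aeval ![Polynomial.X, 1] p : Polynomial ℚ).natDegree) hpoly

theorem eq_of_q_pow_eq {a b : ℕ} {m : ℤ} (h : q ^ a = q ^ b * t ^ m) : a = b := by
  obtain ⟨k, rfl | rfl⟩ := m.eq_nat_or_neg
  · exact eq_of_q_pow_mul_t_pow_eq (m := 0) (l := k) (by simpa using h)
  · refine eq_of_q_pow_mul_t_pow_eq (m := k) (l := 0) ?_
    rw [h, zpow_neg, zpow_natCast, inv_mul_cancel_right₀ (pow_ne_zero _ t_ne_zero), pow_zero,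
      mul_one]

end Parameters

end Stmt5

theorem stmt_5_general (n : ℕ) (η : Fin n → ℕ) {qv tv : K} (htv : tv ≠ 0)
    (hsep : ∀ (a b : ℕ) (m : ℤ), qv ^ a = qv ^ b * tv ^ m → a = b)
    (T : ℕ → P n →ₗ[K] P n) (hT : IsDL n tv T)
    (Tw : Equiv.Perm (Fin n) → P n →ₗ[K] P n) (hTw : IsTsigma n T Tw)
    (autK : K →+* K) (haq : autK qv = qv⁻¹) (hat : autK tv = tv⁻¹)
    (E : P n) (hE : IsNSMac n qv tv T η E) :
    Tw (Fin.revPerm : Equiv.Perm (Fin n)) (rename Fin.rev (MvPolynomial.map autK E)) =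
      C (tv ^ #{p : Fin n × Fin n | p.1 < p.2 ∧ η p.2 ≤ η p.1}) * E := by
  have hqv : qv ≠ 0 := by
    rintro rfl
    simpa using hsep 1 2 0
  have heigen (i : Fin n) : Yop n qv tv T i (starOp Tw autK E) =
      (qv ^ η i / tv ^ legCo n η i) • starOp Tw autK E :=
    Yop_starOp_of_eigenvector hTw hT hqv htv haq hat
      (div_ne_zero (pow_ne_zero _ hqv) (pow_ne_zero _ htv))
      (by simp [haq, hat, div_eq_mul_inv, mul_comm]) (hE.2.2 i)
  have hcoeff := coeff_starOp (autK := autK) hTw hT fun ν ↦ hE.height_le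
  rw [hE.1, map_one, mul_one] at hcoeff
  change starOp Tw autK E = _
  rw [← smul_eq_C_mul, ← sub_eq_zero]
  refine eq_zero_of_eigenvector (η := η) hT htv hsep (fun i ↦ ?_) ?_
  · rw [map_sub, map_smul, heigen i, hE.2.2 i, smul_sub, smul_comm]
  · rw [coeff_sub, coeff_smul, hE.1, smul_eq_mul, mul_one, hcoeff]
    exact sub_self _

theorem stmt_5 (n : ℕ) (η : Fin n → ℕ)
    (T : ℕ → P n →ₗ[K] P n) (hT : IsDL n t T)
    (Tw : Equiv.Perm (Fin n) → P n →ₗ[K] P n) (hTw : IsTsigma n T Tw)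
    -- the field automorphism of K = ℚ(q,t) with q ↦ q⁻¹ and t ↦ t⁻¹
    (autK : K →+* K) (haq : autK q = q⁻¹) (hat : autK t = t⁻¹)
    (E : P n) (hE : IsNSMac n q t T η E) :
    Tw (Fin.revPerm : Equiv.Perm (Fin n))
        (rename Fin.rev (MvPolynomial.map autK E)) =
      C (t ^ (univ.filter fun p : Fin n × Fin n => p.1 < p.2 ∧ η p.2 ≤ η p.1).card) * E :=
  stmt_5_general n η t_ne_zero (fun _ _ _ ↦ eq_of_q_pow_eq) T hT Tw hTw autK haq hat E hE
end

section
/- Let ι be the ℚ-algebra involution of K[x_1,…,x_n] determined by ι(q)=q^{−1}, ι(t)=t^{−1}, and ι(x_i)=x_{n+1−i}. Then for every f∈K[x_1,…,x_n]: ι(U^+(ι(f))) = t^{−n(n−1)/2}·U^+ f and ι(U^-(ι(f))) = t^{n(n−1)/2}·U^- f. -/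
/- STATEMENT 6: for the involution ι (with ι(q)=q⁻¹, ι(t)=t⁻¹, ι(x_i)=x_{n+1−i}):
ι(U⁺(ι f)) = t^{−n(n−1)/2}·U⁺ f and ι(U⁻(ι f)) = t^{n(n−1)/2}·U⁻ f. -/

open Finset MvPolynomial

namespace Stmt6

/-- leg colength l'_η(i) -/
def legCo (n : ℕ) (η : Fin n → ℕ) (i : Fin n) : ℕ :=
  (univ.filter fun k => k < i ∧ η i ≤ η k).card +
  (univ.filter fun k => i < k ∧ η i < η k).card

/-- leg length l(s) of the node s = (i,j) -/
def leg (n : ℕ) (η : Fin n → ℕ) (i : Fin n) (j : ℕ) : ℕ :=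
  (univ.filter fun k => i < k ∧ j ≤ η k ∧ η k ≤ η i).card +
  (univ.filter fun k => k < i ∧ j ≤ η k + 1 ∧ η k + 1 ≤ η i).card

/-- The field K = ℚ(q,t). -/
abbrev K : Type := FractionRing (MvPolynomial (Fin 2) ℚ)

noncomputable def q : K := algebraMap (MvPolynomial (Fin 2) ℚ) K (X 0)
noncomputable def t : K := algebraMap (MvPolynomial (Fin 2) ℚ) K (X 1)

/-- The polynomial ring K[x_1,…,x_n]. -/
abbrev P (n : ℕ) : Type := MvPolynomial (Fin n) K

/-- the automorphism s_k exchanging x_k and x_{k+1} (0-indexed; identity out of range) -/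
noncomputable def sOp (n : ℕ) (k : ℕ) : P n →ₗ[K] P n :=
  if h : k + 1 < n then
    (rename (Equiv.swap (⟨k, Nat.lt_of_succ_lt h⟩ : Fin n) ⟨k + 1, h⟩)).toLinearMap
  else LinearMap.id

/-- τ_1 : x_1 ↦ qv·x_1 (the first variable is 0-indexed) -/
noncomputable def tauOp (n : ℕ) (qv : K) : P n →ₗ[K] P n :=
  (aeval (fun j : Fin n => if (j : ℕ) = 0 then C qv * X j else X j)).toLinearMap

/-- ω := s_{n−1}⋯s_2 s_1 τ_1 -/
noncomputable def omegaOp (n : ℕ) (qv : K) : P n →ₗ[K] P n :=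
  (List.range (n - 1)).foldl (fun acc k => sOp n k ∘ₗ acc) (tauOp n qv)

/-- The defining property of the Demazure–Lustig operators T_k (0-indexed), for the
parameter value tv: (x_k − x_{k+1})·(T_k f) = (x_k − x_{k+1})·tv·f
+ (tv·x_k − x_{k+1})·(s_k f − f), i.e. T_k f is the polynomial quotient from the usual
definition. -/
def IsDL (n : ℕ) (tv : K) (T : ℕ → P n →ₗ[K] P n) : Prop :=
  ∀ k, ∀ hk : k + 1 < n, ∀ f : P n,
    (X (⟨k, Nat.lt_of_succ_lt hk⟩ : Fin n) - X ⟨k + 1, hk⟩) * T k f =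
      (X (⟨k, Nat.lt_of_succ_lt hk⟩ : Fin n) - X ⟨k + 1, hk⟩) * (C tv * f) +
      (C tv * X (⟨k, Nat.lt_of_succ_lt hk⟩ : Fin n) - X ⟨k + 1, hk⟩) * (sOp n k f - f)

/-- T_k⁻¹ = tv⁻¹ − 1 + tv⁻¹ T_k -/
noncomputable def Tinv (n : ℕ) (tv : K) (T : ℕ → P n →ₗ[K] P n) (k : ℕ) : P n →ₗ[K] P n :=
  tv⁻¹ • LinearMap.id - LinearMap.id + tv⁻¹ • T k

/-- The Cherednik operator Y_i (0-indexed i):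
Y_i = tv^{i+1−n}·T_i⋯T_{n−2}·ω·T_0⁻¹⋯T_{i−1}⁻¹. -/
noncomputable def Yop (n : ℕ) (qv tv : K) (T : ℕ → P n →ₗ[K] P n) (i : Fin n) :
    P n →ₗ[K] P n :=
  (tv ^ (n - 1 - (i : ℕ)))⁻¹ •
    (((List.range' (i : ℕ) (n - 1 - (i : ℕ))).foldr (fun k acc => T k ∘ₗ acc) LinearMap.id) ∘ₗ
      omegaOp n qv ∘ₗ
      ((List.range (i : ℕ)).foldr (fun k acc => Tinv n tv T k ∘ₗ acc) LinearMap.id))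

/-- the decreasing rearrangement η⁺ of η -/
noncomputable def sortDesc (n : ℕ) (η : Fin n → ℕ) : Fin n → ℕ :=
  fun i => η (Tuple.sort η i.rev)

/-- dominance order on n-tuples (of equal sum) -/
def domLE (n : ℕ) (ν μ : Fin n → ℕ) : Prop :=
  (∑ i, ν i = ∑ i, μ i) ∧
  ∀ p : Fin n, ∑ i ∈ univ.filter (· ≤ p), ν i ≤ ∑ i ∈ univ.filter (· ≤ p), μ i

def domLT (n : ℕ) (ν μ : Fin n → ℕ) : Prop := domLE n ν μ ∧ ν ≠ μ

/-- the order ≺ : ν ≺ η iff ν⁺ < η⁺, or ν⁺ = η⁺ and ν < η (dominance order) -/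
noncomputable def prec (n : ℕ) (ν η : Fin n → ℕ) : Prop :=
  domLT n (sortDesc n ν) (sortDesc n η) ∨ (sortDesc n ν = sortDesc n η ∧ domLT n ν η)

/-- E is the non-symmetric Macdonald polynomial for the composition η (with parameters
qv, tv and Demazure–Lustig operators T): it has the triangular form
E = x^η + Σ_{ν≺η} b_{ην} x^ν and satisfies Y_i E = qv^{η_i}·tv^{−l'_η(i)}·E for all i. -/
noncomputable def IsNSMac (n : ℕ) (qv tv : K) (T : ℕ → P n →ₗ[K] P n)
    (η : Fin n → ℕ) (E : P n) : Prop :=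
  coeff (Finsupp.equivFunOnFinite.symm η) E = 1 ∧
  (∀ ν : Fin n →₀ ℕ, coeff ν E ≠ 0 → (ν : Fin n → ℕ) = η ∨ prec n (ν : Fin n → ℕ) η) ∧
  ∀ i : Fin n, Yop n qv tv T i E = (qv ^ η i / tv ^ legCo n η i) • E

/-- the adjacent transposition s_k as a permutation (identity out of range, 0-indexed) -/
def sPerm (n : ℕ) (k : ℕ) : Equiv.Perm (Fin n) :=
  if h : k + 1 < n then Equiv.swap ⟨k, Nat.lt_of_succ_lt h⟩ ⟨k + 1, h⟩ else 1

/-- the length l(σ) of a permutation, i.e. its number of inversions -/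
def inversions {n : ℕ} (σ : Equiv.Perm (Fin n)) : ℕ :=
  (univ.filter fun p : Fin n × Fin n => p.1 < p.2 ∧ σ p.2 < σ p.1).card

/-- The defining property of σ ↦ T_σ: T_1 = id and T_{σ·s_k} = T_σ ∘ T_k whenever
l(σ·s_k) = l(σ)+1; by the braid relations this determines T_σ = T_{i_1}⋯T_{i_p} for any
reduced word σ = s_{i_1}⋯s_{i_p}. -/
def IsTsigma (n : ℕ) (T : ℕ → P n →ₗ[K] P n)
    (Tw : Equiv.Perm (Fin n) → P n →ₗ[K] P n) : Prop :=
  Tw 1 = LinearMap.id ∧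
  ∀ σ : Equiv.Perm (Fin n), ∀ k, k + 1 < n →
    inversions (σ * sPerm n k) = inversions σ + 1 →
    Tw (σ * sPerm n k) = Tw σ ∘ₗ T k

/-- U⁺ := Σ_σ T_σ -/
noncomputable def Uplus (n : ℕ) (Tw : Equiv.Perm (Fin n) → P n →ₗ[K] P n) :
    P n →ₗ[K] P n := ∑ σ : Equiv.Perm (Fin n), Tw σ

/-- U⁻ := Σ_σ (−tv)^{−l(σ)} T_σ -/
noncomputable def Uminus (n : ℕ) (tv : K) (Tw : Equiv.Perm (Fin n) → P n →ₗ[K] P n) :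
    P n →ₗ[K] P n := ∑ σ : Equiv.Perm (Fin n), ((-tv) ^ inversions σ)⁻¹ • Tw σ

/-- the monomial x^η -/
noncomputable def xmon (n : ℕ) (η : Fin n → ℕ) : P n :=
  monomial (Finsupp.equivFunOnFinite.symm η) 1

end Stmt6

open Stmt6

/-!
Conjugation by the longest element `w₀` permutes the simple transpositions, and correspondingly
conjugation by `ι` carries `T_{n-k}` (index `n - 2 - k` when counting from `0`) to `T_k⁻¹`. Hence
`T_{w₀} · ι T_{w₀ σ w₀} ι = T_{w₀ σ}` for every `σ`. Summing over `σ` with weights `a ^ l(σ)` and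
using `l(w₀ σ) = l(w₀) - l(σ)`, the sum `U_a = ∑ a ^ l(σ) T_σ` satisfies
`a ^ l(w₀) · T_{w₀} · ι U_a ι = U_a`, provided that `ι(a) = a⁻¹`. When `a = 1` or `a = -t⁻¹`, every
`T_k` multiplies `U_a` by `a t`, so `T_{w₀} U_a = (a t) ^ l(w₀) U_a`, and cancelling `T_{w₀}` gives
`(a² t) ^ l(w₀) · ι U_a ι = U_a`. These two values of `a` give `U⁺` and `U⁻`.
-/

namespace Stmt6

section Permutations

variable {n k : ℕ}

lemma sPerm_of_lt (hk : k + 1 < n) :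
    sPerm n k = Equiv.swap ⟨k, Nat.lt_of_succ_lt hk⟩ ⟨k + 1, hk⟩ :=
  dif_pos hk

@[simp]
lemma sPerm_mul_self (n k : ℕ) : sPerm n k * sPerm n k = 1 := by
  unfold sPerm
  split_ifs <;> simp

@[simp]
lemma sPerm_apply_sPerm_apply (x : Fin n) : sPerm n k (sPerm n k x) = x := by
  rw [← Equiv.Perm.mul_apply, sPerm_mul_self, Equiv.Perm.one_apply]

@[simp]
lemma mul_sPerm_mul_sPerm (σ : Equiv.Perm (Fin n)) (k : ℕ) :
    σ * sPerm n k * sPerm n k = σ := by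
  rw [mul_assoc, sPerm_mul_self, mul_one]

@[simp]
lemma sPerm_mul_sPerm_mul (σ : Equiv.Perm (Fin n)) (k : ℕ) :
    sPerm n k * (sPerm n k * σ) = σ := by
  rw [← mul_assoc, sPerm_mul_self, one_mul]

@[simp]
lemma sPerm_inv (n k : ℕ) : (sPerm n k)⁻¹ = sPerm n k :=
  inv_eq_of_mul_eq_one_right (sPerm_mul_self n k)

lemma sPerm_apply_left (hk : k + 1 < n) :
    sPerm n k ⟨k, Nat.lt_of_succ_lt hk⟩ = ⟨k + 1, hk⟩ := by
  rw [sPerm_of_lt hk, Equiv.swap_apply_left]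

lemma sPerm_apply_right (hk : k + 1 < n) :
    sPerm n k ⟨k + 1, hk⟩ = ⟨k, Nat.lt_of_succ_lt hk⟩ := by
  rw [sPerm_of_lt hk, Equiv.swap_apply_right]

lemma sPerm_lt_sPerm (hk : k + 1 < n) {x y : Fin n} (hxy : x < y)
    (hne : (x, y) ≠ (⟨k, Nat.lt_of_succ_lt hk⟩, ⟨k + 1, hk⟩)) :
    sPerm n k x < sPerm n k y := by
  simp only [ne_eq, Prod.mk.injEq, Fin.ext_iff] at hne
  rw [Fin.lt_def] at hxy
  simp only [sPerm_of_lt hk, Equiv.swap_apply_def, Fin.ext_iff]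
  split_ifs <;> simp only [Fin.lt_def] <;> omega

lemma inversions_mul_sPerm_of_lt (hk : k + 1 < n) {σ : Equiv.Perm (Fin n)}
    (h : σ ⟨k, Nat.lt_of_succ_lt hk⟩ < σ ⟨k + 1, hk⟩) :
    inversions (σ * sPerm n k) = inversions σ + 1 := by
  set a : Fin n := ⟨k, Nat.lt_of_succ_lt hk⟩
  set b : Fin n := ⟨k + 1, hk⟩
  set s := sPerm n k
  have hab : a < b := Fin.mk_lt_mk.2 k.lt_succ_self
  have hsa : s a = b := sPerm_apply_left hk
  have hsb : s b = a := sPerm_apply_right hk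
  have hnew : (a, b) ∈ univ.filter fun p : Fin n × Fin n =>
      p.1 < p.2 ∧ (σ * s) p.2 < (σ * s) p.1 := by
    rw [mem_filter]
    simp only [mem_univ, true_and, Equiv.Perm.mul_apply, hsa, hsb]
    exact ⟨hab, h⟩
  unfold inversions
  rw [← card_erase_add_one hnew, Nat.add_right_cancel_iff]
  refine card_nbij' (Prod.map s s) (Prod.map s s) ?_ ?_ ?_ ?_
  · rintro ⟨x, y⟩ hp
    obtain ⟨hne, hinv⟩ := mem_erase.1 hp
    obtain ⟨-, hxy, hσ⟩ := mem_filter.1 hinv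
    exact mem_filter.2 ⟨mem_univ _, sPerm_lt_sPerm hk hxy hne, hσ⟩
  · rintro ⟨x, y⟩ hp
    obtain ⟨-, hxy, hσ⟩ := mem_filter.1 hp
    have hne : (x, y) ≠ (a, b) := by
      rintro ⟨⟩
      exact hσ.not_gt h
    have hne' : (s x, s y) ≠ (a, b) := by
      intro heq
      obtain ⟨hx, hy⟩ := Prod.mk.inj heq
      obtain rfl : x = b := s.injective (hx.trans hsb.symm)
      obtain rfl : y = a := s.injective (hy.trans hsa.symm)
      exact hxy.not_gt hab
    refine mem_erase.2 ⟨hne', mem_filter.2 ⟨mem_univ _, sPerm_lt_sPerm hk hxy hne, ?_⟩⟩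
    simpa [s] using hσ
  · rintro ⟨x, y⟩ -
    simp [s]
  · rintro ⟨x, y⟩ -
    simp [s]

lemma inversions_mul_sPerm_of_gt (hk : k + 1 < n) {σ : Equiv.Perm (Fin n)}
    (h : σ ⟨k + 1, hk⟩ < σ ⟨k, Nat.lt_of_succ_lt hk⟩) :
    inversions (σ * sPerm n k) + 1 = inversions σ := by
  have hup := inversions_mul_sPerm_of_lt hk (σ := σ * sPerm n k)
    (by simpa [sPerm_apply_left hk, sPerm_apply_right hk] using h)
  rw [← hup, mul_sPerm_mul_sPerm]

lemma inversions_mul_sPerm (hk : k + 1 < n) (σ : Equiv.Perm (Fin n)) :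
    inversions (σ * sPerm n k) = inversions σ + 1 ∨
      inversions (σ * sPerm n k) + 1 = inversions σ := by
  have hne : σ ⟨k, Nat.lt_of_succ_lt hk⟩ ≠ σ ⟨k + 1, hk⟩ := by simp
  exact hne.lt_or_gt.imp (inversions_mul_sPerm_of_lt hk) (inversions_mul_sPerm_of_gt hk)

@[simp]
lemma inversions_one (n : ℕ) : inversions (1 : Equiv.Perm (Fin n)) = 0 := by
  rw [inversions, card_eq_zero, filter_eq_empty_iff]
  exact fun _ _ h => lt_asymm h.1 h.2

@[simp]
lemma inversions_inv (σ : Equiv.Perm (Fin n)) : inversions σ⁻¹ = inversions σ := by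
  refine card_nbij' (fun p => (σ⁻¹ p.2, σ⁻¹ p.1)) (fun p => (σ p.2, σ p.1)) ?_ ?_ ?_ ?_ <;>
    intro p hp <;> simp_all

lemma inversions_sPerm_mul (hk : k + 1 < n) (σ : Equiv.Perm (Fin n)) :
    inversions (sPerm n k * σ) = inversions σ + 1 ∨
      inversions (sPerm n k * σ) + 1 = inversions σ := by
  simpa [← inversions_inv (sPerm n k * σ)] using inversions_mul_sPerm hk σ⁻¹

lemma eq_one_of_strictMono {σ : Equiv.Perm (Fin n)} (hσ : StrictMono σ) : σ = 1 := by
  have h : hσ.orderIsoOfSurjective σ σ.surjective = OrderIso.refl _ := Subsingleton.elim _ _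
  exact Equiv.ext fun x => DFunLike.congr_fun h x

lemma exists_descent {σ : Equiv.Perm (Fin n)} (hσ : σ ≠ 1) :
    ∃ k, ∃ hk : k + 1 < n, σ ⟨k + 1, hk⟩ < σ ⟨k, Nat.lt_of_succ_lt hk⟩ := by
  contrapose! hσ
  refine eq_one_of_strictMono ?_
  cases n with
  | zero => exact fun x => x.elim0
  | succ m =>
    refine Fin.strictMono_iff_lt_succ.2 fun i => (hσ i i.succ.isLt).lt_of_ne ?_
    exact σ.injective.ne i.castSucc_lt_succ.ne

@[elab_as_elim]
theorem perm_induction_sPerm {Q : Equiv.Perm (Fin n) → Prop} (one : Q 1)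
    (mul_sPerm : ∀ σ k, k + 1 < n → inversions (σ * sPerm n k) = inversions σ + 1 → Q σ →
      Q (σ * sPerm n k)) (σ : Equiv.Perm (Fin n)) : Q σ := by
  by_cases hσ : σ = 1
  · exact hσ ▸ one
  · obtain ⟨k, hk, hdesc⟩ := exists_descent hσ
    have hlen := inversions_mul_sPerm_of_gt hk hdesc
    rw [← mul_sPerm_mul_sPerm σ k]
    exact mul_sPerm _ k hk (by rw [mul_sPerm_mul_sPerm, hlen])
      (perm_induction_sPerm one mul_sPerm _)
termination_by inversions σ
decreasing_by omega

@[simp]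
lemma revPerm_mul_revPerm (n : ℕ) :
    (Fin.revPerm * Fin.revPerm : Equiv.Perm (Fin n)) = 1 :=
  Equiv.ext Fin.rev_rev

@[simp]
lemma inversions_revPerm_conj (σ : Equiv.Perm (Fin n)) :
    inversions (Fin.revPerm * σ * Fin.revPerm) = inversions σ := by
  refine card_nbij' (fun p => (p.2.rev, p.1.rev)) (fun p => (p.2.rev, p.1.rev)) ?_ ?_ ?_ ?_ <;>
    intro p hp <;> simp_all

lemma inversions_revPerm_mul_add (σ : Equiv.Perm (Fin n)) :
    inversions (Fin.revPerm * σ) + inversions σ = n.choose 2 := by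
  have hpairs : (univ.filter fun p : Fin n × Fin n => p.1 < p.2).card = n.choose 2 := by
    simpa using card_product_filter_lt (s := (univ : Finset (Fin n)))
  unfold inversions
  rw [← hpairs, ← card_filter_add_card_filter_not (s := univ.filter fun p : Fin n × Fin n =>
    p.1 < p.2) fun p => σ p.1 < σ p.2, filter_filter, filter_filter]
  congr 2 <;> refine filter_congr fun p _ => and_congr_right fun h => ?_
  · simp
  · rw [not_lt, (σ.injective.ne h.ne').le_iff_lt]

lemma inversions_revPerm (n : ℕ) :
    inversions (Fin.revPerm : Equiv.Perm (Fin n)) = n.choose 2 := by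
  simpa using inversions_revPerm_mul_add (1 : Equiv.Perm (Fin n))

lemma revPerm_conj_sPerm (hk : k + 1 < n) :
    Fin.revPerm * sPerm n k * Fin.revPerm = sPerm n (n - 2 - k) := by
  have hk' : n - 2 - k + 1 < n := by omega
  rw [sPerm_of_lt hk, sPerm_of_lt hk', Equiv.mul_swap_eq_swap_mul, mul_assoc, revPerm_mul_revPerm,
    mul_one, Equiv.swap_comm]
  congr 1 <;> simp only [Fin.revPerm_apply, Fin.ext_iff, Fin.val_rev] <;> omega

end Permutations

section ReducedProduct

variable {n : ℕ} {M : Type*} [Monoid M]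

/-- `Tw σ` is the product `T i₁ * ⋯ * T iₚ` along any reduced word `s i₁ * ⋯ * s iₚ` of `σ`. This is
`IsTsigma` with an arbitrary monoid in place of the endomorphisms of `P n`; as there, it is
encoded by right multiplication with length-increasing simple transpositions. -/
structure IsReducedProduct (T : ℕ → M) (Tw : Equiv.Perm (Fin n) → M) : Prop where
  one : Tw 1 = 1
  mul_sPerm (σ : Equiv.Perm (Fin n)) (k : ℕ) : k + 1 < n →
    inversions (σ * sPerm n k) = inversions σ + 1 → Tw (σ * sPerm n k) = Tw σ * T k

namespace IsReducedProduct

variable {T : ℕ → M} {Tw : Equiv.Perm (Fin n) → M} (h : IsReducedProduct T Tw)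
include h

lemma isUnit (hT : ∀ k, k + 1 < n → IsUnit (T k)) (σ : Equiv.Perm (Fin n)) : IsUnit (Tw σ) := by
  induction σ using perm_induction_sPerm with
  | one => exact h.one ▸ isUnit_one
  | mul_sPerm σ k hk hlen ih => exact h.mul_sPerm σ k hk hlen ▸ ih.mul (hT k hk)

lemma sPerm_mul {i : ℕ} (hi : i + 1 < n) (σ : Equiv.Perm (Fin n))
    (hlen : inversions (sPerm n i * σ) = inversions σ + 1) : Tw (sPerm n i * σ) = T i * Tw σ := by
  induction σ using perm_induction_sPerm with
  | one => simpa [h.one] using h.mul_sPerm 1 i hi (by simpa using hlen)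
  | mul_sPerm σ k hk hσ ih =>
    rw [← mul_assoc] at hlen ⊢
    have hi_σ : inversions (sPerm n i * σ) = inversions σ + 1 := by
      have := inversions_mul_sPerm hk (sPerm n i * σ)
      have := inversions_sPerm_mul hi σ
      omega
    rw [h.mul_sPerm _ k hk (by omega), h.mul_sPerm σ k hk hσ, ih hi_σ, mul_assoc]

theorem revPerm_mul_map {F : Type*} [FunLike F M M] [MonoidHomClass F M M] (θ : F)
    (hθ : ∀ k, k + 1 < n → T k * θ (T (n - 2 - k)) = 1)
    (σ : Equiv.Perm (Fin n)) :
    Tw Fin.revPerm * θ (Tw (Fin.revPerm * σ * Fin.revPerm)) = Tw (Fin.revPerm * σ) := by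
  induction σ using perm_induction_sPerm with
  | one => simp [h.one]
  | mul_sPerm σ k hk hlen ih =>
    have hconj : Fin.revPerm * (σ * sPerm n k) * Fin.revPerm =
        Fin.revPerm * σ * Fin.revPerm * sPerm n (n - 2 - k) := by
      simp only [← revPerm_conj_sPerm hk, mul_assoc]
      rw [← mul_assoc Fin.revPerm Fin.revPerm, revPerm_mul_revPerm, one_mul]
    have hTw : Tw (Fin.revPerm * σ) = Tw (Fin.revPerm * (σ * sPerm n k)) * T k := by
      have hσ := inversions_revPerm_mul_add σ
      have hσs := inversions_revPerm_mul_add (σ * sPerm n k)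
      have := h.mul_sPerm (Fin.revPerm * (σ * sPerm n k)) k hk
      simp only [← mul_assoc, mul_sPerm_mul_sPerm] at this hσs ⊢
      exact this (by omega)
    rw [hconj, h.mul_sPerm _ _ (by omega) (by rw [← hconj]; simpa using hlen), map_mul,
      ← mul_assoc, ih, hTw, mul_assoc, hθ k hk, mul_one]

end IsReducedProduct

end ReducedProduct

section HeckeSum

variable {n : ℕ} {R A : Type*}

/-- The weighted sum `∑ σ, a ^ l(σ) T_σ`, which is `U⁺` for `a = 1` and `U⁻` for `a = -t⁻¹`. -/
def heckeSum [Semiring R] [AddCommMonoid A] [Module R A] (a : R) (Tw : Equiv.Perm (Fin n) → A) :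
    A :=
  ∑ σ, a ^ inversions σ • Tw σ

/-- The quadratic relations `(T k - t) (T k + 1) = 0` of the Hecke algebra with parameter `t`,
for the indices `k` of the simple transpositions of `Fin n`. -/
def IsHecke [Ring R] [Ring A] [Module R A] (n : ℕ) (t : R) (T : ℕ → A) : Prop :=
  ∀ k, k + 1 < n → T k * T k = (t - 1) • T k + t • 1

variable [CommRing R] [Ring A] [Algebra R A] {t a : R} {T : ℕ → A}
  {Tw : Equiv.Perm (Fin n) → A}

lemma IsHecke.isUnit (hT : IsHecke n t T) (ht : IsUnit t) {k : ℕ} (hk : k + 1 < n) :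
    IsUnit (T k) := by
  obtain ⟨u, hu⟩ := ht.exists_right_inv
  have hcomm : Commute (T k) (u • (T k - (t - 1) • 1)) :=
    ((Commute.refl _).sub_right ((Commute.one_right _).smul_right _)).smul_right _
  have hinv : T k * u • (T k - (t - 1) • 1) = 1 := by
    rw [mul_smul_comm, mul_sub, hT k hk, mul_smul_comm, mul_one, add_sub_cancel_left, smul_smul,
      mul_comm, hu, one_smul]
  exact ⟨⟨_, _, hinv, hcomm.eq ▸ hinv⟩, rfl⟩

namespace IsReducedProduct

variable (h : IsReducedProduct T Tw)
include h

lemma heckeSum_eq_mul {k : ℕ} (hk : k + 1 < n) :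
    heckeSum a Tw = (1 + a • T k) *
      ∑ σ with inversions (sPerm n k * σ) = inversions σ + 1, a ^ inversions σ • Tw σ := by
  let g (σ : Equiv.Perm (Fin n)) : A := a ^ inversions σ • Tw σ
  let ascent (σ : Equiv.Perm (Fin n)) : Prop := inversions (sPerm n k * σ) = inversions σ + 1
  have hdescents : ∑ σ with ¬ascent σ, g σ = ∑ σ with ascent σ, g (sPerm n k * σ) := by
    refine (sum_equiv (Equiv.mulLeft (sPerm n k)) (fun σ => ?_) fun σ _ => rfl).symm
    have := inversions_sPerm_mul hk σ
    simp only [ascent, mem_filter, mem_univ, true_and, Equiv.coe_mulLeft, sPerm_mul_sPerm_mul]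
    omega
  rw [heckeSum, ← sum_filter_add_sum_filter_not univ ascent, hdescents, add_mul, one_mul, mul_sum]
  congr 1
  refine sum_congr rfl fun σ hσ => ?_
  have hlen : ascent σ := (mem_filter.1 hσ).2
  simp only [g]
  rw [hlen, h.sPerm_mul hk σ hlen, smul_mul_assoc, mul_smul_comm, smul_smul, pow_succ']

lemma mul_heckeSum (hT : IsHecke n t T) (ha : (a * t + 1) * (a - 1) = 0) {k : ℕ}
    (hk : k + 1 < n) : T k * heckeSum a Tw = (a * t) • heckeSum a Tw := by
  have heigen : T k * (1 + a • T k) = (a * t) • (1 + a • T k) := by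
    rw [mul_add, mul_one, mul_smul_comm, hT k hk]
    linear_combination (norm := module) -ha • T k
  rw [h.heckeSum_eq_mul hk, ← mul_assoc, heigen, smul_mul_assoc]

lemma apply_mul_heckeSum (hT : IsHecke n t T) (ha : (a * t + 1) * (a - 1) = 0)
    (σ : Equiv.Perm (Fin n)) :
    Tw σ * heckeSum a Tw = (a * t) ^ inversions σ • heckeSum a Tw := by
  induction σ using perm_induction_sPerm with
  | one => simp [h.one]
  | mul_sPerm σ k hk hlen ih =>
    rw [h.mul_sPerm σ k hk hlen, mul_assoc, h.mul_heckeSum hT ha hk, mul_smul_comm, ih, hlen,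
      smul_smul, pow_succ']

variable {φ : R →+* R} {θ : A →+* A}

lemma pow_smul_revPerm_mul_map_heckeSum (hsmul : ∀ (c : R) x, θ (c • x) = φ c • θ x)
    (hθ : ∀ k, k + 1 < n → T k * θ (T (n - 2 - k)) = 1) (ha : a * φ a = 1) :
    a ^ n.choose 2 • (Tw Fin.revPerm * θ (heckeSum a Tw)) = heckeSum a Tw := by
  have hterm (σ : Equiv.Perm (Fin n)) :
      a ^ n.choose 2 • (Tw Fin.revPerm *
        θ (a ^ inversions σ • Tw (Fin.revPerm * σ * Fin.revPerm))) =
      a ^ inversions (Fin.revPerm * σ) • Tw (Fin.revPerm * σ) := by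
    rw [hsmul, mul_smul_comm, map_pow, h.revPerm_mul_map θ hθ, smul_smul,
      ← inversions_revPerm_mul_add σ, pow_add, mul_assoc, ← mul_pow, ha, one_pow, mul_one]
  have hconj : heckeSum a Tw =
      ∑ σ, a ^ inversions σ • Tw (Fin.revPerm * σ * Fin.revPerm) := by
    refine (Fintype.sum_equiv
      ((Equiv.mulLeft Fin.revPerm).trans (Equiv.mulRight Fin.revPerm)) _ _ fun σ => ?_).symm
    simp only [Equiv.trans_apply, Equiv.coe_mulLeft, Equiv.coe_mulRight, inversions_revPerm_conj]
  calc
    _ = ∑ σ, a ^ inversions (Fin.revPerm * σ) • Tw (Fin.revPerm * σ) := by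
      rw [hconj, map_sum, mul_sum, smul_sum]
      exact sum_congr rfl fun σ _ => hterm σ
    _ = heckeSum a Tw := by
      unfold heckeSum
      exact Fintype.sum_equiv (Equiv.mulLeft Fin.revPerm) _ _ fun _ => rfl

theorem pow_smul_map_heckeSum (hT : IsHecke n t T) (ht : IsUnit t)
    (hsmul : ∀ (c : R) x, θ (c • x) = φ c • θ x)
    (hθ : ∀ k, k + 1 < n → T k * θ (T (n - 2 - k)) = 1)
    (ha : (a * t + 1) * (a - 1) = 0) (haφ : a * φ a = 1) :
    (a ^ 2 * t) ^ n.choose 2 • θ (heckeSum a Tw) = heckeSum a Tw := by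
  have hunit : IsUnit (Tw Fin.revPerm) := h.isUnit (fun _ hk => hT.isUnit ht hk) _
  refine hunit.mul_left_cancel ?_
  calc
    Tw Fin.revPerm * (a ^ 2 * t) ^ n.choose 2 • θ (heckeSum a Tw)
      = (a * t) ^ n.choose 2 • a ^ n.choose 2 • (Tw Fin.revPerm * θ (heckeSum a Tw)) := by
        rw [mul_smul_comm, smul_smul, ← mul_pow]
        ring_nf
    _ = (a * t) ^ n.choose 2 • heckeSum a Tw := by
        rw [h.pow_smul_revPerm_mul_map_heckeSum hsmul hθ haφ]
    _ = Tw Fin.revPerm * heckeSum a Tw := by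
        rw [h.apply_mul_heckeSum hT ha, inversions_revPerm]

end IsReducedProduct

end HeckeSum

section ReverseMap

variable {R : Type*} [CommSemiring R] {n : ℕ} {φ : R →+* R}

/-- The involution `ι`: it reverses the order of the variables and applies `φ` to the
coefficients. -/
noncomputable def reverseMap (n : ℕ) (φ : R →+* R) :
    MvPolynomial (Fin n) R →+* MvPolynomial (Fin n) R :=
  (rename Fin.rev : MvPolynomial (Fin n) R →ₐ[R] MvPolynomial (Fin n) R).toRingHom.comp
    (MvPolynomial.map φ)

lemma reverseMap_apply (f : MvPolynomial (Fin n) R) :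
    reverseMap n φ f = rename Fin.rev (MvPolynomial.map φ f) :=
  rfl

@[simp]
lemma reverseMap_X (i : Fin n) : reverseMap n φ (X i) = X i.rev := by
  simp [reverseMap_apply]

@[simp]
lemma reverseMap_C (c : R) : reverseMap n φ (C c) = C (φ c) := by
  simp [reverseMap_apply]

lemma reverseMap_smul (c : R) (f : MvPolynomial (Fin n) R) :
    reverseMap n φ (c • f) = φ c • reverseMap n φ f := by
  simp [smul_eq_C_mul]

lemma reverseMap_rename_sPerm {k : ℕ} (hk : k + 1 < n) (f : MvPolynomial (Fin n) R) :
    reverseMap n φ (rename (sPerm n (n - 2 - k)) f) = rename (sPerm n k) (reverseMap n φ f) := by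
  rw [reverseMap_apply, reverseMap_apply, map_rename, rename_rename, rename_rename,
    ← revPerm_conj_sPerm hk]
  congr 2
  ext x
  simp

lemma reverseMap_involutive [RingHomInvPair φ φ] : Function.Involutive (reverseMap n φ) := by
  refine RingHom.congr_fun (f := (reverseMap n φ).comp (reverseMap n φ)) (g := RingHom.id _) ?_
  refine MvPolynomial.ringHom_ext (fun c => ?_) fun i => ?_ <;> simp

/-- The involution `ι` as a semilinear automorphism, which lets it act on operators by
conjugation. -/
noncomputable def reverseEquiv (n : ℕ) (φ : R →+* R) [RingHomInvPair φ φ] :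
    MvPolynomial (Fin n) R ≃ₛₗ[φ] MvPolynomial (Fin n) R :=
  LinearEquiv.ofInvolutive { reverseMap n φ with map_smul' := reverseMap_smul }
    reverseMap_involutive

lemma conjRingEquiv_reverseEquiv_apply [RingHomInvPair φ φ]
    (F : Module.End R (MvPolynomial (Fin n) R)) (f : MvPolynomial (Fin n) R) :
    (reverseEquiv n φ).conjRingEquiv F f = reverseMap n φ (F (reverseMap n φ f)) :=
  rfl

end ReverseMap

section DemazureLustig

variable {n k : ℕ} {v : K} {T : ℕ → P n →ₗ[K] P n}

lemma sOp_eq_rename (hk : k + 1 < n) (f : P n) : sOp n k f = rename (sPerm n k) f := by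
  simp [sOp, sPerm, hk]

lemma X_sub_X_succ_ne_zero (hk : k + 1 < n) :
    (X ⟨k, Nat.lt_of_succ_lt hk⟩ - X ⟨k + 1, hk⟩ : P n) ≠ 0 :=
  sub_ne_zero.2 (X_injective.ne (by simp))

namespace IsDL

variable (hT : IsDL n v T)
include hT

lemma isHecke : IsHecke (A := Module.End K (P n)) n v T := by
  intro k hk
  refine LinearMap.ext fun f => mul_left_cancel₀ (X_sub_X_succ_ne_zero hk)
    (mul_left_cancel₀ (X_sub_X_succ_ne_zero hk) ?_)
  have hTf := hT k hk f
  have hTTf := hT k hk (T k f)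
  have hsTf := congrArg (rename (sPerm n k)) hTf
  have hss : rename (sPerm n k) (rename (sPerm n k) f) = f := by
    rw [rename_rename, ← Equiv.Perm.coe_mul, sPerm_mul_self, Equiv.Perm.coe_one, rename_id_apply]
  simp only [sOp_eq_rename hk, map_mul, map_sub, map_add, rename_X, rename_C,
    sPerm_apply_left hk, sPerm_apply_right hk, hss] at hTf hTTf hsTf
  simp only [Module.End.mul_apply, LinearMap.add_apply, LinearMap.smul_apply, Module.End.one_apply,
    smul_eq_C_mul, C_sub, C_1]
  set x : P n := X ⟨k, Nat.lt_of_succ_lt hk⟩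
  set y : P n := X ⟨k + 1, hk⟩
  linear_combination (x - y) * hTTf - (C v * x - y) * hsTf + (x - y - (C v * x - y)) * hTf

lemma mul_Tinv (hv : v ≠ 0) (hk : k + 1 < n) :
    (T k * Tinv n v T k : Module.End K (P n)) = 1 := by
  refine LinearMap.ext fun f => ?_
  have hTTf : T k (T k f) = (v - 1) • T k f + v • f := LinearMap.congr_fun (hT.isHecke k hk) f
  simp only [Module.End.mul_apply, Module.End.one_apply, Tinv, LinearMap.add_apply,
    LinearMap.sub_apply, LinearMap.smul_apply, LinearMap.id_apply, map_add, map_sub, map_smul, hTTf]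
  rw [smul_add, smul_smul, smul_smul, mul_sub, inv_mul_cancel₀ hv, mul_one, sub_smul, one_smul,
    one_smul]
  abel

variable {φ : K →+* K} [RingHomInvPair φ φ]

lemma conj_reverseEquiv_eq_Tinv (hv : v ≠ 0) (hφ : φ v = v⁻¹) (hk : k + 1 < n) :
    (reverseEquiv n φ).conjRingEquiv (T (n - 2 - k)) = Tinv n v T k := by
  have hk' : n - 2 - k + 1 < n := by omega
  refine LinearMap.ext fun f => mul_left_cancel₀ (X_sub_X_succ_ne_zero hk) ?_
  have hrev := congrArg (reverseMap n φ) (hT (n - 2 - k) hk' (reverseMap n φ f))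
  have hTf := hT k hk f
  have hleft : Fin.rev (⟨n - 2 - k, Nat.lt_of_succ_lt hk'⟩ : Fin n) = ⟨k + 1, hk⟩ := by
    simp only [Fin.ext_iff, Fin.val_rev]
    omega
  have hright : Fin.rev (⟨n - 2 - k + 1, hk'⟩ : Fin n) = ⟨k, Nat.lt_of_succ_lt hk⟩ := by
    simp only [Fin.ext_iff, Fin.val_rev]
    omega
  have hC : (C v⁻¹ : P n) * C v = 1 := by rw [← C_mul, inv_mul_cancel₀ hv, C_1]
  simp only [sOp_eq_rename hk, sOp_eq_rename hk', map_mul, map_sub, map_add, reverseMap_X,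
    reverseMap_C, reverseMap_rename_sPerm hk, reverseMap_involutive f, hφ, hleft, hright]
    at hrev hTf
  simp only [conjRingEquiv_reverseEquiv_apply, Tinv, LinearMap.add_apply, LinearMap.sub_apply,
    LinearMap.smul_apply, LinearMap.id_apply, smul_eq_C_mul]
  set x : P n := X ⟨k, Nat.lt_of_succ_lt hk⟩
  set y : P n := X ⟨k + 1, hk⟩
  set s := rename (sPerm n k) f
  linear_combination -hrev - C v⁻¹ * hTf - ((x - y) * f + x * (s - f)) * hC

lemma pow_smul_reverseMap_heckeSum (hv : v ≠ 0) (hφ : φ v = v⁻¹)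
    {Tw : Equiv.Perm (Fin n) → P n →ₗ[K] P n} (hTw : IsTsigma n T Tw) {a : K}
    (ha : (a * v + 1) * (a - 1) = 0) (haφ : a * φ a = 1) (f : P n) :
    (a ^ 2 * v) ^ n.choose 2 • reverseMap n φ (heckeSum a Tw (reverseMap n φ f)) =
      heckeSum a Tw f := by
  have hprod : IsReducedProduct (M := Module.End K (P n)) T Tw := ⟨hTw.1, hTw.2⟩
  let θ : Module.End K (P n) →+* Module.End K (P n) := (reverseEquiv n φ).conjRingEquiv
  have hsmul (c : K) (F : Module.End K (P n)) : θ (c • F) = φ c • θ F :=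
    LinearMap.ext fun g => reverseMap_smul c (F (reverseMap n φ g))
  have hθ (k : ℕ) (hk : k + 1 < n) : T k * θ (T (n - 2 - k)) = 1 :=
    (congrArg (T k * ·) (hT.conj_reverseEquiv_eq_Tinv hv hφ hk)).trans (hT.mul_Tinv hv hk)
  exact LinearMap.congr_fun (hprod.pow_smul_map_heckeSum hT.isHecke hv.isUnit hsmul hθ ha haφ) f

end IsDL

end DemazureLustig

lemma t_ne_zero : t ≠ 0 :=
  (map_ne_zero_iff _ (IsFractionRing.injective (MvPolynomial (Fin 2) ℚ) K)).2 (X_ne_zero 1)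

lemma ringHomInvPair_of_q_t {φ : K →+* K} (hq : φ q = q⁻¹) (ht : φ t = t⁻¹) :
    RingHomInvPair φ φ := by
  suffices hφ : φ.comp φ = RingHom.id K from ⟨hφ, hφ⟩
  refine IsLocalization.ringHom_ext (nonZeroDivisors (MvPolynomial (Fin 2) ℚ))
    (MvPolynomial.ringHom_ext' (Subsingleton.elim _ _) ?_)
  rw [Fin.forall_fin_two]
  constructor
  · change φ (φ q) = q
    rw [hq, map_inv₀, hq, inv_inv]
  · change φ (φ t) = t
    rw [ht, map_inv₀, ht, inv_inv]

lemma Uplus_eq_heckeSum {n : ℕ} (Tw : Equiv.Perm (Fin n) → P n →ₗ[K] P n) :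
    Uplus n Tw = heckeSum (1 : K) Tw := by
  simp [Uplus, heckeSum]

lemma Uminus_eq_heckeSum {n : ℕ} (v : K) (Tw : Equiv.Perm (Fin n) → P n →ₗ[K] P n) :
    Uminus n v Tw = heckeSum (-v)⁻¹ Tw := by
  simp only [Uminus, heckeSum, inv_pow]

end Stmt6

theorem stmt_6_general (n : ℕ) {v : K} (hv : v ≠ 0)
    (T : ℕ → P n →ₗ[K] P n) (hT : IsDL n v T)
    (Tw : Equiv.Perm (Fin n) → P n →ₗ[K] P n) (hTw : IsTsigma n T Tw)
    (φ : K →+* K) [RingHomInvPair φ φ] (hφ : φ v = v⁻¹) (f : P n) :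
    rename Fin.rev (MvPolynomial.map φ
        (Uplus n Tw (rename Fin.rev (MvPolynomial.map φ f)))) =
      C ((v ^ (n * (n - 1) / 2))⁻¹) * Uplus n Tw f ∧
    rename Fin.rev (MvPolynomial.map φ
        (Uminus n v Tw (rename Fin.rev (MvPolynomial.map φ f)))) =
      C (v ^ (n * (n - 1) / 2)) * Uminus n v Tw f := by
  have hpow : v ^ n.choose 2 ≠ 0 := pow_ne_zero _ hv
  have hplus := hT.pow_smul_reverseMap_heckeSum hv hφ hTw (a := 1) (by ring) (by simp) f
  have hminus := hT.pow_smul_reverseMap_heckeSum hv hφ hTw (a := (-v)⁻¹)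
    (by field_simp; ring) (by rw [map_inv₀, map_neg, hφ]; field_simp) f
  have hscalar : (-v)⁻¹ ^ 2 * v = v⁻¹ := by field_simp
  rw [one_pow, one_mul] at hplus
  rw [hscalar, inv_pow] at hminus
  simp only [← reverseMap_apply, ← smul_eq_C_mul, ← Nat.choose_two_right, Uplus_eq_heckeSum,
    Uminus_eq_heckeSum]
  exact ⟨(eq_inv_smul_iff₀ hpow).2 hplus, (inv_smul_eq_iff₀ hpow).1 hminus⟩

theorem stmt_6 (n : ℕ)
    (T : ℕ → P n →ₗ[K] P n) (hT : IsDL n t T)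
    (Tw : Equiv.Perm (Fin n) → P n →ₗ[K] P n) (hTw : IsTsigma n T Tw)
    -- the field automorphism of K = ℚ(q,t) with q ↦ q⁻¹ and t ↦ t⁻¹
    (autK : K →+* K) (haq : autK q = q⁻¹) (hat : autK t = t⁻¹)
    (f : P n) :
    rename Fin.rev (MvPolynomial.map autK
        (Uplus n Tw (rename Fin.rev (MvPolynomial.map autK f)))) =
      C ((t ^ (n * (n - 1) / 2))⁻¹) * Uplus n Tw f ∧
    rename Fin.rev (MvPolynomial.map autK
        (Uminus n t Tw (rename Fin.rev (MvPolynomial.map autK f)))) =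
      C (t ^ (n * (n - 1) / 2)) * Uminus n t Tw f := by
  have := ringHomInvPair_of_q_t haq hat
  exact stmt_6_general n t_ne_zero T hT Tw hTw autK hat f
end
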